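/- arXiv:1709.09869 — 2 statements merged into one kernel-verified Lean document; each statement's English description precedes it below -/
import Mathlib

section
/- Every quadratic polynomial z ↦ z² + c with an irrationally indifferent non-linearizable (Cremer) periodic point has a non-locally-connected Julia set. -/
noncomputable def quadMap (c z : ℂ) : ℂ := z ^ 2 + c

def filledJuliaQuad (c : ℂ) : Set ℂ :=
  {z : ℂ | ∃ B : ℝ, ∀ n : ℕ, ‖(quadMap c)^[n] z‖ ≤ B}

/-- The Julia set of `z ↦ z² + c`, as the boundary of the filled Julia set. -/
def juliaQuad (c : ℂ) : Set ℂ := frontier (filledJuliaQuad c)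

/-!
Let `K` be the filled Julia set, `J` its boundary, `F` the iterate fixing the periodic point `p`
and `l` its multiplier. A fixed point of multiplier of modulus one in the interior of `K` is
linearized by a limit of the means of `l⁻ᵏ (Fᵏ - p)`, so `p` lies on `J`. If the critical value `c`
escapes, then `J` falls into two clopen halves, each mapped bijectively onto `J`; a locally
connected compact set has finitely many components, which rules this out.

If `c ∈ K`, the Böttcher function extends to the complement of `K`, and composing its inverse with
`exp` gives a map `ψ` of the right half-plane with `ψ (2 * s) = ψ s ^ 2 + c`. When `J` is locally
connected, `ψ` is uniformly continuous up to the imaginary axis (Carathéodory): the length-area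
method surrounds each boundary point by a rectangle whose outer edges have a short image, a small
connected piece of `J` joins the ends of that image, and by Janiszewski's theorem this closed
barrier separates the image of the rectangle from infinity. Hence a ray lands at `p`. As `F` is
injective near `p`, multiplication by a power of two is expanding on the set of arguments of such
rays, so this set is finite and some iterate `F^q` fixes a ray. Along the fixed ray `ψ - p`
semiconjugates a dilation to a map with multiplier `l ^ q`, and the snail lemma gives `l ^ q = 1`.
-/

open Set Filter Topology Metric MeasureTheory
open Complex (exp I)
open scoped Real ENNReal

/-! ### Logarithms and Bloch's theorem -/

theorem isSimplyConnected_of_convex {E : Type*} [AddCommGroup E] [Module ℝ E]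
    [TopologicalSpace E] [ContinuousAdd E] [ContinuousSMul ℝ E] {U : Set E} (hU : Convex ℝ U)
    (hne : U.Nonempty) : IsSimplyConnected U := by
  have : ContractibleSpace U := hU.contractibleSpace hne
  unfold IsSimplyConnected
  infer_instance

theorem exists_eqOn_add_of_exp_eqOn {X : Type*} [TopologicalSpace X] {C : Set X}
    (hC : IsPreconnected C) {u v : X → ℂ} (hu : ContinuousOn u C) (hv : ContinuousOn v C)
    (h : ∀ z ∈ C, exp (u z) = exp (v z)) :
    ∃ k : ℂ, exp k = 1 ∧ ∀ z ∈ C, u z = v z + k := by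
  rcases C.eq_empty_or_nonempty with rfl | ⟨a, ha⟩
  · exact ⟨0, by simp, by simp⟩
  have hk : exp (u a - v a) = 1 := by
    rw [Complex.exp_sub, h a ha, div_self (Complex.exp_ne_zero _)]
  refine ⟨u a - v a, hk, Complex.isCoveringMap_exp.eqOn_of_comp_eqOn hC hu
    (hv.add continuousOn_const) (fun z hz => Subtype.ext ?_) ha (by ring)⟩
  simp [Complex.exp_add, hk, h z hz]

theorem exists_differentiableOn_exp_eq {U : Set ℂ} (hU : IsSimplyConnected U) (hUo : IsOpen U)
    {g : ℂ → ℂ} (hg : DifferentiableOn ℂ g U) (hg0 : ∀ z ∈ U, g z ≠ 0) :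
    ∃ u : ℂ → ℂ, DifferentiableOn ℂ u U ∧ ∀ z ∈ U, exp (u z) = g z := by
  obtain ⟨u, hu, hug⟩ := Complex.exists_continuousOn_eqOn_exp_comp hU hUo hg.continuousOn
    (by rintro ⟨z, hz, hz0⟩; exact hg0 z hz hz0)
  refine ⟨u, fun z hz => DifferentiableAt.differentiableWithinAt ?_, fun z hz => hug hz⟩
  have hnear : ∀ᶠ w in 𝓝 z, dist (u w) (u z) < 1 :=
    hu.continuousAt (hUo.mem_nhds hz) (ball_mem_nhds _ one_pos)
  have hloc : u =ᶠ[𝓝 z] fun w => u z + Complex.log (g w / g z) := by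
    filter_upwards [hnear, hUo.mem_nhds hz] with w hw hwU
    have him : |(u w - u z).im| < 1 := (Complex.abs_im_le_norm _).trans_lt (by rwa [← dist_eq_norm])
    rw [abs_lt] at him
    rw [← hug hwU, ← hug hz, Function.comp_apply, Function.comp_apply, ← Complex.exp_sub,
      Complex.log_exp (by linarith [Real.pi_gt_three]) (by linarith [Real.pi_gt_three])]
    ring
  refine DifferentiableAt.congr_of_eventuallyEq ?_ hloc
  refine (((hg.differentiableAt (hUo.mem_nhds hz)).div_const _).clog ?_).const_add _
  rw [div_self (hg0 z hz)]
  exact Complex.one_mem_slitPlane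

theorem exists_continuousOn_exp_mul_sub_eq {S : Set ℂ} {z₁ z₂ : ℂ} (h : JoinedIn Sᶜ z₂ z₁) :
    ∃ u : ℂ → ℂ, ContinuousOn u S ∧ ∀ z ∈ S, exp (u z) * (z - z₂) = z - z₁ := by
  classical
  set γ := h.somePath
  have hγ : ∀ (t : unitInterval) (a : S), (a : ℂ) - γ t ≠ 0 := fun t a h0 =>
    h.somePath_mem t (by rw [← sub_eq_zero.1 h0]; exact a.2)
  have hz₂ : ∀ a : S, (a : ℂ) - z₂ ≠ 0 := fun a => by simpa using hγ 0 a
  let H : C(unitInterval × S, {z : ℂ // z ≠ 0}) :=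
    ⟨fun x => ⟨(x.2 - γ x.1) / (x.2 - z₂), div_ne_zero (hγ _ _) (hz₂ _)⟩,
      Continuous.subtype_mk (Continuous.div (by fun_prop) (by fun_prop) fun x => hz₂ _) _⟩
  let u₀ : C(S, ℂ) := ContinuousMap.const _ 0
  have hu₀ : ∀ a, H (0, a) = ⟨exp (u₀ a), Complex.exp_ne_zero _⟩ := fun a =>
    Subtype.ext (by simp [H, u₀, hz₂ a])
  let G := Complex.isCoveringMap_exp.liftHomotopy H u₀ hu₀
  refine ⟨fun z => if hz : z ∈ S then G (1, ⟨z, hz⟩) else 0, ?_, fun z hz => ?_⟩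
  · rw [continuousOn_iff_continuous_domRestrict]
    have hG : Continuous fun a : S => G (1, a) := by fun_prop
    exact hG.congr fun a => by simp
  · have hlift := congrArg Subtype.val
      (congrFun (Complex.isCoveringMap_exp.liftHomotopy_lifts H u₀ hu₀) (1, ⟨z, hz⟩))
    simp only [Function.comp, H, ContinuousMap.coe_mk, Path.target] at hlift
    simp only [hz, dif_pos]
    rw [hlift, div_mul_cancel₀ _ (hz₂ ⟨z, hz⟩)]

/- A continuous logarithm of `g` would increase by `2πi` along a large circle around `z₁`. -/
theorem exists_eq_zero_of_continuous_of_eq_sub {g : ℂ → ℂ} {z₁ : ℂ} {R : ℝ} (hg : Continuous g)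
    (hgR : ∀ z, R ≤ ‖z‖ → g z = z - z₁) : ∃ z, g z = 0 := by
  by_contra! hg0
  obtain ⟨u, hu, hug⟩ := Complex.exists_continuousOn_eqOn_exp_comp
    (isSimplyConnected_of_convex convex_univ univ_nonempty) isOpen_univ hg.continuousOn
    (by rintro ⟨z, -, hz⟩; exact hg0 z hz)
  replace hu : Continuous u := continuousOn_univ.1 hu
  set r : ℝ := |R| + ‖z₁‖ + 1
  have hr : 0 < r := by positivity
  let v : ℂ → ℂ := fun t => u (z₁ + exp (Real.log r + t))
  have hv : ∀ t : ℝ, exp (v (t * I)) = exp (Real.log r + t * I) := fun t => by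
    have hnorm : ‖exp (Real.log r + t * I)‖ = r := by simp [Complex.norm_exp, Real.exp_log hr]
    have hfar : R ≤ ‖z₁ + exp (Real.log r + t * I)‖ := by
      have := norm_sub_le_norm_add (exp (Real.log r + t * I)) z₁
      rw [hnorm, add_comm (exp _)] at this
      linarith [le_abs_self R]
    calc exp (v (t * I)) = g (z₁ + exp (Real.log r + t * I)) := hug (mem_univ _)
      _ = _ := by rw [hgR _ hfar, add_sub_cancel_left]
  obtain ⟨k, -, hk⟩ := exists_eqOn_add_of_exp_eqOn (C := range fun t : ℝ => (t : ℂ) * I)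
    (isPreconnected_range (by fun_prop)) (u := v) (v := fun t => Real.log r + t)
    (by fun_prop) (by fun_prop) (by rintro _ ⟨t, rfl⟩; exact hv t)
  have hperiod : v (((0 : ℝ) : ℂ) * I) = v (((2 * π : ℝ) : ℂ) * I) := by
    simp [v, Complex.exp_add, Complex.exp_two_pi_mul_I]
  rw [hk _ ⟨0, rfl⟩, hk _ ⟨2 * π, rfl⟩] at hperiod
  simp [Real.pi_ne_zero] at hperiod

theorem ball_subset_image_ball_of_norm_deriv_le {g : ℂ → ℂ} {z : ℂ} {R : ℝ} (hR : 0 < R)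
    (hg : DifferentiableOn ℂ g (ball z R)) (hz : deriv g z ≠ 0)
    (hle : ∀ w ∈ ball z R, ‖deriv g w‖ ≤ 2 * ‖deriv g z‖) :
    ball (g z) (R * ‖deriv g z‖ / 32) ⊆ g '' ball z R := by
  set a := deriv g z
  have ha : 0 < ‖a‖ := norm_pos_iff.2 hz
  have hsub : closedBall z (R / 8) ⊆ ball z R := closedBall_subset_ball (by linarith)
  have hderiv : ∀ w ∈ closedBall z (R / 8), ‖deriv g w - a‖ ≤ ‖a‖ / 2 := fun w hw => by
    have hlip := Complex.dist_le_div_mul_dist_of_mapsTo_ball (hg.deriv isOpen_ball)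
      (R₂ := 3 * ‖a‖) (fun v hv => by
        rw [mem_closedBall, dist_eq_norm]
        linarith [norm_sub_le (deriv g v) a, hle v hv]) (hsub hw)
    calc ‖deriv g w - a‖ ≤ 3 * ‖a‖ / R * dist w z := by rwa [← dist_eq_norm]
      _ ≤ 3 * ‖a‖ / R * (R / 8) := by gcongr; exact hw
      _ ≤ ‖a‖ / 2 := by field_simp; norm_num
  have hexpand : ∀ w ∈ closedBall z (R / 8), ‖a‖ / 2 * ‖w - z‖ ≤ ‖g w - g z‖ := fun w hw => by
    have hrem : ‖(g w - a * w) - (g z - a * z)‖ ≤ ‖a‖ / 2 * ‖w - z‖ := by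
      refine (convex_closedBall z (R / 8)).norm_image_sub_le_of_norm_hasDerivWithin_le
        (f := fun w => g w - a * w) (f' := fun w => deriv g w - a) (fun v hv => ?_) hderiv
        (mem_closedBall_self (by positivity)) hw
      simpa using ((hg.differentiableAt (isOpen_ball.mem_nhds (hsub hv))).hasDerivAt.fun_sub
        ((hasDerivAt_id v).const_mul a)).hasDerivWithinAt
    have hsplit := norm_sub_le_norm_add (a * (w - z)) ((g w - a * w) - (g z - a * z))
    rw [show a * (w - z) + ((g w - a * w) - (g z - a * z)) = g w - g z by ring,
      norm_mul] at hsplit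
    linarith
  have hne : ∀ᶠ w in 𝓝[≠] z, g w ≠ g z := by
    rw [eventually_nhdsWithin_iff]
    filter_upwards [closedBall_mem_nhds z (by positivity : 0 < R / 8)] with w hw hwz heq
    have := hexpand w hw
    rw [heq, sub_self, norm_zero] at this
    linarith [mul_pos (half_pos ha) (norm_pos_iff.2 (sub_ne_zero.2 hwz))]
  have himage := ((hg.mono hsub).diffContOnCl_ball le_rfl).ball_subset_image_closedBall
    (ε := ‖a‖ / 2 * (R / 8)) (by positivity)
    (fun w hw => by
      simpa [← dist_eq_norm, mem_sphere.1 hw] using hexpand w (sphere_subset_closedBall hw))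
    (hne.frequently.filter_mono nhdsWithin_le_nhds)
  rw [show ‖a‖ / 2 * (R / 8) / 2 = R * ‖a‖ / 32 by ring] at himage
  exact himage.trans (image_mono hsub)

/-- **Bloch's theorem** -/
theorem exists_ball_subset_image_ball {g : ℂ → ℂ} {z₀ : ℂ} {r : ℝ} (hr : 0 < r)
    (hg : DifferentiableOn ℂ g (ball z₀ r)) :
    ∃ z ∈ ball z₀ r, ball (g z) (r * ‖deriv g z₀‖ / 128) ⊆ g '' ball z₀ r := by
  by_cases hd0 : deriv g z₀ = 0
  · exact ⟨z₀, mem_ball_self hr, by simp [hd0]⟩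
  set X : Set ℂ := closedBall z₀ (3 / 4 * r)
  have hX : X ⊆ ball z₀ r := closedBall_subset_ball (by linarith)
  have hcont : Continuous fun z : X => ‖deriv g z‖ :=
    ((hg.deriv isOpen_ball).continuousOn.mono hX).domRestrict.norm
  obtain ⟨R, hR, ⟨z, hzX⟩, hRr, hz, hge, hle⟩ :=
    hofer (⟨z₀, mem_closedBall_self (by positivity)⟩ : X) (r / 4) (by positivity) hcont
      fun _ => norm_nonneg _
  have hz : dist z z₀ ≤ 2 * (r / 4) := hz
  have hge : r / 4 * ‖deriv g z₀‖ ≤ R * ‖deriv g z‖ := hge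
  have hball : ball z R ⊆ X := fun w hw => by
    rw [mem_closedBall]
    linarith [dist_triangle w z z₀, mem_ball.1 hw]
  have hdz : deriv g z ≠ 0 := fun h0 => by
    rw [h0, norm_zero, mul_zero] at hge
    exact hge.not_gt (mul_pos (by positivity) (norm_pos_iff.2 hd0))
  refine ⟨z, hX hzX, (ball_subset_ball (by linarith)).trans
    ((ball_subset_image_ball_of_norm_deriv_le hR (hg.mono (hball.trans hX)) hdz
      fun w hw => ?_).trans (image_mono (hball.trans hX)))⟩
  exact hle ⟨w, hball hw⟩ (by rw [dist_comm]; exact (mem_ball.1 hw).le)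

/-! ### Linearization in an invariant bounded domain -/

theorem norm_dslope_le_of_norm_le {g : ℂ → ℂ} {z w : ℂ} {ρ B : ℝ}
    (hg : DifferentiableOn ℂ g (ball z ρ)) (hB : ∀ w ∈ ball z ρ, ‖g w‖ ≤ B) (hw : w ∈ ball z ρ) :
    ‖dslope g z w‖ ≤ 2 * B / ρ := by
  have hz : z ∈ ball z ρ := mem_ball_self (pos_of_mem_ball hw)
  refine Complex.norm_dslope_le_div_of_mapsTo_ball hg (fun v hv => ?_) hw
  rw [mem_closedBall, dist_eq_norm]
  linarith [norm_sub_le (g v) (g z), hB v hv, hB z hz]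

theorem norm_deriv_le_of_norm_le {g : ℂ → ℂ} {z : ℂ} {ρ B : ℝ} (hρ : 0 < ρ)
    (hg : DifferentiableOn ℂ g (ball z ρ)) (hB : ∀ w ∈ ball z ρ, ‖g w‖ ≤ B) :
    ‖deriv g z‖ ≤ 2 * B / ρ := by
  simpa using norm_dslope_le_of_norm_le hg hB (mem_ball_self hρ)

theorem norm_sub_sub_deriv_mul_le {g : ℂ → ℂ} {z w : ℂ} {ρ B : ℝ}
    (hg : DifferentiableOn ℂ g (ball z ρ)) (hB : ∀ w ∈ ball z ρ, ‖g w‖ ≤ B) (hw : w ∈ ball z ρ) :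
    ‖g w - g z - deriv g z * (w - z)‖ ≤ 4 * B / ρ ^ 2 * ‖w - z‖ ^ 2 := by
  have hz : z ∈ ball z ρ := mem_ball_self (pos_of_mem_ball hw)
  have hslope := norm_dslope_le_of_norm_le
    ((Complex.differentiableOn_dslope (isOpen_ball.mem_nhds hz)).2 hg)
    (fun v hv => norm_dslope_le_of_norm_le hg hB hv) hw
  have hfactor : g w - g z - deriv g z * (w - z) =
      (w - z) ^ 2 * dslope (dslope g z) z w := by
    have h₁ := sub_smul_dslope g z w
    have h₂ := sub_smul_dslope (dslope g z) z w
    rw [smul_eq_mul] at h₁ h₂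
    rw [dslope_same] at h₂
    linear_combination -h₁ - (w - z) * h₂
  calc ‖g w - g z - deriv g z * (w - z)‖ = ‖dslope (dslope g z) z w‖ * ‖w - z‖ ^ 2 := by
        rw [hfactor, norm_mul, norm_pow, mul_comm]
    _ ≤ 2 * (2 * B / ρ) / ρ * ‖w - z‖ ^ 2 := by gcongr
    _ = _ := by ring

theorem exists_tendsto_of_norm_le {ι : Type*} (W : Ultrafilter ι) {E : Type*}
    [NormedAddCommGroup E] [ProperSpace E] {a : ι → E} {B : ℝ} (h : ∀ i, ‖a i‖ ≤ B) :
    ∃ l, Tendsto a W (𝓝 l) := by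
  obtain ⟨l, -, hl⟩ := (isCompact_closedBall (0 : E) B).ultrafilter_le_nhds (W.map a)
    (le_principal_iff.2 (mem_map.2 (Eventually.of_forall fun i => by simpa using h i)))
  exact ⟨l, hl⟩

/-- **Montel's theorem** along an ultrafilter -/
theorem exists_differentiableOn_tendsto_of_norm_le {ι : Type*} (W : Ultrafilter ι) {f : ι → ℂ → ℂ}
    {U : Set ℂ} {B : ℝ} (hU : IsOpen U) (hf : ∀ i, DifferentiableOn ℂ (f i) U)
    (hB : ∀ i, ∀ z ∈ U, ‖f i z‖ ≤ B) :
    ∃ φ : ℂ → ℂ, DifferentiableOn ℂ φ U ∧ ∀ z ∈ U, Tendsto (fun i => f i z) W (𝓝 (φ z)) ∧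
      Tendsto (fun i => deriv (f i) z) W (𝓝 (deriv φ z)) := by
  have hlim : ∀ z, ∃ a, z ∈ U → Tendsto (fun i => f i z) W (𝓝 a) := fun z => by
    by_cases hz : z ∈ U
    · obtain ⟨a, ha⟩ := exists_tendsto_of_norm_le W fun i => hB i z hz
      exact ⟨a, fun _ => ha⟩
    · exact ⟨0, fun h => absurd h hz⟩
  choose φ hφ using hlim
  have hderiv : ∀ z ∈ U, ∃ d, HasDerivAt φ d z ∧ Tendsto (fun i => deriv (f i) z) W (𝓝 d) := by
    intro z hz
    obtain ⟨ρ, hρ, hball⟩ := Metric.isOpen_iff.1 hU z hz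
    obtain ⟨d, hd⟩ := exists_tendsto_of_norm_le W fun i =>
      norm_deriv_le_of_norm_le hρ ((hf i).mono hball) fun w hw => hB i w (hball hw)
    refine ⟨d, ?_, hd⟩
    have htaylor : ∀ w ∈ ball z ρ,
        ‖φ w - φ z - d * (w - z)‖ ≤ 4 * B / ρ ^ 2 * ‖w - z‖ ^ 2 := fun w hw =>
      le_of_tendsto (((hφ w (hball hw)).sub (hφ z hz)).sub (hd.mul_const (w - z))).norm
        (Eventually.of_forall fun i => norm_sub_sub_deriv_mul_le ((hf i).mono hball)
          (fun v hv => hB i v (hball hv)) hw)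
    rw [hasDerivAt_iff_isLittleO]
    refine Asymptotics.IsBigO.trans_isLittleO (g := fun w => ‖w - z‖ ^ 2) ?_ ?_
    · refine Asymptotics.IsBigO.of_bound (4 * B / ρ ^ 2) ?_
      filter_upwards [ball_mem_nhds z hρ] with w hw
      simpa [mul_comm d] using htaylor w hw
    · exact Asymptotics.isLittleO_pow_sub_sub z one_lt_two
  refine ⟨φ, fun z hz => ?_, fun z hz => ⟨hφ z hz, ?_⟩⟩ <;> obtain ⟨d, hd, hlim⟩ := hderiv z hz
  · exact hd.differentiableAt.differentiableWithinAt
  · rwa [hd.deriv]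

/-- The Cesàro mean of `l⁻ᵏ (Fᵏ z - p)` over `k ≤ M`. For a map `F` with fixed point `p` of
multiplier `l`, these means approximately conjugate `F` to the rotation by `l`. -/
noncomputable def twistedAverage (F : ℂ → ℂ) (l p : ℂ) (M : ℕ) (z : ℂ) : ℂ :=
  (M + 1 : ℂ)⁻¹ * ∑ k ∈ Finset.range (M + 1), l⁻¹ ^ k * (F^[k] z - p)

theorem differentiableOn_iterate_of_mapsTo {F : ℂ → ℂ} {U : Set ℂ}
    (hF : DifferentiableOn ℂ F U) (hm : MapsTo F U U) (k : ℕ) : DifferentiableOn ℂ F^[k] U := by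
  induction k with
  | zero => exact differentiableOn_id
  | succ k ih => exact ih.comp hF hm

theorem twistedAverage_self {F : ℂ → ℂ} {p : ℂ} (hp : F p = p) (l : ℂ) (M : ℕ) :
    twistedAverage F l p M p = 0 := by
  simp [twistedAverage, Function.iterate_fixed hp]

theorem differentiableOn_twistedAverage {F : ℂ → ℂ} {U : Set ℂ} (hF : DifferentiableOn ℂ F U)
    (hm : MapsTo F U U) (l p : ℂ) (M : ℕ) : DifferentiableOn ℂ (twistedAverage F l p M) U :=
  DifferentiableOn.const_mul (DifferentiableOn.fun_sum fun k _ =>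
    ((differentiableOn_iterate_of_mapsTo hF hm k).sub_const p).const_mul _) _

theorem hasDerivAt_twistedAverage {F : ℂ → ℂ} {l p : ℂ} (hF : HasDerivAt F l p) (hp : F p = p)
    (hl : l ≠ 0) (M : ℕ) : HasDerivAt (twistedAverage F l p M) 1 p := by
  have hsum : HasDerivAt (twistedAverage F l p M)
      ((M + 1 : ℂ)⁻¹ * ∑ k ∈ Finset.range (M + 1), l⁻¹ ^ k * l ^ k) p :=
    HasDerivAt.const_mul _ (HasDerivAt.fun_sum fun k _ =>
      ((HasDerivAt.iterate p hF hp k).sub_const p).const_mul _)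
  have hM : (M + 1 : ℂ) ≠ 0 := Nat.cast_add_one_ne_zero M
  simpa [← mul_pow, hl, hM] using hsum

theorem norm_twistedAverage_le {F : ℂ → ℂ} {l p z : ℂ} {U : Set ℂ} {R : ℝ} (hl : ‖l‖ = 1)
    (hm : MapsTo F U U) (hR : ∀ z ∈ U, ‖z - p‖ ≤ R) (hz : z ∈ U) (M : ℕ) :
    ‖twistedAverage F l p M z‖ ≤ R := by
  have hterm : ∀ k ∈ Finset.range (M + 1), ‖l⁻¹ ^ k * (F^[k] z - p)‖ ≤ R := fun k _ => by
    simpa [hl] using hR _ (hm.iterate k hz)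
  have hM : ‖(M + 1 : ℂ)‖ = M + 1 := by norm_cast
  rw [twistedAverage, norm_mul, norm_inv, hM, inv_mul_le_iff₀ (by positivity)]
  simpa using norm_sum_le_of_le _ hterm

theorem twistedAverage_apply_sub (F : ℂ → ℂ) {l : ℂ} (hl : l ≠ 0) (p z : ℂ) (M : ℕ) :
    twistedAverage F l p M (F z) - l * twistedAverage F l p M z =
      (M + 1 : ℂ)⁻¹ * (l * (l⁻¹ ^ (M + 1) * (F^[M + 1] z - p) - (z - p))) := by
  have hshift : ∑ k ∈ Finset.range (M + 1), l⁻¹ ^ k * (F^[k] (F z) - p) =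
      l * ∑ k ∈ Finset.range (M + 1), l⁻¹ ^ (k + 1) * (F^[k + 1] z - p) := by
    rw [Finset.mul_sum]
    refine Finset.sum_congr rfl fun k _ => ?_
    rw [Function.iterate_succ_apply, pow_succ]
    field_simp
  rw [twistedAverage, twistedAverage, mul_left_comm, ← mul_sub, hshift, ← mul_sub,
    ← Finset.sum_sub_distrib, Finset.sum_range_sub (fun k => l⁻¹ ^ k * (F^[k] z - p))]
  simp

theorem tendsto_twistedAverage_apply_sub {F : ℂ → ℂ} {l p z : ℂ} {U : Set ℂ} {R : ℝ}
    (hl : ‖l‖ = 1) (hm : MapsTo F U U) (hR : ∀ z ∈ U, ‖z - p‖ ≤ R) (hz : z ∈ U) :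
    Tendsto (fun M => twistedAverage F l p M (F z) - l * twistedAverage F l p M z)
      atTop (𝓝 0) := by
  have hl0 : l ≠ 0 := by rintro rfl; simp at hl
  have hbound : ∀ M : ℕ, ‖twistedAverage F l p M (F z) - l * twistedAverage F l p M z‖ ≤
      1 / ((M : ℝ) + 1) * (2 * R) := fun M => by
    have hM : ‖(M + 1 : ℂ)‖ = M + 1 := by norm_cast
    have htri := norm_sub_le (l⁻¹ ^ (M + 1) * (F^[M + 1] z - p)) (z - p)
    rw [norm_mul, norm_pow, norm_inv, hl, inv_one, one_pow, one_mul] at htri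
    rw [twistedAverage_apply_sub F hl0, norm_mul, norm_mul, hl, one_mul, norm_inv, hM, one_div]
    gcongr
    linarith [hR _ (hm.iterate (M + 1) hz), hR z hz]
  refine squeeze_zero_norm hbound ?_
  simpa using tendsto_one_div_add_atTop_nhds_zero_nat.mul_const (2 * R)

/-- `F` is conjugate near `p` to its linear part by a univalent map `h` of a disc. -/
def IsLinearizableAt (F : ℂ → ℂ) (p : ℂ) : Prop :=
  ∃ (r : ℝ) (h : ℂ → ℂ), 0 < r ∧ h 0 = p ∧ DifferentiableOn ℂ h (ball (0 : ℂ) r) ∧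
    InjOn h (ball (0 : ℂ) r) ∧
    ∀ w ∈ ball (0 : ℂ) r, ‖deriv F p * w‖ < r → F (h w) = h (deriv F p * w)

theorem isLinearizableAt_of_semiconj {F φ : ℂ → ℂ} {p : ℂ} (hF : ContinuousAt F p)
    (hp : F p = p) (hφ : AnalyticAt ℂ φ p) (hφp : φ p = 0) (hφ' : deriv φ p ≠ 0)
    (hconj : ∀ᶠ z in 𝓝 p, φ (F z) = deriv F p * φ z) : IsLinearizableAt F p := by
  have hs : HasStrictDerivAt φ (deriv φ p) p := hφ.hasStrictDerivAt
  set h : ℂ → ℂ := hs.localInverse φ (deriv φ p) p hφ'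
  have hh0 : h 0 = p := hφp ▸ HasStrictFDerivAt.localInverse_apply_image _
  have hhd : AnalyticAt ℂ h 0 := hφp ▸ hφ.analyticAt_localInverse hφ'
  have hh : Tendsto h (𝓝 0) (𝓝 p) := by simpa only [hh0] using hhd.continuousAt.tendsto
  have hright : ∀ᶠ w in 𝓝 (0 : ℂ), φ (h w) = w := hφp ▸ hs.eventually_right_inverse hφ'
  have hleft : ∀ᶠ w in 𝓝 (0 : ℂ), h (φ (F (h w))) = F (h w) := by
    refine (Tendsto.comp ?_ hh).eventually (hs.eventually_left_inverse hφ')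
    simpa only [hp] using hF.tendsto
  obtain ⟨r, hr, hball⟩ := Metric.eventually_nhds_iff_ball.1
    (hhd.eventually_analyticAt.and (hright.and (hleft.and (hh.eventually hconj))))
  refine ⟨r, h, hr, hh0, fun w hw => (hball w hw).1.differentiableAt.differentiableWithinAt,
    fun w hw v hv hwv => ?_, fun w hw _ => ?_⟩
  · rw [← (hball w hw).2.1, ← (hball v hv).2.1, hwv]
  · obtain ⟨-, hw, hFw, hconj⟩ := hball w hw
    rw [← hFw, hconj, hw]

theorem isLinearizableAt_of_mapsTo_isBounded {F : ℂ → ℂ} {p : ℂ} {U : Set ℂ} (hU : IsOpen U)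
    (hpU : p ∈ U) (hF : DifferentiableOn ℂ F U) (hp : F p = p) (hl : ‖deriv F p‖ = 1)
    (hm : MapsTo F U U) (hb : Bornology.IsBounded U) : IsLinearizableAt F p := by
  obtain ⟨R, hR⟩ := hb.subset_closedBall p
  replace hR : ∀ z ∈ U, ‖z - p‖ ≤ R := fun z hz => by simpa [dist_eq_norm] using hR hz
  set l := deriv F p
  have hl0 : l ≠ 0 := by rw [← norm_pos_iff, hl]; exact one_pos
  have hFp : DifferentiableAt ℂ F p := hF.differentiableAt (hU.mem_nhds hpU)
  obtain ⟨φ, hφ, hlim⟩ := exists_differentiableOn_tendsto_of_norm_le (hyperfilter ℕ) hU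
    (differentiableOn_twistedAverage hF hm l p) fun M z hz => norm_twistedAverage_le hl hm hR hz M
  have hφp : φ p = 0 := tendsto_nhds_unique (hlim p hpU).1
    ((tendsto_congr (twistedAverage_self hp l)).2 tendsto_const_nhds)
  have hφ' : deriv φ p = 1 := tendsto_nhds_unique (hlim p hpU).2 <|
    (tendsto_congr fun M => (hasDerivAt_twistedAverage hFp.hasDerivAt hp hl0 M).deriv).2
      tendsto_const_nhds
  have hconj : ∀ z ∈ U, φ (F z) = l * φ z := fun z hz =>
    sub_eq_zero.1 <| tendsto_nhds_unique
      ((hlim (F z) (hm hz)).1.sub ((hlim z hz).1.const_mul l))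
      ((tendsto_twistedAverage_apply_sub hl hm hR hz).mono_left Nat.hyperfilter_le_atTop)
  refine isLinearizableAt_of_semiconj hFp.continuousAt hp (hφ.analyticAt (hU.mem_nhds hpU)) hφp
    (by simp [hφ']) ?_
  filter_upwards [hU.mem_nhds hpU] with z hz using hconj z hz

/-! ### The filled Julia set -/

theorem iterate_mem_iff {α : Type*} {f : α → α} {s : Set α} (hf : ∀ z, f z ∈ s ↔ z ∈ s) (k : ℕ)
    (z : α) : f^[k] z ∈ s ↔ z ∈ s := by
  induction k generalizing z with
  | zero => rfl
  | succ k ih => rw [Function.iterate_succ_apply, ih, hf]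

theorem differentiable_quadMap (c : ℂ) : Differentiable ℂ (quadMap c) := by
  unfold quadMap; fun_prop

theorem continuous_quadMap (c : ℂ) : Continuous (quadMap c) := (differentiable_quadMap c).continuous

theorem isOpenMap_quadMap (c : ℂ) : IsOpenMap (quadMap c) := by
  rcases ((differentiable_quadMap c).differentiableOn.analyticOnNhd
    isOpen_univ).is_constant_or_isOpen isPreconnected_univ with ⟨w, hw⟩ | hopen
  · have h₀ := hw 0 (mem_univ _)
    have h₁ := hw 1 (mem_univ _)
    rw [← h₀] at h₁
    simp [quadMap] at h₁
  · exact fun s hs => hopen s (subset_univ _) hs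

theorem isOpenMap_iterate_quadMap (c : ℂ) (n : ℕ) : IsOpenMap (quadMap c)^[n] := by
  induction n with
  | zero => exact IsOpenMap.id
  | succ n ih => rw [Function.iterate_succ]; exact ih.comp (isOpenMap_quadMap c)

theorem two_mul_norm_le_norm_quadMap {c z : ℂ} (h : ‖c‖ + 3 ≤ ‖z‖) :
    2 * ‖z‖ ≤ ‖quadMap c z‖ := by
  have htri : ‖z ^ 2‖ - ‖c‖ ≤ ‖quadMap c z‖ := norm_sub_le_norm_add _ _
  rw [norm_pow] at htri
  nlinarith [norm_nonneg c, norm_nonneg z]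

theorem two_pow_mul_norm_le_norm_iterate_quadMap {c z : ℂ} (h : ‖c‖ + 3 ≤ ‖z‖) (k : ℕ) :
    2 ^ k * ‖z‖ ≤ ‖(quadMap c)^[k] z‖ := by
  induction k with
  | zero => simp
  | succ k ih =>
    rw [Function.iterate_succ_apply', pow_succ]
    have hfar : ‖z‖ ≤ 2 ^ k * ‖z‖ :=
      le_mul_of_one_le_left (norm_nonneg _) (one_le_pow₀ one_le_two)
    linarith [two_mul_norm_le_norm_quadMap (h.trans (hfar.trans ih))]

theorem norm_lt_of_mem_filledJuliaQuad {c z : ℂ} (h : z ∈ filledJuliaQuad c) :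
    ‖z‖ < ‖c‖ + 3 := by
  by_contra! hz
  obtain ⟨B, hB⟩ := h
  obtain ⟨k, hk⟩ := pow_unbounded_of_one_lt B (one_lt_two (α := ℝ))
  have hpow : 2 ^ k ≤ 2 ^ k * ‖z‖ :=
    le_mul_of_one_le_right (by positivity) (by linarith [norm_nonneg c])
  linarith [two_pow_mul_norm_le_norm_iterate_quadMap hz k, hB k]

theorem quadMap_mem_filledJuliaQuad_iff {c : ℂ} (z : ℂ) :
    quadMap c z ∈ filledJuliaQuad c ↔ z ∈ filledJuliaQuad c := by
  constructor
  · rintro ⟨B, hB⟩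
    refine ⟨max B ‖z‖, fun n => ?_⟩
    cases n with
    | zero => simp
    | succ n => exact (hB n).trans (le_max_left _ _)
  · rintro ⟨B, hB⟩
    exact ⟨B, fun n => hB (n + 1)⟩

theorem mem_filledJuliaQuad_iff {c z : ℂ} :
    z ∈ filledJuliaQuad c ↔ ∀ n, ‖(quadMap c)^[n] z‖ ≤ ‖c‖ + 3 :=
  ⟨fun h n => (norm_lt_of_mem_filledJuliaQuad
    ((iterate_mem_iff quadMap_mem_filledJuliaQuad_iff n z).2 h)).le, fun h => ⟨_, h⟩⟩

theorem isClosed_filledJuliaQuad (c : ℂ) : IsClosed (filledJuliaQuad c) := by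
  have hinter : filledJuliaQuad c = ⋂ n, {z | ‖(quadMap c)^[n] z‖ ≤ ‖c‖ + 3} := by
    ext z
    simp [mem_filledJuliaQuad_iff]
  rw [hinter]
  exact isClosed_iInter fun n =>
    isClosed_le ((continuous_quadMap c).iterate n).norm continuous_const

theorem isBounded_filledJuliaQuad (c : ℂ) : Bornology.IsBounded (filledJuliaQuad c) :=
  isBounded_iff_forall_norm_le.2 ⟨_, fun _ hz => (norm_lt_of_mem_filledJuliaQuad hz).le⟩

theorem isCompact_filledJuliaQuad (c : ℂ) : IsCompact (filledJuliaQuad c) :=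
  isCompact_of_isClosed_isBounded (isClosed_filledJuliaQuad c) (isBounded_filledJuliaQuad c)

theorem juliaQuad_subset_filledJuliaQuad (c : ℂ) : juliaQuad c ⊆ filledJuliaQuad c :=
  (isClosed_filledJuliaQuad c).frontier_subset

theorem isCompact_juliaQuad (c : ℂ) : IsCompact (juliaQuad c) :=
  (isCompact_filledJuliaQuad c).of_isClosed_subset isClosed_frontier
    (juliaQuad_subset_filledJuliaQuad c)

theorem quadMap_mem_juliaQuad_iff {c : ℂ} (z : ℂ) :
    quadMap c z ∈ juliaQuad c ↔ z ∈ juliaQuad c := by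
  have hfrontier := (isOpenMap_quadMap c).preimage_frontier_eq_frontier_preimage
    (continuous_quadMap c) (filledJuliaQuad c)
  rw [show quadMap c ⁻¹' filledJuliaQuad c = filledJuliaQuad c from
    Set.ext quadMap_mem_filledJuliaQuad_iff] at hfrontier
  exact Set.ext_iff.1 hfrontier z

theorem mem_filledJuliaQuad_of_isPeriodicPt {c p : ℂ} {n : ℕ} (hn : 0 < n)
    (hper : Function.IsPeriodicPt (quadMap c) n p) : p ∈ filledJuliaQuad c := by
  obtain ⟨B, hB⟩ := (finite_range fun k : Fin n => ‖(quadMap c)^[k] p‖).bddAbove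
  refine ⟨B, fun k => ?_⟩
  rw [← hper.iterate_mod_apply k]
  exact hB ⟨⟨k % n, Nat.mod_lt _ hn⟩, rfl⟩

theorem mapsTo_iterate_quadMap_interior_filledJuliaQuad (c : ℂ) (n : ℕ) :
    MapsTo (quadMap c)^[n] (interior (filledJuliaQuad c)) (interior (filledJuliaQuad c)) :=
  (isOpenMap_iterate_quadMap c n).mapsTo_interior fun z hz =>
    (iterate_mem_iff quadMap_mem_filledJuliaQuad_iff n z).2 hz

theorem mem_juliaQuad_of_not_isLinearizableAt {c p : ℂ} {n : ℕ} (hn : 0 < n)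
    (hper : Function.IsPeriodicPt (quadMap c) n p) (hind : ‖deriv (quadMap c)^[n] p‖ = 1)
    (hnonlin : ¬ IsLinearizableAt (quadMap c)^[n] p) : p ∈ juliaQuad c := by
  refine ⟨subset_closure (mem_filledJuliaQuad_of_isPeriodicPt hn hper), fun hpint => hnonlin ?_⟩
  exact isLinearizableAt_of_mapsTo_isBounded isOpen_interior hpint
    ((differentiable_quadMap c).iterate n).differentiableOn hper hind
    (mapsTo_iterate_quadMap_interior_filledJuliaQuad c n)
    ((isBounded_filledJuliaQuad c).subset interior_subset)

/-! ### Escaping critical value -/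

theorem connectedComponent_eq_of_map_eq {X : Type*} [TopologicalSpace X]
    [Finite (ConnectedComponents X)] {f : X → X} (hf : Continuous f)
    (hsurj : Function.Surjective f) {x y : X} (hxy : f x = f y) :
    connectedComponent x = connectedComponent y := by
  have hinj : Function.Injective hf.connectedComponentsMap := by
    refine Finite.injective_iff_surjective.2 <|
      ConnectedComponents.surjective_coe.forall.2 fun x => ?_
    obtain ⟨y, rfl⟩ := hsurj x
    exact ⟨y, rfl⟩
  exact ConnectedComponents.coe_eq_coe.1 (hinj (congrArg ConnectedComponents.mk hxy))

theorem frontier_connectedComponentIn_subset_compl {X : Type*} [TopologicalSpace X]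
    [LocallyConnectedSpace X] {O : Set X} (hO : IsOpen O) (x : X) :
    frontier (connectedComponentIn O x) ⊆ Oᶜ := by
  intro w hw hwO
  obtain ⟨v, hvw, hvx⟩ := mem_closure_iff.1 hw.1 _ hO.connectedComponentIn
    (mem_connectedComponentIn hwO)
  rw [hO.connectedComponentIn.frontier_eq, connectedComponentIn_eq hvx,
    ← connectedComponentIn_eq hvw] at hw
  exact hw.2 (mem_connectedComponentIn hwO)

theorem exists_joinedIn_compl_filledJuliaQuad {c z : ℂ} (hz : z ∉ filledJuliaQuad c) (R : ℝ) :
    ∃ w, R < ‖w‖ ∧ JoinedIn (filledJuliaQuad c)ᶜ z w := by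
  have hO : IsOpen (filledJuliaQuad c)ᶜ := (isClosed_filledJuliaQuad c).isOpen_compl
  set C := connectedComponentIn (filledJuliaQuad c)ᶜ z
  have hzC : z ∈ C := mem_connectedComponentIn hz
  have hpath : IsPathConnected C :=
    hO.connectedComponentIn.isConnected_iff_isPathConnected.1
      (isConnected_connectedComponentIn_iff.2 hz)
  by_contra! hno
  have hbounded : Bornology.IsBounded C := by
    refine (isBounded_closedBall (x := (0 : ℂ)) (r := R)).subset fun w hw => ?_
    by_contra hwR
    exact hno w (by simpa using hwR)
      ((hpath.joinedIn z hzC w hw).mono (connectedComponentIn_subset _ _))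
  refine hz (mem_filledJuliaQuad_iff.2 fun k => ?_)
  refine Complex.norm_le_of_forall_mem_frontier_norm_le hbounded
    ((differentiable_quadMap c).iterate k).diffContOnCl (fun w hw => ?_) (subset_closure hzC)
  have hwK := frontier_connectedComponentIn_subset_compl hO z hw
  rw [compl_compl] at hwK
  exact mem_filledJuliaQuad_iff.1 hwK k

theorem exists_continuousOn_exp_eq_sub {S : Set ℂ} {z₁ z₂ : ℂ} (h : JoinedIn Sᶜ z₂ z₁)
    (hS : ∀ z ∈ S, ‖z‖ < ‖z₂‖) :
    ∃ u : ℂ → ℂ, ContinuousOn u S ∧ ∀ z ∈ S, exp (u z) = z - z₁ := by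
  obtain ⟨u, hu, hexp⟩ := exists_continuousOn_exp_mul_sub_eq h
  have hslit : ∀ z ∈ S, 1 - z / z₂ ∈ Complex.slitPlane := fun z hz => by
    refine Or.inl ?_
    have hlt : ‖z / z₂‖ < 1 := by
      rw [norm_div, div_lt_one ((norm_nonneg z).trans_lt (hS z hz))]
      exact hS z hz
    rw [Complex.sub_re, Complex.one_re]
    linarith [Complex.re_le_norm (z / z₂)]
  refine ⟨fun z => u z + Complex.log (1 - z / z₂) + Complex.log (-z₂),
    (hu.add (ContinuousOn.clog (by fun_prop) hslit)).add continuousOn_const, fun z hz => ?_⟩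
  have hz₂ : z₂ ≠ 0 := norm_pos_iff.1 ((norm_nonneg z).trans_lt (hS z hz))
  rw [Complex.exp_add, Complex.exp_add, Complex.exp_log (Complex.slitPlane_ne_zero (hslit z hz)),
    Complex.exp_log (neg_ne_zero.2 hz₂), ← hexp z hz]
  field_simp
  ring

theorem exists_continuousOn_sq_eq_sub {c : ℂ} (hc : c ∉ filledJuliaQuad c) :
    ∃ s : ℂ → ℂ, ContinuousOn s (juliaQuad c) ∧
      ∀ z ∈ juliaQuad c, s z ≠ 0 ∧ quadMap c (s z) = z ∧ quadMap c (-s z) = z := by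
  obtain ⟨z₂, hz₂, hjoin⟩ := exists_joinedIn_compl_filledJuliaQuad hc (‖c‖ + 3)
  have hJK := juliaQuad_subset_filledJuliaQuad c
  obtain ⟨u, hu, hexp⟩ := exists_continuousOn_exp_eq_sub
    (hjoin.mono (compl_subset_compl.2 hJK)).symm
    fun z hz => (norm_lt_of_mem_filledJuliaQuad (hJK hz)).trans hz₂
  refine ⟨fun z => exp (u z / 2), by fun_prop, fun z hz => ⟨Complex.exp_ne_zero _, ?_⟩⟩
  have hsq : exp (u z / 2) ^ 2 = z - c := by
    rw [← hexp z hz, ← Complex.exp_nat_mul]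
    congr 1
    push_cast
    ring
  simp [quadMap, hsq]

/- The two branches of the inverse of `quadMap c` split the Julia set into two clopen pieces, so
`quadMap c` cannot be injective on its finitely many components, although it is surjective. -/
theorem not_locallyConnectedSpace_of_notMem_filledJuliaQuad {c : ℂ} (hc : c ∉ filledJuliaQuad c)
    (hne : (juliaQuad c).Nonempty) : ¬ LocallyConnectedSpace (juliaQuad c) := by
  intro hlc
  have : CompactSpace (juliaQuad c) := isCompact_iff_compactSpace.1 (isCompact_juliaQuad c)
  obtain ⟨s, hs, hsJ⟩ := exists_continuousOn_sq_eq_sub hc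
  have hmem : ∀ {w}, quadMap c w ∈ juliaQuad c → w ∈ juliaQuad c :=
    fun {w} => (quadMap_mem_juliaQuad_iff w).1
  let T : juliaQuad c → juliaQuad c := fun w => ⟨quadMap c w, (quadMap_mem_juliaQuad_iff _).2 w.2⟩
  have hT : Continuous T := ((continuous_quadMap c).comp continuous_subtype_val).subtype_mk _
  obtain ⟨z, hz⟩ := hne
  obtain ⟨hs0, hpos, hneg⟩ := hsJ z hz
  obtain ⟨x, hx⟩ : ∃ x : juliaQuad c, (x : ℂ) = s z := ⟨⟨s z, hmem (by rwa [hpos])⟩, rfl⟩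
  obtain ⟨y, hy⟩ : ∃ y : juliaQuad c, (y : ℂ) = -s z := ⟨⟨-s z, hmem (by rwa [hneg])⟩, rfl⟩
  have hTx : quadMap c x = z := by rw [hx, hpos]
  have hTy : quadMap c y = z := by rw [hy, hneg]
  have hsurj : Function.Surjective T := fun w =>
    ⟨⟨s w, hmem (by rw [(hsJ w w.2).2.1]; exact w.2)⟩, Subtype.ext (hsJ w w.2).2.1⟩
  have hcomp : connectedComponent x = connectedComponent y :=
    connectedComponent_eq_of_map_eq hT hsurj (Subtype.ext (hTx.trans hTy.symm))
  have hbranch : EqOn (fun w : juliaQuad c => (w : ℂ)) (fun w => s (quadMap c w))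
      (connectedComponent x) := by
    refine isPreconnected_connectedComponent.eq_of_sq_eq continuous_subtype_val.continuousOn
      (hs.comp_continuous (continuous_subtype_val.comp hT) fun w => (T w).2).continuousOn
      (fun w _ => ?_) (fun {w} _ => (hsJ _ (T w).2).1) mem_connectedComponent ?_
    · have hsq : s (quadMap c w) ^ 2 + c = (w : ℂ) ^ 2 + c := (hsJ _ (T w).2).2.1
      exact (add_right_cancel hsq).symm
    · rw [hTx, hx]
  have hy_mem : y ∈ connectedComponent x := hcomp.symm ▸ mem_connectedComponent
  have hbranch_y : (y : ℂ) = s (quadMap c y) := hbranch hy_mem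
  rw [hTy, hy] at hbranch_y
  exact hs0 (self_eq_neg.1 hbranch_y.symm)

/-! ### Half-planes -/

/-- The open right half-plane `{s | a < Re s}`. The exponential maps `halfPlane 0` onto the exterior
of the unit disc, so that `s ↦ 2 * s` on `halfPlane 0` is a lift of squaring. -/
def halfPlane (a : ℝ) : Set ℂ := {s | a < s.re}

@[simp] theorem mem_halfPlane {a : ℝ} {s : ℂ} : s ∈ halfPlane a ↔ a < s.re := Iff.rfl

theorem isOpen_halfPlane (a : ℝ) : IsOpen (halfPlane a) :=
  isOpen_lt continuous_const Complex.continuous_re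

theorem convex_halfPlane (a : ℝ) : Convex ℝ (halfPlane a) := convex_halfSpace_re_gt a

theorem halfPlane_nonempty (a : ℝ) : (halfPlane a).Nonempty := ⟨((a + 1 : ℝ) : ℂ), by simp⟩

theorem halfPlane_mono {a b : ℝ} (h : a ≤ b) : halfPlane b ⊆ halfPlane a :=
  fun _ hs => h.trans_lt hs

theorem ball_subset_halfPlane (s : ℂ) (r : ℝ) : ball s r ⊆ halfPlane (s.re - r) := by
  intro w hw
  have h := (abs_lt.1 ((Complex.abs_re_le_norm _).trans_lt (mem_ball_iff_norm.1 hw))).1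
  rw [Complex.sub_re] at h
  rw [mem_halfPlane]
  linarith

theorem sub_lt_re_add_of_norm_le {a B : ℝ} {s w : ℂ} (hs : a < s.re) (hw : ‖w‖ ≤ B) :
    a - B < (s + w).re := by
  have h := (abs_le.1 ((Complex.abs_re_le_norm w).trans hw)).1
  rw [Complex.add_re]
  linarith

theorem lt_re_two_mul {a : ℝ} (ha : 0 ≤ a) {s : ℂ} (hs : a < s.re) : a < (2 * s).re := by
  rw [show (2 * s).re = 2 * s.re by simp]
  linarith

theorem two_pow_mul_re (k : ℕ) (s : ℂ) : ((2 : ℂ) ^ k * s).re = 2 ^ k * s.re := by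
  rw [show (2 : ℂ) ^ k = ((2 ^ k : ℝ) : ℂ) by push_cast; rfl, Complex.re_ofReal_mul]

theorem exists_lt_two_pow_mul {x : ℝ} (hx : 0 < x) (M : ℝ) : ∃ k : ℕ, M < 2 ^ k * x := by
  obtain ⟨k, hk⟩ := pow_unbounded_of_one_lt (M / x) (one_lt_two (α := ℝ))
  exact ⟨k, (div_lt_iff₀ hx).1 hk⟩

theorem halfPlane_induction {p : ℂ → Prop} {a A : ℝ} (ha : 0 ≤ a) (far : ∀ s : ℂ, A < s.re → p s)
    (half : ∀ s : ℂ, a < s.re → p (2 * s) → p s) (s : ℂ) (hs : a < s.re) : p s := by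
  obtain ⟨k, hk⟩ := exists_lt_two_pow_mul (ha.trans_lt hs) A
  induction k generalizing s with
  | zero => exact far s (by simpa using hk)
  | succ k ih =>
    refine half s hs (ih (2 * s) (lt_re_two_mul ha hs) ?_)
    rwa [show (2 * s).re = 2 * s.re by simp, ← mul_assoc, ← pow_succ]

theorem eqOn_halfPlane_of_eqOn {a A : ℝ} {f g : ℂ → ℂ} (hf : DifferentiableOn ℂ f (halfPlane a))
    (hg : DifferentiableOn ℂ g (halfPlane a)) (h : EqOn f g (halfPlane A)) :
    EqOn f g (halfPlane a) := by
  obtain ⟨s, hs⟩ := halfPlane_nonempty (max a A)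
  have hsa : s ∈ halfPlane a := halfPlane_mono (le_max_left a A) hs
  have hsA : s ∈ halfPlane A := halfPlane_mono (le_max_right a A) hs
  exact (hf.analyticOnNhd (isOpen_halfPlane a)).eqOn_of_preconnected_of_eventuallyEq
    (hg.analyticOnNhd (isOpen_halfPlane a)) (convex_halfPlane a).isPreconnected hsa
    (h.eventuallyEq_of_mem ((isOpen_halfPlane A).mem_nhds hsA))

theorem differentiableOn_comp_two_mul {a : ℝ} {g : ℂ → ℂ}
    (hg : DifferentiableOn ℂ g (halfPlane a)) :
    DifferentiableOn ℂ (fun s => g (2 * s)) (halfPlane (a / 2)) := by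
  refine hg.comp (by fun_prop) fun s hs => ?_
  rw [mem_halfPlane] at hs ⊢
  rw [show (2 * s).re = 2 * s.re by simp]
  linarith

theorem exists_differentiableOn_halfPlane {a A : ℝ} {f : ℂ → ℂ}
    (h : ∀ b > a, ∃ g : ℂ → ℂ, DifferentiableOn ℂ g (halfPlane b) ∧ EqOn g f (halfPlane A)) :
    ∃ g : ℂ → ℂ, DifferentiableOn ℂ g (halfPlane a) ∧ EqOn g f (halfPlane A) := by
  choose! g hg hgf using h
  have hglue : ∀ b > a, ∀ b' > a, ∀ s : ℂ, b < s.re → b' < s.re → g b s = g b' s := by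
    intro b hb b' hb' s hs hs'
    refine eqOn_halfPlane_of_eqOn ((hg b hb).mono (halfPlane_mono (le_max_left b b')))
      ((hg b' hb').mono (halfPlane_mono (le_max_right b b')))
      ((hgf b hb).trans (hgf b' hb').symm) (max_lt hs hs')
  let G : ℂ → ℂ := fun s => if a < s.re then g ((a + s.re) / 2) s else f s
  have hG : ∀ b > a, EqOn G (g b) (halfPlane b) := by
    intro b hb s hs
    have has : a < s.re := hb.trans hs
    simp only [G, if_pos has]
    exact hglue _ (by linarith) b hb s (by linarith) hs
  refine ⟨G, fun s hs => ?_, fun s hs => ?_⟩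
  · have has : a < (a + s.re) / 2 := by linarith [mem_halfPlane.1 hs]
    have hmem : halfPlane ((a + s.re) / 2) ∈ 𝓝 s :=
      (isOpen_halfPlane _).mem_nhds (by rw [mem_halfPlane] at hs ⊢; linarith)
    exact (((hg _ has).differentiableAt hmem).congr_of_eventuallyEq
      ((hG _ has).eventuallyEq_of_mem hmem)).differentiableWithinAt
  · by_cases has : a < s.re
    · simp only [G, if_pos has]
      exact hgf _ (by linarith) hs
    · simp only [G, if_neg has]

theorem norm_sub_le_of_norm_le_halfPlane {g : ℂ → ℂ} {a ρ B : ℝ} (hρ : 0 < ρ)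
    (hg : DifferentiableOn ℂ g (halfPlane a)) (hB : ∀ s : ℂ, a < s.re → ‖g s‖ ≤ B) {s s' : ℂ}
    (hs : a + ρ < s.re) (hs' : a + ρ < s'.re) : ‖g s - g s'‖ ≤ 2 * B / ρ * ‖s - s'‖ := by
  have hsub : ∀ w ∈ halfPlane (a + ρ), ball w ρ ⊆ halfPlane a := fun w hw =>
    (ball_subset_halfPlane w ρ).trans (halfPlane_mono (by rw [mem_halfPlane] at hw; linarith))
  refine (convex_halfPlane (a + ρ)).norm_image_sub_le_of_norm_deriv_le (fun w hw => ?_)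
    (fun w hw => ?_) hs' hs
  · exact hg.differentiableAt (mem_of_superset (ball_mem_nhds w hρ) (hsub w hw))
  · exact norm_deriv_le_of_norm_le hρ (hg.mono (hsub w hw)) fun v hv => hB v (hsub w hw hv)

/-! ### The Böttcher function near infinity -/

/-- One step of the Picard iteration for the functional equation
`2 * e s = e (2 * s) + q (2 * s + e (2 * s))`. -/
noncomputable def doublingStep (q g : ℂ → ℂ) : ℂ → ℂ :=
  fun s => 1 / 2 * (g (2 * s) + q (2 * s + g (2 * s)))

section doublingStep

variable {q g g' : ℂ → ℂ} {A : ℝ}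

theorem norm_doublingStep_le (hA : 0 ≤ A) (hq : ∀ s : ℂ, A - 1 / 2 < s.re → ‖q s‖ ≤ 1 / 4)
    (hg : ∀ s : ℂ, A < s.re → ‖g s‖ ≤ 1 / 2) {s : ℂ} (hs : A < s.re) :
    ‖doublingStep q g s‖ ≤ 1 / 2 := by
  have hg2 := hg (2 * s) (lt_re_two_mul hA hs)
  have hq2 := hq _ (sub_lt_re_add_of_norm_le (lt_re_two_mul hA hs) hg2)
  have hadd := norm_add_le (g (2 * s)) (q (2 * s + g (2 * s)))
  rw [doublingStep, norm_mul, show ‖(1 / 2 : ℂ)‖ = 1 / 2 by norm_num]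
  linarith

theorem differentiableOn_doublingStep (hA : 0 ≤ A)
    (hqd : DifferentiableOn ℂ q (halfPlane (A - 1 / 2)))
    (hg : ∀ s : ℂ, A < s.re → ‖g s‖ ≤ 1 / 2) (hgd : DifferentiableOn ℂ g (halfPlane A)) :
    DifferentiableOn ℂ (doublingStep q g) (halfPlane A) := by
  have hg2 : DifferentiableOn ℂ (fun s => g (2 * s)) (halfPlane A) :=
    (differentiableOn_comp_two_mul hgd).mono (halfPlane_mono (by linarith))
  refine (hg2.add (hqd.comp ((by fun_prop : DifferentiableOn ℂ (fun s : ℂ => 2 * s) _).add hg2)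
    fun s hs => ?_)).const_mul _
  exact sub_lt_re_add_of_norm_le (lt_re_two_mul hA hs) (hg _ (lt_re_two_mul hA hs))

theorem periodic_doublingStep (hq : Function.Periodic q (2 * π * I))
    (hg : Function.Periodic g (π * I)) : Function.Periodic (doublingStep q g) (π * I) := by
  intro s
  have hg2 : g (2 * (s + π * I)) = g (2 * s) := by
    rw [show 2 * (s + π * I) = 2 * s + π * I + π * I by ring, hg, hg]
  rw [doublingStep, doublingStep, hg2,
    show 2 * (s + π * I) + g (2 * s) = 2 * s + g (2 * s) + 2 * π * I by ring, hq]

theorem norm_doublingStep_sub_le {δ : ℝ} (hA : 0 ≤ A)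
    (hq : ∀ s s' : ℂ, A - 1 / 2 < s.re → A - 1 / 2 < s'.re → ‖q s - q s'‖ ≤ 1 / 2 * ‖s - s'‖)
    (hg : ∀ s : ℂ, A < s.re → ‖g s‖ ≤ 1 / 2) (hg' : ∀ s : ℂ, A < s.re → ‖g' s‖ ≤ 1 / 2)
    (hδ : ∀ s : ℂ, A < s.re → ‖g s - g' s‖ ≤ δ) {s : ℂ} (hs : A < s.re) :
    ‖doublingStep q g s - doublingStep q g' s‖ ≤ 3 / 4 * δ := by
  have hs2 := lt_re_two_mul hA hs
  have hq2 := hq _ _ (sub_lt_re_add_of_norm_le hs2 (hg _ hs2))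
    (sub_lt_re_add_of_norm_le hs2 (hg' _ hs2))
  rw [add_sub_add_left_eq_sub] at hq2
  have hadd := norm_add_le (g (2 * s) - g' (2 * s))
    (q (2 * s + g (2 * s)) - q (2 * s + g' (2 * s)))
  have hδ2 := hδ _ hs2
  rw [doublingStep, doublingStep, ← mul_sub, add_sub_add_comm, norm_mul,
    show ‖(1 / 2 : ℂ)‖ = 1 / 2 by norm_num]
  linarith

theorem norm_iterate_doublingStep_le (hA : 0 ≤ A)
    (hq : ∀ s : ℂ, A - 1 / 2 < s.re → ‖q s‖ ≤ 1 / 4) (n : ℕ) :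
    ∀ s : ℂ, A < s.re → ‖(doublingStep q)^[n] 0 s‖ ≤ 1 / 2 := by
  induction n with
  | zero => simp
  | succ n ih =>
    rw [Function.iterate_succ_apply']
    exact fun s => norm_doublingStep_le hA hq ih

theorem differentiableOn_iterate_doublingStep (hA : 0 ≤ A)
    (hqd : DifferentiableOn ℂ q (halfPlane (A - 1 / 2)))
    (hq : ∀ s : ℂ, A - 1 / 2 < s.re → ‖q s‖ ≤ 1 / 4) (n : ℕ) :
    DifferentiableOn ℂ ((doublingStep q)^[n] 0) (halfPlane A) := by
  induction n with
  | zero => exact differentiableOn_const 0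
  | succ n ih =>
    rw [Function.iterate_succ_apply']
    exact differentiableOn_doublingStep hA hqd (norm_iterate_doublingStep_le hA hq n) ih

theorem periodic_iterate_doublingStep (hq : Function.Periodic q (2 * π * I)) (n : ℕ) :
    Function.Periodic ((doublingStep q)^[n] 0) (π * I) := by
  induction n with
  | zero => exact fun _ => rfl
  | succ n ih =>
    rw [Function.iterate_succ_apply']
    exact periodic_doublingStep hq ih

theorem norm_iterate_doublingStep_succ_sub_le (hA : 0 ≤ A)
    (hq : ∀ s : ℂ, A - 1 / 2 < s.re → ‖q s‖ ≤ 1 / 4)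
    (hql : ∀ s s' : ℂ, A - 1 / 2 < s.re → A - 1 / 2 < s'.re → ‖q s - q s'‖ ≤ 1 / 2 * ‖s - s'‖)
    (n : ℕ) : ∀ s : ℂ, A < s.re →
      ‖(doublingStep q)^[n + 1] 0 s - (doublingStep q)^[n] 0 s‖ ≤ (3 / 4) ^ n := by
  induction n with
  | zero =>
    intro s hs
    rw [Function.iterate_zero_apply, Pi.zero_apply, sub_zero, pow_zero]
    linarith [norm_iterate_doublingStep_le hA hq (0 + 1) s hs]
  | succ n ih =>
    intro s hs
    have hstep := norm_doublingStep_sub_le hA hql (norm_iterate_doublingStep_le hA hq (n + 1))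
      (norm_iterate_doublingStep_le hA hq n) ih hs
    rwa [← Function.iterate_succ_apply' (doublingStep q) (n + 1),
      ← Function.iterate_succ_apply' (doublingStep q) n, ← pow_succ'] at hstep

theorem exists_eqOn_doublingStep (hA : 0 ≤ A)
    (hqd : DifferentiableOn ℂ q (halfPlane (A - 3 / 2)))
    (hqb : ∀ s : ℂ, A - 3 / 2 < s.re → ‖q s‖ ≤ 1 / 4) (hqp : Function.Periodic q (2 * π * I)) :
    ∃ e : ℂ → ℂ, DifferentiableOn ℂ e (halfPlane A) ∧ (∀ s : ℂ, A < s.re → ‖e s‖ ≤ 1 / 2) ∧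
      Function.Periodic e (π * I) ∧ EqOn e (doublingStep q e) (halfPlane A) := by
  have hqd' := hqd.mono (halfPlane_mono (by linarith : A - 3 / 2 ≤ A - 1 / 2))
  have hqb' : ∀ s : ℂ, A - 1 / 2 < s.re → ‖q s‖ ≤ 1 / 4 := fun s hs => hqb s (by linarith)
  have hql : ∀ s s' : ℂ, A - 1 / 2 < s.re → A - 1 / 2 < s'.re →
      ‖q s - q s'‖ ≤ 1 / 2 * ‖s - s'‖ := fun s s' hs hs' => by
    convert norm_sub_le_of_norm_le_halfPlane one_pos hqd hqb (s := s) (s' := s') (by linarith)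
      (by linarith) using 2
    norm_num
  set E : ℕ → ℂ → ℂ := fun n => (doublingStep q)^[n] 0
  have hEc : ∀ n, ∀ s : ℂ, A < s.re → ‖E (n + 1) s - E n s‖ ≤ (3 / 4) ^ n :=
    norm_iterate_doublingStep_succ_sub_le hA hqb' hql
  have hEd : ∀ n, DifferentiableOn ℂ (E n) (halfPlane A) :=
    differentiableOn_iterate_doublingStep hA hqd' hqb'
  have hsum : Summable fun n : ℕ => (3 / 4 : ℝ) ^ n :=
    summable_geometric_of_lt_one (by norm_num) (by norm_num)
  set e : ℂ → ℂ := fun s => ∑' n, (E (n + 1) s - E n s)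
  have hlim : ∀ s : ℂ, A < s.re → Tendsto (E · s) atTop (𝓝 (e s)) := fun s hs => by
    refine (Summable.of_norm_bounded hsum (hEc · s hs)).hasSum.tendsto_sum_nat.congr fun n => ?_
    rw [Finset.sum_range_sub (E · s)]
    exact sub_zero _
  have heb : ∀ s : ℂ, A < s.re → ‖e s‖ ≤ 1 / 2 := fun s hs =>
    le_of_tendsto' (hlim s hs).norm (norm_iterate_doublingStep_le hA hqb' · s hs)
  refine ⟨e, ?_, heb, fun s => ?_, fun s hs => ?_⟩
  · exact Complex.differentiableOn_tsum_of_summable_norm hsum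
      (fun n => (hEd (n + 1)).sub (hEd n)) (isOpen_halfPlane A) fun n s hs => hEc n s hs
  · simp only [e, E, periodic_iterate_doublingStep hqp _ s]
  · have hs2 := lt_re_two_mul hA hs
    have hqc : ContinuousAt q (2 * s + e (2 * s)) := (hqd'.differentiableAt
      ((isOpen_halfPlane _).mem_nhds (sub_lt_re_add_of_norm_le hs2 (heb _ hs2)))).continuousAt
    have hstep : Tendsto (fun n => doublingStep q (E n) s) atTop (𝓝 (doublingStep q e s)) :=
      ((hlim _ hs2).add (hqc.tendsto.comp ((hlim _ hs2).const_add (2 * s)))).const_mul _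
    refine tendsto_nhds_unique ((hlim s hs).comp (tendsto_add_atTop_nat 1))
      (hstep.congr fun n => ?_)
    exact (congrFun (Function.iterate_succ_apply' (doublingStep q) n 0) s).symm

end doublingStep

/-- `s ↦ exp (s + e s)` is, on `halfPlane A`, the Böttcher function of `z ^ 2 + c` near infinity
written in the logarithmic coordinate; `e` is its small correction to the exponential. -/
structure IsBottcherGerm (c : ℂ) (A : ℝ) (e : ℂ → ℂ) : Prop where
  le_radius : Real.log (‖c‖ + 3) + 1 / 2 ≤ A
  differentiableOn : DifferentiableOn ℂ e (halfPlane A)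
  norm_le : ∀ s : ℂ, A < s.re → ‖e s‖ ≤ 1 / 2
  periodic : Function.Periodic e (π * I)
  quadMap_exp : ∀ s : ℂ, A < s.re → quadMap c (exp (s + e s)) = exp (2 * s + e (2 * s))

theorem norm_mul_exp_neg_le {c ζ : ℂ} (hζ : Real.log (8 * (‖c‖ + 1)) < ζ.re) :
    ‖c * exp (-ζ)‖ ≤ 1 / 8 := by
  have hexp : Real.exp (-ζ.re) ≤ (8 * (‖c‖ + 1))⁻¹ := by
    rw [← Real.exp_log (by positivity : (0 : ℝ) < (8 * (‖c‖ + 1))⁻¹), Real.log_inv]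
    exact Real.exp_le_exp.2 (by linarith)
  calc ‖c * exp (-ζ)‖ = ‖c‖ * Real.exp (-ζ.re) := by
        rw [norm_mul, Complex.norm_exp, Complex.neg_re]
    _ ≤ (‖c‖ + 1) * (8 * (‖c‖ + 1))⁻¹ := by gcongr; linarith
    _ = 1 / 8 := by field_simp

theorem one_sub_mem_slitPlane {x : ℂ} (hx : ‖x‖ < 1) : 1 - x ∈ Complex.slitPlane := by
  refine Or.inl ?_
  rw [Complex.sub_re, Complex.one_re]
  linarith [Complex.re_le_norm x]

theorem norm_log_one_sub_le {x : ℂ} (hx : ‖x‖ ≤ 1 / 2) :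
    ‖Complex.log (1 - x)‖ ≤ 3 / 2 * ‖x‖ := by
  have hlog := Complex.norm_log_one_add_half_le_self (z := -x) (by rwa [norm_neg])
  rwa [norm_neg, ← sub_eq_add_neg] at hlog

/- With `ζ = 2 * s + e (2 * s)`, the equation `exp (s + e s) ^ 2 + c = exp ζ` is solved by
`2 * e s = e (2 * s) + log (1 - c * exp (-ζ))`. -/
theorem exists_isBottcherGerm (c : ℂ) : ∃ A e, IsBottcherGerm c A e := by
  set L : ℝ := Real.log (8 * (‖c‖ + 1))
  have hc := norm_nonneg c
  have hL0 : 0 ≤ L := Real.log_nonneg (by linarith)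
  have hsmall : ∀ ζ : ℂ, L < ζ.re → ‖c * exp (-ζ)‖ ≤ 1 / 8 := fun ζ => norm_mul_exp_neg_le
  have hslit : ∀ ζ : ℂ, L < ζ.re → 1 - c * exp (-ζ) ∈ Complex.slitPlane := fun ζ hζ =>
    one_sub_mem_slitPlane ((hsmall ζ hζ).trans_lt (by norm_num))
  let q : ℂ → ℂ := fun ζ => Complex.log (1 - c * exp (-ζ))
  have hqd : DifferentiableOn ℂ q (halfPlane L) := fun ζ hζ =>
    ((by fun_prop : DifferentiableAt ℂ (fun ζ => 1 - c * exp (-ζ)) ζ).clog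
      (hslit ζ hζ)).differentiableWithinAt
  have hqb : ∀ ζ : ℂ, L < ζ.re → ‖q ζ‖ ≤ 1 / 4 := fun ζ hζ =>
    (norm_log_one_sub_le ((hsmall ζ hζ).trans (by norm_num))).trans (by linarith [hsmall ζ hζ])
  have hqp : Function.Periodic q (2 * π * I) := fun ζ => by
    have hexp : exp (-(ζ + 2 * π * I)) = exp (-ζ) := by
      rw [neg_add, ← sub_eq_add_neg, Complex.exp_sub, Complex.exp_two_pi_mul_I, div_one]
    simp only [q, hexp]
  obtain ⟨e, hed, heb, hep, hee⟩ := exists_eqOn_doublingStep (A := L + 3 / 2) (by linarith)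
    (by rwa [add_sub_cancel_right]) (by rwa [add_sub_cancel_right]) hqp
  refine ⟨L + 3 / 2, e, ⟨?_, hed, heb, hep, fun s hs => ?_⟩⟩
  · have hlog : Real.log (‖c‖ + 3) ≤ L := Real.log_le_log (by linarith) (by linarith)
    linarith
  · have hs2 := lt_re_two_mul (by linarith) hs
    set ζ : ℂ := 2 * s + e (2 * s)
    have hζ : L < ζ.re := by
      have hre := sub_lt_re_add_of_norm_le hs2 (heb _ hs2)
      linarith
    have hsum : (2 : ℕ) * (s + e s) = ζ + q ζ := by
      rw [hee hs, doublingStep]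
      push_cast
      ring
    rw [quadMap, ← Complex.exp_nat_mul, hsum, Complex.exp_add,
      Complex.exp_log (Complex.slitPlane_ne_zero (hslit ζ hζ)), mul_sub, mul_left_comm,
      ← Complex.exp_add, add_neg_cancel, Complex.exp_zero]
    ring

namespace IsBottcherGerm

variable {c : ℂ} {A : ℝ} {e : ℂ → ℂ}

theorem radius_pos (h : IsBottcherGerm c A e) : 0 < A := by
  have hlog : 0 ≤ Real.log (‖c‖ + 3) := Real.log_nonneg (by linarith [norm_nonneg c])
  linarith [h.le_radius]

theorem exp_le_norm_exp (h : IsBottcherGerm c A e) {s : ℂ} (hs : A < s.re) :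
    Real.exp (s.re - 1 / 2) ≤ ‖exp (s + e s)‖ := by
  rw [Complex.norm_exp, Complex.add_re]
  have he := (abs_le.1 ((Complex.abs_re_le_norm _).trans (h.norm_le s hs))).1
  exact Real.exp_le_exp.2 (by linarith)

theorem norm_exp_le_exp (h : IsBottcherGerm c A e) {s : ℂ} (hs : A < s.re) :
    ‖exp (s + e s)‖ ≤ Real.exp (s.re + 1 / 2) := by
  rw [Complex.norm_exp, Complex.add_re]
  have he := (abs_le.1 ((Complex.abs_re_le_norm _).trans (h.norm_le s hs))).2
  exact Real.exp_le_exp.2 (by linarith)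

theorem exp_notMem_filledJuliaQuad (h : IsBottcherGerm c A e) {s : ℂ} (hs : A < s.re) :
    exp (s + e s) ∉ filledJuliaQuad c := by
  intro hK
  have hc := norm_nonneg c
  have hle : ‖c‖ + 3 ≤ Real.exp (s.re - 1 / 2) := by
    rw [← Real.log_le_iff_le_exp (by linarith)]
    linarith [h.le_radius]
  exact (hle.trans (h.exp_le_norm_exp hs)).not_gt (norm_lt_of_mem_filledJuliaQuad hK)

theorem differentiableOn_exp (h : IsBottcherGerm c A e) :
    DifferentiableOn ℂ (fun s => exp (s + e s)) (halfPlane A) :=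
  (differentiableOn_id.add h.differentiableOn).cexp

theorem exp_antiperiodic (h : IsBottcherGerm c A e) :
    Function.Antiperiodic (fun s => exp (s + e s)) (π * I) := fun s => by
  change exp (s + π * I + e (s + π * I)) = -exp (s + e s)
  rw [h.periodic, add_right_comm, Complex.exp_add, Complex.exp_pi_mul_I, mul_neg_one]

theorem norm_sub_le (h : IsBottcherGerm c A e) {s s' : ℂ} (hs : A + 2 < s.re)
    (hs' : A + 2 < s'.re) : ‖e s - e s'‖ ≤ 1 / 2 * ‖s - s'‖ := by
  convert norm_sub_le_of_norm_le_halfPlane two_pos h.differentiableOn h.norm_le hs hs' using 2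
  norm_num

theorem exists_int_of_exp_eq (h : IsBottcherGerm c A e) {s s' : ℂ} (hs : A + 2 < s.re)
    (hs' : A + 2 < s'.re) (heq : exp (s + e s) = exp (s' + e s')) :
    ∃ m : ℤ, s = s' + m * (2 * π * I) := by
  obtain ⟨m, hm⟩ := Complex.exp_eq_exp_iff_exists_int.1 heq
  refine ⟨m, ?_⟩
  have hper : e (s' + m * (2 * π * I)) = e s' := by
    convert h.periodic.int_mul (m * 2) s' using 2
    push_cast
    ring
  have hlip := h.norm_sub_le hs (s' := s' + m * (2 * π * I)) (by simpa using hs')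
  rw [hper, norm_sub_rev, show e s' - e s = s - (s' + m * (2 * π * I)) by
    linear_combination -hm] at hlip
  exact sub_eq_zero.1 (norm_le_zero_iff.1 (by linarith))

theorem exists_add_eq (h : IsBottcherGerm c A e) {w : ℂ} (hw : A + 3 < w.re) :
    ∃ s : ℂ, A < s.re ∧ s + e s = w := by
  have hball : ∀ s ∈ closedBall w (1 / 2), A + 2 < s.re := by
    intro s hs
    have hre := sub_lt_re_add_of_norm_le hw (mem_closedBall_iff_norm.1 hs)
    rw [add_sub_cancel] at hre
    linarith
  have hmaps : MapsTo (fun s => w - e s) (closedBall w (1 / 2)) (closedBall w (1 / 2)) := by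
    intro s hs
    simpa [mem_closedBall_iff_norm] using h.norm_le s (by linarith [hball s hs])
  have hcontr : ContractingWith (1 / 2) (hmaps.restrict _ _ _) := by
    refine ⟨by rw [← NNReal.coe_lt_coe]; norm_num, LipschitzWith.of_dist_le_mul fun a b => ?_⟩
    change dist (w - e a) (w - e b) ≤ _ * dist (a : ℂ) b
    rw [dist_sub_left, dist_eq_norm, dist_eq_norm]
    simpa using h.norm_sub_le (hball a a.2) (hball b b.2)
  obtain ⟨s, hs, hfix, -⟩ := hcontr.exists_fixedPoint' isClosed_closedBall.isComplete hmaps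
    (mem_closedBall_self (by norm_num)) (edist_ne_top _ _)
  exact ⟨s, by linarith [hball s hs], eq_sub_iff_add_eq.1 (Eq.symm hfix)⟩

theorem exists_exp_eq (h : IsBottcherGerm c A e) {z : ℂ} (hz : Real.exp (A + 3) < ‖z‖) :
    ∃ s : ℂ, A < s.re ∧ exp (s + e s) = z := by
  have hz0 : 0 < ‖z‖ := (Real.exp_pos _).trans hz
  obtain ⟨s, hs, hsz⟩ := h.exists_add_eq (w := Complex.log z)
    (by rwa [Complex.log_re, Real.lt_log_iff_exp_lt hz0])
  exact ⟨s, hs, by rw [hsz, Complex.exp_log (norm_pos_iff.1 hz0)]⟩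

end IsBottcherGerm

/-! ### Extension of the Böttcher function to the right half-plane -/

theorem quadMap_eq_of_eqOn_halfPlane {c : ℂ} {A a : ℝ} (ha : 0 ≤ a) (hA : 0 ≤ A) {ψ₀ g : ℂ → ℂ}
    (hψ₀ : ∀ s : ℂ, A < s.re → quadMap c (ψ₀ s) = ψ₀ (2 * s))
    (hg : DifferentiableOn ℂ g (halfPlane a)) (hgψ : EqOn g ψ₀ (halfPlane A)) :
    ∀ s : ℂ, a < s.re → quadMap c (g s) = g (2 * s) := by
  refine eqOn_halfPlane_of_eqOn (A := A) ((differentiable_quadMap c).comp_differentiableOn hg)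
    ((differentiableOn_comp_two_mul hg).mono (halfPlane_mono (by linarith))) fun s hs => ?_
  rw [hgψ hs, hψ₀ s hs, hgψ (lt_re_two_mul hA hs)]

theorem notMem_filledJuliaQuad_of_quadMap_eq {c : ℂ} {A a : ℝ} (ha : 0 ≤ a) {g : ℂ → ℂ}
    (hg : ∀ s : ℂ, a < s.re → quadMap c (g s) = g (2 * s))
    (hfar : ∀ s : ℂ, A < s.re → g s ∉ filledJuliaQuad c) :
    ∀ s : ℂ, a < s.re → g s ∉ filledJuliaQuad c :=
  halfPlane_induction ha hfar fun s hs h2s => by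
    rwa [← quadMap_mem_filledJuliaQuad_iff, hg s hs]

section Extension

variable {c : ℂ} {A : ℝ} {ψ₀ : ℂ → ℂ}

theorem exists_extension_halfPlane_half (hc : c ∈ filledJuliaQuad c) {a : ℝ} (ha : 0 ≤ a)
    (haA : a ≤ A) (hψ₀d : DifferentiableOn ℂ ψ₀ (halfPlane A))
    (hψ₀ : ∀ s : ℂ, A < s.re → quadMap c (ψ₀ s) = ψ₀ (2 * s))
    (hψ₀K : ∀ s : ℂ, A < s.re → ψ₀ s ∉ filledJuliaQuad c) {g : ℂ → ℂ}
    (hg : DifferentiableOn ℂ g (halfPlane a)) (hgψ : EqOn g ψ₀ (halfPlane A)) :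
    ∃ g' : ℂ → ℂ, DifferentiableOn ℂ g' (halfPlane (a / 2)) ∧ EqOn g' ψ₀ (halfPlane A) := by
  have hgK : ∀ s : ℂ, a < s.re → g s ∉ filledJuliaQuad c :=
    notMem_filledJuliaQuad_of_quadMap_eq ha
      (quadMap_eq_of_eqOn_halfPlane ha (ha.trans haA) hψ₀ hg hgψ)
      fun s hs => by rw [hgψ hs]; exact hψ₀K s hs
  have h0 : (0 : ℂ) ∈ filledJuliaQuad c := by
    rw [← quadMap_mem_filledJuliaQuad_iff]
    simpa [quadMap] using hc
  obtain ⟨u, hu, hug⟩ := exists_differentiableOn_exp_eq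
    (isSimplyConnected_of_convex (convex_halfPlane (a / 2)) (halfPlane_nonempty _))
    (isOpen_halfPlane _) ((differentiableOn_comp_two_mul hg).sub_const c) fun s hs hsc => by
      refine hgK (2 * s) ?_ (by rwa [sub_eq_zero.1 hsc])
      rw [mem_halfPlane] at hs
      rw [show (2 * s).re = 2 * s.re by simp]
      linarith
  have hsub : halfPlane A ⊆ halfPlane (a / 2) := halfPlane_mono (by linarith)
  have hroot : DifferentiableOn ℂ (fun s => exp (u s / 2)) (halfPlane (a / 2)) :=
    (hu.div_const 2).cexp
  have hsq : EqOn ((fun s => exp (u s / 2)) ^ 2) (ψ₀ ^ 2) (halfPlane A) := by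
    intro s hs
    have h2 : ((2 : ℕ) : ℂ) * (u s / 2) = u s := by push_cast; ring
    simp only [Pi.pow_apply]
    rw [← Complex.exp_nat_mul, h2, hug s (hsub hs),
      hgψ (lt_re_two_mul (ha.trans haA) hs), ← hψ₀ s hs, quadMap, add_sub_cancel_right]
  rcases (convex_halfPlane A).isPreconnected.eq_or_eq_neg_of_sq_eq
    (hroot.continuousOn.mono hsub) hψ₀d.continuousOn hsq
    fun {s} hs h => hψ₀K s hs (h ▸ h0) with hpos | hneg
  · exact ⟨_, hroot, hpos⟩
  · exact ⟨_, hroot.neg, fun s hs => neg_eq_iff_eq_neg.2 (hneg hs)⟩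

theorem exists_extension_halfPlane_zero (hc : c ∈ filledJuliaQuad c) (hA : 0 ≤ A)
    (hψ₀d : DifferentiableOn ℂ ψ₀ (halfPlane A))
    (hψ₀ : ∀ s : ℂ, A < s.re → quadMap c (ψ₀ s) = ψ₀ (2 * s))
    (hψ₀K : ∀ s : ℂ, A < s.re → ψ₀ s ∉ filledJuliaQuad c) :
    ∃ ψ : ℂ → ℂ, DifferentiableOn ℂ ψ (halfPlane 0) ∧ EqOn ψ ψ₀ (halfPlane A) := by
  have hext : ∀ k : ℕ, ∃ g : ℂ → ℂ,
      DifferentiableOn ℂ g (halfPlane (A / 2 ^ k)) ∧ EqOn g ψ₀ (halfPlane A) := by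
    intro k
    induction k with
    | zero => exact ⟨ψ₀, by simpa using hψ₀d, eqOn_refl _ _⟩
    | succ k ih =>
      obtain ⟨g, hg, hgψ⟩ := ih
      rw [pow_succ, ← div_div]
      exact exists_extension_halfPlane_half hc (by positivity)
        (div_le_self hA (one_le_pow₀ one_le_two)) hψ₀d hψ₀ hψ₀K hg hgψ
  refine exists_differentiableOn_halfPlane fun b hb => ?_
  obtain ⟨k, hk⟩ := exists_lt_two_pow_mul hb A
  obtain ⟨g, hg, hgψ⟩ := hext k
  have hkb : A / 2 ^ k ≤ b := by
    rw [div_le_iff₀ (by positivity)]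
    linarith
  exact ⟨g, hg.mono (halfPlane_mono hkb), hgψ⟩

end Extension

/-- `ψ` is the inverse Böttcher coordinate `exterior disc → ℂ \ K` of `z ^ 2 + c` precomposed with
`exp`: it semiconjugates `s ↦ 2 * s` on the right half-plane to the dynamics on the basin of
infinity. Outside the right half-plane only the antiperiodicity is required of `ψ`. -/
structure IsLogBottcher (c : ℂ) (ψ : ℂ → ℂ) : Prop where
  differentiableOn : DifferentiableOn ℂ ψ (halfPlane 0)
  quadMap_apply : ∀ s : ℂ, 0 < s.re → quadMap c (ψ s) = ψ (2 * s)
  antiperiodic : Function.Antiperiodic ψ (π * I)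
  exists_int_of_eq : ∀ s s' : ℂ, 0 < s.re → 0 < s'.re → ψ s = ψ s' →
    ∃ m : ℤ, s = s' + m * (2 * π * I)
  image_halfPlane : ψ '' halfPlane 0 = (filledJuliaQuad c)ᶜ
  exists_norm_le : ∃ B : ℝ, ∀ s : ℂ, 0 < s.re → s.re ≤ 1 → ‖ψ s‖ ≤ B
  exists_le_norm : ∀ M : ℝ, ∃ A : ℝ, ∀ s : ℂ, A < s.re → M ≤ ‖ψ s‖

section Pullback

variable {c : ℂ} {A : ℝ} {ψ : ℂ → ℂ}

theorem exists_int_of_eq_of_quadMap_eq (hψ : ∀ s : ℂ, 0 < s.re → quadMap c (ψ s) = ψ (2 * s))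
    (hanti : Function.Antiperiodic ψ (π * I)) (hne : ∀ s : ℂ, 0 < s.re → ψ s ≠ 0)
    (hfar : ∀ s s' : ℂ, A < s.re → A < s'.re → ψ s = ψ s' → ∃ m : ℤ, s = s' + m * (2 * π * I))
    (s s' : ℂ) (hs : 0 < s.re) (hs' : 0 < s'.re) (heq : ψ s = ψ s') :
    ∃ m : ℤ, s = s' + m * (2 * π * I) := by
  wlog hle : s.re ≤ s'.re generalizing s s'
  · obtain ⟨m, hm⟩ := this s' s hs' hs heq.symm (le_of_not_ge hle)
    exact ⟨-m, by rw [hm]; push_cast; ring⟩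
  refine halfPlane_induction (p := fun s => ∀ s' : ℂ, s.re ≤ s'.re → ψ s = ψ s' →
    ∃ m : ℤ, s = s' + m * (2 * π * I)) le_rfl (fun s hs s' hle => hfar s s' hs (hs.trans_le hle))
    (fun s hs ih s' hle heq => ?_) s hs s' hle heq
  have hs' := hs.trans_le hle
  obtain ⟨m, hm⟩ := ih (2 * s') (by simpa using hle) (by rw [← hψ s hs, heq, hψ s' hs'])
  rcases Int.even_or_odd' m with ⟨j, rfl | rfl⟩ <;> push_cast at hm
  · exact ⟨j, by linear_combination hm / 2⟩
  · have hsj : s = s' + π * I + j * (2 * (π * I)) := by linear_combination hm / 2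
    rw [hsj, hanti.periodic_two_mul.int_mul j, hanti] at heq
    exact absurd (self_eq_neg.1 heq.symm) (hne s' hs')

theorem exists_eq_of_notMem_filledJuliaQuad {R : ℝ}
    (hψ : ∀ s : ℂ, 0 < s.re → quadMap c (ψ s) = ψ (2 * s))
    (hanti : Function.Antiperiodic ψ (π * I))
    (hfar : ∀ z : ℂ, R < ‖z‖ → ∃ s : ℂ, 0 < s.re ∧ ψ s = z) {z : ℂ}
    (hz : z ∉ filledJuliaQuad c) : ∃ s : ℂ, 0 < s.re ∧ ψ s = z := by
  obtain ⟨k, hk⟩ : ∃ k : ℕ, R < ‖(quadMap c)^[k] z‖ := by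
    by_contra! hbdd
    exact hz ⟨R, hbdd⟩
  clear hz
  induction k generalizing z with
  | zero => exact hfar z hk
  | succ k ih =>
    obtain ⟨s, hs, hsz⟩ := ih hk
    have hs2 : 0 < (s / 2).re := by simpa using hs
    have hsq : ψ (s / 2) ^ 2 = z ^ 2 := by
      have h2 := hψ (s / 2) hs2
      rw [mul_div_cancel₀ s two_ne_zero, hsz] at h2
      exact add_right_cancel h2
    rcases sq_eq_sq_iff_eq_or_eq_neg.1 hsq with heq | heq
    · exact ⟨_, hs2, heq⟩
    · exact ⟨s / 2 + π * I, by simpa using hs2, by rw [hanti, heq, neg_neg]⟩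

theorem norm_le_of_quadMap_eq {B : ℝ} (hB : ‖c‖ + 2 ≤ B)
    (hψ : ∀ s : ℂ, 0 < s.re → quadMap c (ψ s) = ψ (2 * s))
    (hfar : ∀ s : ℂ, A < s.re → s.re ≤ 2 * A → ‖ψ s‖ ≤ B) (s : ℂ) (hs : 0 < s.re)
    (hsA : s.re ≤ 2 * A) : ‖ψ s‖ ≤ B := by
  refine halfPlane_induction (p := fun s => s.re ≤ 2 * A → ‖ψ s‖ ≤ B) le_rfl hfar
    (fun s hs ih hsA => ?_) s hs hsA
  by_cases hfs : A < s.re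
  · exact hfar s hfs hsA
  · have hsq := ih (by rw [show (2 * s).re = 2 * s.re by simp]; linarith)
    rw [← hψ s hs, quadMap] at hsq
    have hsub := norm_sub_le_norm_add (ψ s ^ 2) c
    rw [norm_pow] at hsub
    by_contra! hlt
    nlinarith [norm_nonneg c]

end Pullback

theorem antiperiodic_indicator_halfPlane {a : ℝ} {φ : ℂ → ℂ}
    (hφ : ∀ s : ℂ, a < s.re → φ (s + π * I) = -φ s) :
    Function.Antiperiodic ((halfPlane a).indicator φ) (π * I) := by
  intro s
  have hiff : s + π * I ∈ halfPlane a ↔ s ∈ halfPlane a := by simp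
  by_cases hs : s ∈ halfPlane a
  · rw [indicator_of_mem hs, indicator_of_mem (hiff.2 hs), hφ s hs]
  · rw [indicator_of_notMem hs, indicator_of_notMem (mt hiff.1 hs), neg_zero]

theorem IsBottcherGerm.exists_extension {c : ℂ} {A : ℝ} {e : ℂ → ℂ} (h : IsBottcherGerm c A e)
    (hc : c ∈ filledJuliaQuad c) : ∃ ψ : ℂ → ℂ, DifferentiableOn ℂ ψ (halfPlane 0) ∧
      Function.Antiperiodic ψ (π * I) ∧ EqOn ψ (fun s => exp (s + e s)) (halfPlane A) := by
  have hA := h.radius_pos.le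
  obtain ⟨φ, hφ, hφe⟩ := exists_extension_halfPlane_zero hc hA h.differentiableOn_exp
    h.quadMap_exp fun s => h.exp_notMem_filledJuliaQuad
  have hind : EqOn ((halfPlane 0).indicator φ) φ (halfPlane 0) := eqOn_indicator
  refine ⟨_, hφ.congr hind, antiperiodic_indicator_halfPlane ?_,
    (hind.mono (halfPlane_mono hA)).trans hφe⟩
  refine eqOn_halfPlane_of_eqOn (A := A) (hφ.comp (by fun_prop) fun s hs => ?_) hφ.neg
    fun s hs => ?_
  · simpa using hs
  · have hs' : s + π * I ∈ halfPlane A := by simpa using hs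
    exact (hφe hs').trans ((h.exp_antiperiodic s).trans (congrArg Neg.neg (hφe hs).symm))

theorem exists_isLogBottcher {c : ℂ} (hc : c ∈ filledJuliaQuad c) : ∃ ψ, IsLogBottcher c ψ := by
  obtain ⟨A, e, h⟩ := exists_isBottcherGerm c
  have hA := h.radius_pos
  obtain ⟨ψ, hd, hanti, hψe⟩ := h.exists_extension hc
  have hψ : ∀ s : ℂ, 0 < s.re → quadMap c (ψ s) = ψ (2 * s) :=
    quadMap_eq_of_eqOn_halfPlane le_rfl hA.le h.quadMap_exp hd hψe
  have hψK : ∀ s : ℂ, 0 < s.re → ψ s ∉ filledJuliaQuad c :=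
    notMem_filledJuliaQuad_of_quadMap_eq (A := A) le_rfl hψ fun s hs => by
      rw [hψe hs]
      exact h.exp_notMem_filledJuliaQuad hs
  have h0 : (0 : ℂ) ∈ filledJuliaQuad c := by
    rw [← quadMap_mem_filledJuliaQuad_iff]
    simpa [quadMap] using hc
  refine ⟨ψ, hd, hψ, hanti, ?_, ?_, ?_, fun M => ⟨max A M, fun s hs => ?_⟩⟩
  · refine exists_int_of_eq_of_quadMap_eq (A := A + 2) hψ hanti
      (fun s hs hs0 => hψK s hs (hs0 ▸ h0)) fun s s' hs hs' heq => ?_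
    rw [hψe (by rw [mem_halfPlane]; linarith), hψe (by rw [mem_halfPlane]; linarith)] at heq
    exact h.exists_int_of_exp_eq hs hs' heq
  · refine subset_antisymm (image_subset_iff.2 hψK) fun z hz =>
      exists_eq_of_notMem_filledJuliaQuad (R := Real.exp (A + 3)) hψ hanti (fun w hw => ?_) hz
    obtain ⟨s, hs, hsw⟩ := h.exists_exp_eq hw
    exact ⟨s, hA.trans hs, (hψe hs).trans hsw⟩
  · refine ⟨max (‖c‖ + 2) (Real.exp (2 * (A + 1) + 1 / 2)), fun s hs hs1 =>
      norm_le_of_quadMap_eq (A := A + 1) (le_max_left _ _) hψ (fun w hw hw2 => ?_) s hs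
        (by linarith)⟩
    have hwA : A < w.re := by linarith
    rw [hψe hwA]
    exact (h.norm_exp_le_exp hwA).trans
      ((Real.exp_le_exp.2 (by linarith)).trans (le_max_right _ _))
  · obtain ⟨hsA, hsM⟩ := max_lt_iff.1 hs
    rw [hψe hsA]
    linarith [h.exp_le_norm_exp hsA, Real.add_one_le_exp (s.re - 1 / 2)]

namespace IsLogBottcher

variable {c : ℂ} {ψ : ℂ → ℂ}

theorem notMem_filledJuliaQuad (h : IsLogBottcher c ψ) {s : ℂ} (hs : 0 < s.re) :
    ψ s ∉ filledJuliaQuad c :=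
  h.image_halfPlane.subset (mem_image_of_mem ψ hs)

theorem exists_eq (h : IsLogBottcher c ψ) {z : ℂ} (hz : z ∉ filledJuliaQuad c) :
    ∃ s : ℂ, 0 < s.re ∧ ψ s = z :=
  h.image_halfPlane.superset hz

theorem periodic (h : IsLogBottcher c ψ) (m : ℤ) : Function.Periodic ψ (m * (2 * π * I)) := by
  rw [mul_assoc (2 : ℂ)]
  exact h.antiperiodic.periodic_two_mul.int_mul m

theorem iterate_quadMap_apply (h : IsLogBottcher c ψ) (k : ℕ) {s : ℂ} (hs : 0 < s.re) :
    (quadMap c)^[k] (ψ s) = ψ (2 ^ k * s) := by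
  induction k generalizing s with
  | zero => simp
  | succ k ih =>
    rw [Function.iterate_succ_apply, h.quadMap_apply s hs, ih (lt_re_two_mul le_rfl hs),
      pow_succ, mul_assoc]

theorem continuousOn (h : IsLogBottcher c ψ) : ContinuousOn ψ (halfPlane 0) :=
  h.differentiableOn.continuousOn

theorem re_eq_of_eq (h : IsLogBottcher c ψ) {s s' : ℂ} (hs : 0 < s.re) (hs' : 0 < s'.re)
    (heq : ψ s = ψ s') : s.re = s'.re := by
  obtain ⟨m, rfl⟩ := h.exists_int_of_eq s s' hs hs' heq
  simp

theorem isOpen_image (h : IsLogBottcher c ψ) {D : Set ℂ} (hD : IsOpen D)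
    (hsub : D ⊆ halfPlane 0) : IsOpen (ψ '' D) := by
  rcases (h.differentiableOn.analyticOnNhd (isOpen_halfPlane 0)).is_constant_or_isOpen
    (convex_halfPlane 0).isPreconnected with ⟨w, hw⟩ | hopen
  · have hre := h.re_eq_of_eq (s := 1) (s' := 2) (by simp) (by simp)
      ((hw 1 (by simp)).trans (hw 2 (by simp)).symm)
    norm_num at hre
  · exact hopen D hsub hD

theorem exists_nhds_le_re (h : IsLogBottcher c ψ) {z : ℂ} (hz : z ∉ filledJuliaQuad c) :
    ∃ δ > 0, ∃ V ∈ 𝓝 z, ∀ s : ℂ, 0 < s.re → ψ s ∈ V → δ ≤ s.re := by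
  obtain ⟨w, hw, rfl⟩ := h.exists_eq hz
  refine ⟨w.re / 2, half_pos hw, ψ '' halfPlane (w.re / 2),
    (h.isOpen_image (isOpen_halfPlane _) (halfPlane_mono (half_pos hw).le)).mem_nhds
      (mem_image_of_mem _ (half_lt_self hw)), ?_⟩
  rintro s hs ⟨s', hs', heq⟩
  rw [mem_halfPlane] at hs'
  linarith [h.re_eq_of_eq hs (by linarith) heq.symm]

theorem exists_pos_le_re_of_isCompact (h : IsLogBottcher c ψ) {Q : Set ℂ} (hQ : IsCompact Q)
    (hQK : Disjoint Q (filledJuliaQuad c)) :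
    ∃ δ > 0, ∀ s : ℂ, 0 < s.re → ψ s ∈ Q → δ ≤ s.re := by
  refine hQ.induction_on (p := fun T => ∃ δ > 0, ∀ s : ℂ, 0 < s.re → ψ s ∈ T → δ ≤ s.re)
    ⟨1, one_pos, fun s _ hs => absurd hs (notMem_empty _)⟩ ?_ ?_ ?_
  · rintro S T hST ⟨δ, hδ, hT⟩
    exact ⟨δ, hδ, fun s hs hsS => hT s hs (hST hsS)⟩
  · rintro S T ⟨δ, hδ, hS⟩ ⟨δ', hδ', hT⟩
    exact ⟨min δ δ', lt_min hδ hδ', fun s hs => Or.rec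
      (fun hsS => (min_le_left _ _).trans (hS s hs hsS))
      fun hsT => (min_le_right _ _).trans (hT s hs hsT)⟩
  · intro z hz
    obtain ⟨δ, hδ, V, hV, hδV⟩ := h.exists_nhds_le_re (hQK.notMem_of_mem_left hz)
    exact ⟨V, mem_nhdsWithin_of_mem_nhds hV, δ, hδ, hδV⟩

theorem exists_mem_thickening_filledJuliaQuad (h : IsLogBottcher c ψ) {ε : ℝ} (hε : 0 < ε) :
    ∃ δ > 0, ∀ s : ℂ, 0 < s.re → s.re < δ → ψ s ∈ thickening ε (filledJuliaQuad c) := by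
  obtain ⟨B, hB⟩ := h.exists_norm_le
  obtain ⟨δ, hδ, hδQ⟩ := h.exists_pos_le_re_of_isCompact
    ((isCompact_closedBall 0 B).diff (isOpen_thickening (δ := ε) (E := filledJuliaQuad c)))
    (disjoint_left.2 fun z hz hzK => hz.2 (self_subset_thickening hε _ hzK))
  refine ⟨min δ 1, lt_min hδ one_pos, fun s hs hsδ => ?_⟩
  obtain ⟨hsδ, hs1⟩ := lt_min_iff.1 hsδ
  by_contra hfar
  exact hsδ.not_ge (hδQ s hs ⟨mem_closedBall_zero_iff.2 (hB s hs hs1.le), hfar⟩)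

theorem mem_juliaQuad_of_tendsto (h : IsLogBottcher c ψ) {ι : Type*} {l : Filter ι} [l.NeBot]
    {s : ι → ℂ} {z : ℂ} (hpos : ∀ᶠ i in l, 0 < (s i).re)
    (hre : Tendsto (fun i => (s i).re) l (𝓝 0)) (hψ : Tendsto (fun i => ψ (s i)) l (𝓝 z)) :
    z ∈ juliaQuad c := by
  have hzK : z ∈ filledJuliaQuad c := by
    by_contra hz
    obtain ⟨δ, hδ, V, hV, hδV⟩ := h.exists_nhds_le_re hz
    obtain ⟨i, hi, hiδ, hiV⟩ :=
      (hpos.and ((hre.eventually_lt_const hδ).and (hψ.eventually hV))).exists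
    exact hiδ.not_ge (hδV _ hi hiV)
  rw [juliaQuad, frontier_eq_closure_inter_closure]
  exact ⟨subset_closure hzK,
    mem_closure_of_tendsto hψ (hpos.mono fun i hi => h.notMem_filledJuliaQuad hi)⟩

end IsLogBottcher

/-! ### The length-area method -/

theorem abs_det_restrictScalars_toSpanSingleton (a : ℂ) :
    |((ContinuousLinearMap.toSpanSingleton ℂ a).restrictScalars ℝ : ℂ →L[ℝ] ℂ).det| =
      ‖a‖ ^ 2 := by
  simp [ContinuousLinearMap.det, LinearMap.det_restrictScalars, Algebra.norm_complex_eq,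
    Complex.normSq_eq_norm_sq]

theorem lintegral_enorm_deriv_sq_eq_volume_image {ψ : ℂ → ℂ} {D : Set ℂ} (hD : IsOpen D)
    (hd : DifferentiableOn ℂ ψ D) (hinj : InjOn ψ D) :
    ∫⁻ z in D, ‖deriv ψ z‖ₑ ^ 2 = volume (ψ '' D) := by
  have hder : ∀ z ∈ D, HasFDerivWithinAt ψ
      ((ContinuousLinearMap.toSpanSingleton ℂ (deriv ψ z)).restrictScalars ℝ) D z := fun z hz =>
    (((hd.differentiableAt (hD.mem_nhds hz)).hasDerivAt.hasFDerivAt).restrictScalars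
      ℝ).hasFDerivWithinAt
  rw [← lintegral_abs_det_fderiv_eq_addHaar_image volume hD.measurableSet hder hinj]
  simp only [abs_det_restrictScalars_toSpanSingleton, ENNReal.ofReal_pow (norm_nonneg _),
    ofReal_norm]

theorem mul_volume_le_setLIntegral_reProdIm {G : ℂ → ℝ≥0∞} (hG : Measurable G) {S T : Set ℝ}
    (hS : MeasurableSet S) (hT : MeasurableSet T) {κ : ℝ≥0∞}
    (h : ∀ y ∈ T, κ ≤ ∫⁻ x : ℝ in S, G (x + y * I)) :
    κ * volume T ≤ ∫⁻ z in S ×ℂ T, G z := by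
  have hG' : Measurable fun q : ℝ × ℝ => G (q.1 + q.2 * I) := hG.comp (by fun_prop)
  calc κ * volume T = ∫⁻ _ in T, κ := (setLIntegral_const T κ).symm
    _ ≤ ∫⁻ y : ℝ in T, ∫⁻ x : ℝ in S, G (x + y * I) := setLIntegral_mono' hT h
    _ = ∫⁻ q : ℝ × ℝ in S ×ˢ T, G (q.1 + q.2 * I) := by
      rw [Measure.volume_eq_prod, ← Measure.prod_restrict, lintegral_prod_symm' _ hG']
    _ = ∫⁻ z in S ×ℂ T, G z := by
      rw [← Complex.volume_preserving_equiv_real_prod.setLIntegral_comp_preimage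
        (hS.prod hT) hG']
      simp only [Complex.measurableEquivRealProd_apply, Complex.re_add_im]
      rfl

theorem sq_lintegral_enorm_le {α E : Type*} [MeasurableSpace α] [NormedAddCommGroup E]
    {μ : Measure α} {f : α → E} (hf : AEStronglyMeasurable f μ) :
    (∫⁻ x, ‖f x‖ₑ ∂μ) ^ 2 ≤ μ univ * ∫⁻ x, ‖f x‖ₑ ^ 2 ∂μ := by
  have h := eLpNorm_le_eLpNorm_mul_rpow_measure_univ (p := 1) (q := 2) (by norm_num) hf
  calc (∫⁻ x, ‖f x‖ₑ ∂μ) ^ 2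
      ≤ (eLpNorm f 2 μ * μ univ ^ (1 / 2 : ℝ)) ^ 2 := by
        rw [← eLpNorm_one_eq_lintegral_enorm]
        norm_num at h
        gcongr
    _ = μ univ * ∫⁻ x, ‖f x‖ₑ ^ 2 ∂μ := by
        have hsq := eLpNorm_nnreal_pow_eq_lintegral (f := f) (μ := μ) (p := 2) two_ne_zero
        norm_num at hsq
        rw [mul_pow, hsq, ← ENNReal.rpow_mul_natCast]
        norm_num [mul_comm]

theorem exists_setLIntegral_enorm_deriv_lt {ψ : ℂ → ℂ} {S T : Set ℝ} (hS : IsOpen S)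
    (hT : IsOpen T) (hd : DifferentiableOn ℂ ψ (S ×ℂ T)) (hinj : InjOn ψ (S ×ℂ T)) {ε : ℝ≥0∞}
    (h : volume S * volume (ψ '' (S ×ℂ T)) < ε ^ 2 * volume T) :
    ∃ y ∈ T, ∫⁻ x : ℝ in S, ‖deriv ψ (x + y * I)‖ₑ < ε := by
  by_contra! hcon
  have hm : Measurable fun z => ‖deriv ψ z‖ₑ ^ 2 := (measurable_deriv ψ).enorm.pow_const 2
  refine h.not_ge ?_
  rw [← lintegral_enorm_deriv_sq_eq_volume_image (hS.reProdIm hT) hd hinj,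
    ← lintegral_const_mul _ hm]
  refine mul_volume_le_setLIntegral_reProdIm (hm.const_mul _) hS.measurableSet hT.measurableSet
    fun y hy => ?_
  rw [lintegral_const_mul _ (by fun_prop), ← Measure.restrict_apply_univ S]
  exact (pow_le_pow_left' (hcon y hy) 2).trans (sq_lintegral_enorm_le
    ((measurable_deriv ψ).comp (by fun_prop)).aestronglyMeasurable)

theorem exists_tendsto_nhdsGT_zero_of_lintegral_enorm_deriv {E : Type*} [NormedAddCommGroup E]
    [NormedSpace ℝ E] [CompleteSpace E] {f f' : ℝ → E} {ρ : ℝ} (hρ : 0 < ρ)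
    (hf : ∀ x ∈ Ioo 0 ρ, HasDerivAt f (f' x) x)
    (hm : AEStronglyMeasurable f' (volume.restrict (Ioo 0 ρ)))
    (hfin : ∫⁻ x in Ioo 0 ρ, ‖f' x‖ₑ ≠ ∞) :
    ∃ a, Tendsto f (𝓝[>] 0) (𝓝 a) ∧
      ∀ x ∈ Ioo 0 ρ, ‖f x - a‖ₑ ≤ ∫⁻ x in Ioo 0 ρ, ‖f' x‖ₑ := by
  have hi : IntervalIntegrable f' volume 0 ρ :=
    (intervalIntegrable_iff_integrableOn_Ioo_of_le hρ.le).2 ⟨hm, hfin.lt_top⟩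
  have hi' : ∀ x ∈ Icc 0 ρ, ∀ y ∈ Icc 0 ρ, IntervalIntegrable f' volume x y := fun x hx y hy =>
    hi.mono_set ((uIcc_subset_Icc hx hy).trans_eq (uIcc_of_le hρ.le).symm)
  have h0 : (0 : ℝ) ∈ Icc 0 ρ := left_mem_Icc.2 hρ.le
  have hr : ρ / 2 ∈ Ioo 0 ρ := ⟨half_pos hρ, half_lt_self hρ⟩
  obtain ⟨a, ha⟩ : ∃ a, a = f (ρ / 2) - ∫ t in 0..ρ / 2, f' t := ⟨_, rfl⟩
  have hprim : ∀ x ∈ Ioo 0 ρ, f x - a = ∫ t in 0..x, f' t := fun x hx => by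
    have hx' := Ioo_subset_Icc_self hx
    have hr' := Ioo_subset_Icc_self hr
    have hFTC := intervalIntegral.integral_eq_sub_of_hasDerivAt
      (fun t ht => hf t (OrdConnected.uIcc_subset ordConnected_Ioo hr hx ht)) (hi' _ hr' _ hx')
    have hadd := intervalIntegral.integral_add_adjacent_intervals (hi' _ h0 _ hr') (hi' _ hr' _ hx')
    rw [← hadd, hFTC, ha]
    abel
  refine ⟨a, ?_, fun x hx => ?_⟩
  · have hcont := intervalIntegral.continuousOn_primitive_interval' hi left_mem_uIcc
    rw [uIcc_of_le hρ.le] at hcont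
    have hlim : Tendsto (fun x => ∫ t in 0..x, f' t) (𝓝[>] 0) (𝓝 0) := by
      simpa using (hcont 0 h0).tendsto.mono_left
        (nhdsWithin_le_of_mem (mem_of_superset (Ioo_mem_nhdsGT hρ) Ioo_subset_Icc_self))
    refine tendsto_sub_nhds_zero_iff.1 (hlim.congr' ?_)
    filter_upwards [Ioo_mem_nhdsGT hρ] with x hx using (hprim x hx).symm
  · rw [hprim x hx, intervalIntegral.integral_of_le hx.1.le]
    exact (enorm_integral_le_lintegral_enorm _).trans
      (lintegral_mono_set (Ioc_subset_Ioo_right hx.2))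

namespace IsLogBottcher

variable {c : ℂ} {ψ : ℂ → ℂ}

theorem exists_norm_deriv_mul_re_le (h : IsLogBottcher c ψ) {ε : ℝ} (hε : 0 < ε) :
    ∃ δ > 0, ∀ s : ℂ, 0 < s.re → s.re < δ → ‖deriv ψ s‖ * s.re ≤ ε := by
  obtain ⟨δ, hδ, hnear⟩ :=
    h.exists_mem_thickening_filledJuliaQuad (ε := ε / 128) (by positivity)
  refine ⟨δ / 2, half_pos hδ, fun s hs hsδ => ?_⟩
  have hball : ball s s.re ⊆ halfPlane 0 := by simpa using ball_subset_halfPlane s s.re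
  obtain ⟨z, hz, hsub⟩ := exists_ball_subset_image_ball hs (h.differentiableOn.mono hball)
  have hzδ : z.re < δ := by
    linarith [(abs_lt.1 ((Complex.abs_re_le_norm (z - s)).trans_lt (mem_ball_iff_norm.1 hz))).2,
      Complex.sub_re z s]
  obtain ⟨k, hk, hzk⟩ := mem_thickening_iff.1 (hnear z (hball hz) hzδ)
  by_contra! hcon
  obtain ⟨w, hw, rfl⟩ := hsub (show k ∈ ball (ψ z) (s.re * ‖deriv ψ s‖ / 128) by
    rw [mem_ball, dist_comm]; linarith)
  exact h.notMem_filledJuliaQuad (hball hw) hk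

theorem exists_volume_image_lt (h : IsLogBottcher c ψ) {ε : ℝ≥0∞} (hε : 0 < ε) :
    ∃ ρ > 0, volume (ψ '' (Ioo 0 ρ ×ℂ univ)) < ε := by
  let S : ℕ → Set ℂ := fun n => ψ '' (Ioo 0 (1 / ((n : ℝ) + 1)) ×ℂ univ)
  have hopen : ∀ n, IsOpen (S n) := fun n =>
    h.isOpen_image (isOpen_Ioo.reProdIm isOpen_univ) fun s hs => hs.1.1
  have hanti : Antitone S := fun m n hmn => image_mono fun s hs =>
    ⟨⟨hs.1.1, hs.1.2.trans_le (one_div_le_one_div_of_le (by positivity) (by gcongr))⟩, hs.2⟩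
  obtain ⟨B, hB⟩ := h.exists_norm_le
  have hfin : volume (S 0) ≠ ∞ := by
    refine ((measure_mono (t := closedBall 0 B) ?_).trans_lt measure_closedBall_lt_top).ne
    rintro _ ⟨s, ⟨⟨hs0, hs1⟩, -⟩, rfl⟩
    exact mem_closedBall_zero_iff.2 (hB s hs0 (by simpa using hs1.le))
  have hempty : ⋂ n, S n = ∅ := by
    refine eq_empty_iff_forall_notMem.2 fun z hz => ?_
    obtain ⟨s, hs, rfl⟩ := mem_iInter.1 hz 0
    obtain ⟨n, hn⟩ := exists_nat_one_div_lt hs.1.1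
    obtain ⟨s', hs', heq⟩ := mem_iInter.1 hz n
    linarith [h.re_eq_of_eq hs'.1.1 hs.1.1 heq, hs'.1.2]
  have hlim := tendsto_measure_iInter_atTop (μ := volume)
    (fun n => (hopen n).measurableSet.nullMeasurableSet) hanti ⟨0, hfin⟩
  rw [hempty, measure_empty] at hlim
  obtain ⟨n, hn⟩ := (hlim.eventually_lt_const hε).exists
  exact ⟨1 / ((n : ℝ) + 1), by positivity, hn⟩

theorem injOn (h : IsLogBottcher c ψ) {D : Set ℂ} (hD : D ⊆ halfPlane 0)
    (him : ∀ s ∈ D, ∀ s' ∈ D, s.im - s'.im < 2 * π) : InjOn ψ D := by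
  intro s hs s' hs' heq
  obtain ⟨m, hm⟩ := h.exists_int_of_eq s s' (hD hs) (hD hs') heq
  have himm : s.im = s'.im + m * (2 * π) := by simpa using congrArg Complex.im hm
  have hlt : (m : ℝ) < 1 := by nlinarith [him s hs s' hs', Real.pi_pos]
  have hgt : (-1 : ℝ) < m := by nlinarith [him s' hs' s hs, Real.pi_pos]
  obtain rfl : m = 0 := by
    norm_cast at hlt hgt
    lia
  simpa using hm

theorem exists_tendsto_ray (h : IsLogBottcher c ψ) {ε : ℝ} (hε : 0 < ε) :
    ∃ ρ₀ > 0, ∀ ρ, 0 < ρ → ρ ≤ ρ₀ → ∀ y₀ : ℝ, ∃ y ∈ Ioo y₀ (y₀ + ρ), ∃ a ∈ juliaQuad c,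
      Tendsto (fun x : ℝ => ψ (x + y * I)) (𝓝[>] 0) (𝓝 a) ∧
      ∀ x ∈ Ioo 0 ρ, ‖ψ (x + y * I) - a‖ ≤ ε := by
  have hε' : 0 < ENNReal.ofReal ε := ENNReal.ofReal_pos.2 hε
  obtain ⟨ρ₀, hρ₀, hvol⟩ := h.exists_volume_image_lt (ENNReal.pow_pos hε' 2)
  refine ⟨min ρ₀ 1, lt_min hρ₀ one_pos, fun ρ hρ hρ₀ y₀ => ?_⟩
  obtain ⟨hρ₀, hρ1⟩ := le_min_iff.1 hρ₀
  have hsub : Ioo 0 ρ ×ℂ Ioo y₀ (y₀ + ρ) ⊆ halfPlane 0 := fun s hs => hs.1.1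
  have hinj : InjOn ψ (Ioo 0 ρ ×ℂ Ioo y₀ (y₀ + ρ)) := h.injOn hsub fun s hs s' hs' => by
    linarith [hs.2.2, hs'.2.1, Real.pi_gt_three]
  have harea : volume (ψ '' (Ioo 0 ρ ×ℂ Ioo y₀ (y₀ + ρ))) < ENNReal.ofReal ε ^ 2 :=
    (measure_mono (image_mono (inter_subset_inter
      (preimage_mono (Ioo_subset_Ioo_right hρ₀)) fun _ _ => mem_univ _))).trans_lt hvol
  obtain ⟨y, hy, hlen⟩ := exists_setLIntegral_enorm_deriv_lt isOpen_Ioo isOpen_Ioo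
    (h.differentiableOn.mono hsub) hinj (ε := ENNReal.ofReal ε) (by
      rw [Real.volume_Ioo, Real.volume_Ioo, add_sub_cancel_left, sub_zero, mul_comm]
      gcongr
      simp)
  obtain ⟨a, ha, hle⟩ := exists_tendsto_nhdsGT_zero_of_lintegral_enorm_deriv hρ
    (f := fun x : ℝ => ψ (x + y * I)) (f' := fun x : ℝ => deriv ψ (x + y * I))
    (fun x hx => by
      have hd : DifferentiableAt ℂ ψ (x + y * I) :=
        h.differentiableOn.differentiableAt ((isOpen_halfPlane 0).mem_nhds (by simpa using hx.1))
      exact (hd.hasDerivAt.comp_add_const _ _).comp_ofReal)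
    ((measurable_deriv ψ).comp (by fun_prop)).aestronglyMeasurable (hlen.trans_le le_top).ne
  refine ⟨y, hy, a, h.mem_juliaQuad_of_tendsto ?_ ?_ ha, ha, fun x hx => ?_⟩
  · filter_upwards [self_mem_nhdsWithin] with x hx
    simpa using hx
  · simpa [Function.id_def] using tendsto_id'.2 (nhdsWithin_le_nhds (a := (0 : ℝ)) (s := Ioi 0))
  · rw [← ENNReal.ofReal_le_ofReal_iff hε.le, ofReal_norm]
    exact (hle x hx).trans hlen.le

end IsLogBottcher

/-! ### Carathéodory's theorem: uniform continuity at the boundary -/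

theorem exists_isPreconnected_subset_closedBall {X : Type*} [MetricSpace X] {J : Set X}
    (hJ : IsCompact J) [LocallyConnectedSpace J] {ε : ℝ} (hε : 0 < ε) :
    ∃ η > 0, ∀ a ∈ J, ∀ b ∈ J, dist a b < η →
      ∃ C ⊆ J, IsClosed C ∧ IsPreconnected C ∧ a ∈ C ∧ b ∈ C ∧ C ⊆ closedBall a ε := by
  have : CompactSpace J := isCompact_iff_compactSpace.1 hJ
  choose V hVball hVopen hxV hVconn using fun x : J =>
    locallyConnectedSpace_iff_subsets_isOpen_isConnected.1 ‹LocallyConnectedSpace J› x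
      (ball x (ε / 2)) (ball_mem_nhds x (half_pos hε))
  obtain ⟨η, hη, hηV⟩ := lebesgue_number_lemma_of_metric isCompact_univ hVopen
    fun x _ => mem_iUnion.2 ⟨x, hxV x⟩
  refine ⟨η, hη, fun a ha b hb hab => ?_⟩
  obtain ⟨x, hx⟩ := hηV ⟨a, ha⟩ (mem_univ _)
  have haV : ⟨a, ha⟩ ∈ V x := hx (mem_ball_self hη)
  have hbV : ⟨b, hb⟩ ∈ V x := hx (by rwa [mem_ball, dist_comm])
  refine ⟨closure (Subtype.val '' V x), closure_minimal ?_ hJ.isClosed, isClosed_closure,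
    ((hVconn x).isPreconnected.image _ continuous_subtype_val.continuousOn).closure,
    subset_closure ⟨_, haV, rfl⟩, subset_closure ⟨_, hbV, rfl⟩,
    closure_minimal ?_ isClosed_closedBall⟩
  · rintro _ ⟨y, -, rfl⟩
    exact y.2
  · rintro _ ⟨y, hy, rfl⟩
    have hya : dist y ⟨a, ha⟩ ≤ ε := by
      linarith [dist_triangle_right y ⟨a, ha⟩ x, mem_ball.1 (hVball x hy),
        mem_ball.1 (hVball x haV)]
    exact hya

theorem isPathConnected_compl_closedBall {a : ℂ} {r : ℝ} (hr : 0 < r) :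
    IsPathConnected (closedBall a r)ᶜ := by
  have himage : (fun s => a + exp s) '' halfPlane (Real.log r) = (closedBall a r)ᶜ := by
    ext z
    simp only [mem_image, mem_halfPlane, mem_compl_iff, mem_closedBall, not_le, dist_eq_norm]
    constructor
    · rintro ⟨s, hs, rfl⟩
      rwa [add_sub_cancel_left, Complex.norm_exp, ← Real.log_lt_iff_lt_exp hr]
    · intro hz
      have hza : z - a ≠ 0 := norm_pos_iff.1 (hr.trans hz)
      refine ⟨Complex.log (z - a), ?_, by rw [Complex.exp_log hza, add_sub_cancel]⟩
      rw [Complex.log_re]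
      exact Real.log_lt_log hr hz
  rw [← himage]
  exact ((convex_halfPlane _).isPathConnected (halfPlane_nonempty _)).image (by fun_prop)

/-- **Janiszewski's theorem**, in terms of logarithms of `(z - z₁) / (z - z₂)`. -/
theorem exists_continuousOn_union_exp_mul_sub_eq {J A : Set ℂ} {z₁ z₂ : ℂ} (hJ : IsClosed J)
    (hA : IsClosed A) (hJA : IsPreconnected (J ∩ A)) (hjJ : JoinedIn Jᶜ z₂ z₁)
    (hjA : JoinedIn Aᶜ z₂ z₁) :
    ∃ u, ContinuousOn u (J ∪ A) ∧ ∀ z ∈ J ∪ A, exp (u z) * (z - z₂) = z - z₁ := by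
  classical
  obtain ⟨u, hu, hue⟩ := exists_continuousOn_exp_mul_sub_eq hjJ
  obtain ⟨v, hv, hve⟩ := exists_continuousOn_exp_mul_sub_eq hjA
  obtain ⟨k, hk, huv⟩ := exists_eqOn_add_of_exp_eqOn hJA (hu.mono inter_subset_left)
    (hv.mono inter_subset_right) fun z hz => by
      have hz2 : z - z₂ ≠ 0 := sub_ne_zero.2 fun h => hjJ.source_mem (h ▸ hz.1)
      exact mul_right_cancel₀ hz2 ((hue z hz.1).trans (hve z hz.2).symm)
  have hwJ : EqOn (J.piecewise u fun z => v z + k) u J := piecewise_eqOn _ _ _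
  have hwA : EqOn (J.piecewise u fun z => v z + k) (fun z => v z + k) A := fun z hz => by
    by_cases hzJ : z ∈ J
    · rw [hwJ hzJ, huv z ⟨hzJ, hz⟩]
    · rw [piecewise_eq_of_notMem _ _ _ hzJ]
  refine ⟨J.piecewise u fun z => v z + k,
    (hu.congr hwJ).union_of_isClosed ((hv.add continuousOn_const).congr hwA) hJ hA, ?_⟩
  rintro z (hz | hz)
  · rw [hwJ hz, hue z hz]
  · rw [hwA hz, Complex.exp_add, hk, mul_one, hve z hz]

theorem mem_of_frontier_subset_of_exp_mul_sub_eq {S V : Set ℂ} {z₁ z₂ : ℂ} {u : ℂ → ℂ}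
    (hS : IsClosed S) (hu : ContinuousOn u S) (hue : ∀ z ∈ S, exp (u z) * (z - z₂) = z - z₁)
    (hfr : frontier V ⊆ S) (hV : Bornology.IsBounded V) (h₁ : z₁ ∈ V) : z₂ ∈ V := by
  classical
  obtain ⟨B, hB⟩ := hV.subset_closedBall 0
  obtain ⟨v, hv⟩ := ContinuousMap.exists_restrict_eq hS
    ⟨S.domRestrict u, continuousOn_iff_continuous_domRestrict.1 hu⟩
  have hvu : EqOn v u S := fun z hz => congrArg (fun f => f ⟨z, hz⟩) hv
  obtain ⟨z, hz⟩ := exists_eq_zero_of_continuous_of_eq_sub (R := B + 1) (z₁ := z₁)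
    (g := V.piecewise (fun z => exp (v z) * (z - z₂)) fun z => z - z₁)
    (Continuous.piecewise (fun z hz => by rw [hvu (hfr hz), hue z (hfr hz)])
      (v.continuous.cexp.mul (by fun_prop)) (by fun_prop))
    fun z hz => piecewise_eq_of_notMem _ _ _ fun hzV => by
      linarith [mem_closedBall_zero_iff.1 (hB hzV)]
  by_cases hzV : z ∈ V
  · rw [piecewise_eq_of_mem _ _ _ hzV] at hz
    rwa [← sub_eq_zero.1 ((mul_eq_zero.1 hz).resolve_left (Complex.exp_ne_zero _))]
  · rw [piecewise_eq_of_notMem _ _ _ hzV, sub_eq_zero] at hz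
    exact absurd (hz ▸ h₁) hzV

/-- The boundary of the rectangle `(0, x₁) × (y₁, y₂)` without its left side, on which a function
on the right half-plane need not be defined. -/
def outerEdges (x₁ y₁ y₂ : ℝ) : Set ℂ :=
  (Ioc 0 x₁ ×ℂ Icc y₁ y₂) \ (Ioo 0 x₁ ×ℂ Ioo y₁ y₂)

theorem outerEdges_subset_halfPlane {x₁ y₁ y₂ : ℝ} : outerEdges x₁ y₁ y₂ ⊆ halfPlane 0 :=
  fun _ hs => hs.1.1.1

theorem outerEdges_eq {x₁ y₁ y₂ : ℝ} (hx : 0 < x₁) (hy : y₁ < y₂) :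
    outerEdges x₁ y₁ y₂ =
      (Ioc 0 x₁ ×ℂ {y₁}) ∪ (Ioc 0 x₁ ×ℂ {y₂}) ∪ ({x₁} ×ℂ Icc y₁ y₂) := by
  ext s
  simp only [outerEdges, Set.mem_sdiff, mem_union, Complex.mem_reProdIm, mem_Ioc, mem_Ioo, mem_Icc,
    mem_singleton_iff]
  grind

theorem isClosed_insert_image_ray {ψ : ℂ → ℂ} (hψ : ContinuousOn ψ (halfPlane 0)) {x₁ y : ℝ}
    (hx : 0 ≤ x₁) {a : ℂ} (ha : Tendsto (fun x : ℝ => ψ (x + y * I)) (𝓝[>] 0) (𝓝 a)) :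
    IsClosed (insert a (ψ '' (Ioc 0 x₁ ×ℂ {y}))) := by
  let g : ℝ → ℂ := Function.update (fun x : ℝ => ψ (x + y * I)) 0 a
  have hg : ContinuousOn g (Icc 0 x₁) := by
    refine continuousOn_update_iff.2
      ⟨hψ.comp (by fun_prop) fun x hx => ?_, fun _ => ha.mono_left (nhdsWithin_mono _ ?_)⟩
    · simpa using hx.1.1.lt_of_ne' hx.2
    · exact fun x hx => hx.1.1.lt_of_ne' hx.2
  have hgψ : ∀ x : ℝ, x ≠ 0 → g x = ψ (x + y * I) := fun x hx => Function.update_of_ne hx _ _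
  have himage : g '' Icc 0 x₁ = insert a (ψ '' (Ioc 0 x₁ ×ℂ {y})) := by
    rw [← Ioc_insert_left hx, image_insert_eq, show g 0 = a from Function.update_self ..]
    congr 1
    refine subset_antisymm (image_subset_iff.2 fun x hx => ?_) (image_subset_iff.2 fun s hs => ?_)
    · exact ⟨x + y * I, by simpa [Complex.mem_reProdIm] using hx, (hgψ x hx.1.ne').symm⟩
    · refine ⟨s.re, hs.1, ?_⟩
      rw [hgψ _ hs.1.1.ne', ← mem_singleton_iff.1 hs.2, Complex.re_add_im]
  exact himage ▸ (isCompact_Icc.image_of_continuousOn hg).isClosed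

theorem image_outerEdges_subset_closedBall {ψ : ℂ → ℂ} {x₁ y₁ y₂ e d : ℝ} (hx : 0 < x₁)
    (hy : y₁ < y₂) {a b : ℂ} (ha : ∀ x ∈ Ioc 0 x₁, ‖ψ (x + y₁ * I) - a‖ ≤ e)
    (hb : ∀ x ∈ Ioc 0 x₁, ‖ψ (x + y₂ * I) - b‖ ≤ e)
    (hd : ∀ y ∈ Icc y₁ y₂, ‖ψ (x₁ + y * I) - ψ (x₁ + y₁ * I)‖ ≤ d) :
    dist a b ≤ d + 2 * e ∧ ψ '' outerEdges x₁ y₁ y₂ ⊆ closedBall a (d + 3 * e) := by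
  simp only [← dist_eq_norm] at ha hb hd
  have hax := ha x₁ ⟨hx, le_rfl⟩
  have hbx := hb x₁ ⟨hx, le_rfl⟩
  have hdx := hd y₂ ⟨hy.le, le_rfl⟩
  have hab : dist a b ≤ d + 2 * e := by
    linarith [dist_triangle4_left (ψ (x₁ + y₁ * I)) (ψ (x₁ + y₂ * I)) a b,
      dist_comm (ψ (x₁ + y₁ * I)) (ψ (x₁ + y₂ * I))]
  have he : 0 ≤ e := dist_nonneg.trans hax
  have hd0 : 0 ≤ d := dist_nonneg.trans hdx
  refine ⟨hab, ?_⟩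
  rw [outerEdges_eq hx hy]
  rintro _ ⟨s, (⟨hs, hsy⟩ | ⟨hs, hsy⟩) | ⟨hsx, hs⟩, rfl⟩ <;>
    rw [← Complex.re_add_im s, mem_closedBall]
  · rw [mem_singleton_iff.1 hsy]
    linarith [ha s.re hs]
  · rw [mem_singleton_iff.1 hsy]
    linarith [hb s.re hs, dist_triangle_right (ψ (s.re + y₂ * I)) a b]
  · rw [mem_singleton_iff.1 hsx]
    linarith [hd s.im hs, dist_triangle (ψ (x₁ + s.im * I)) (ψ (x₁ + y₁ * I)) a]

namespace IsLogBottcher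

variable {c : ℂ} {ψ : ℂ → ℂ} {x₁ y₁ y₂ : ℝ}

theorem isClosed_union_image_outerEdges (h : IsLogBottcher c ψ) (hx : 0 < x₁) (hy : y₁ < y₂)
    {a b : ℂ} {C : Set ℂ} (ha : Tendsto (fun x : ℝ => ψ (x + y₁ * I)) (𝓝[>] 0) (𝓝 a))
    (hb : Tendsto (fun x : ℝ => ψ (x + y₂ * I)) (𝓝[>] 0) (𝓝 b)) (hC : IsClosed C)
    (haC : a ∈ C) (hbC : b ∈ C) : IsClosed (C ∪ ψ '' outerEdges x₁ y₁ y₂) := by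
  have hright : IsClosed (ψ '' ({x₁} ×ℂ Icc y₁ y₂)) :=
    ((isCompact_singleton.reProdIm isCompact_Icc).image_of_continuousOn
      (h.continuousOn.mono fun s hs => hx.trans_eq (mem_singleton_iff.1 hs.1).symm)).isClosed
  have hEq : C ∪ ψ '' outerEdges x₁ y₁ y₂ = C ∪ insert a (ψ '' (Ioc 0 x₁ ×ℂ {y₁})) ∪
      insert b (ψ '' (Ioc 0 x₁ ×ℂ {y₂})) ∪ ψ '' ({x₁} ×ℂ Icc y₁ y₂) := by
    rw [outerEdges_eq hx hy, image_union, image_union]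
    grind
  exact hEq ▸ ((hC.union (isClosed_insert_image_ray h.continuousOn hx.le ha)).union
    (isClosed_insert_image_ray h.continuousOn hx.le hb)).union hright

theorem frontier_image_subset (h : IsLogBottcher c ψ) :
    frontier (ψ '' (Ioo 0 x₁ ×ℂ Ioo y₁ y₂)) ⊆ juliaQuad c ∪ ψ '' outerEdges x₁ y₁ y₂ := by
  intro z hz
  rw [(h.isOpen_image (isOpen_Ioo.reProdIm isOpen_Ioo) fun s hs => hs.1.1).frontier_eq] at hz
  obtain ⟨v, hv, hvz⟩ := mem_closure_iff_seq_limit.1 hz.1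
  choose t ht htv using hv
  have hIcc : ∀ n, t n ∈ Icc 0 x₁ ×ℂ Icc y₁ y₂ := fun n =>
    ⟨Ioo_subset_Icc_self (ht n).1, Ioo_subset_Icc_self (ht n).2⟩
  obtain ⟨t₀, ht₀, φ, hφ, hlim⟩ := (isCompact_Icc.reProdIm isCompact_Icc).tendsto_subseq hIcc
  have hψlim : Tendsto (fun n => ψ (t (φ n))) atTop (𝓝 z) :=
    (hvz.comp hφ.tendsto_atTop).congr fun n => (htv (φ n)).symm
  rcases ht₀.1.1.eq_or_lt with h0 | h0
  · refine Or.inl (h.mem_juliaQuad_of_tendsto (Eventually.of_forall fun n => (ht (φ n)).1.1)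
      ?_ hψlim)
    rw [h0]
    exact (Complex.continuous_re.tendsto t₀).comp hlim
  · have hzt : z = ψ t₀ := tendsto_nhds_unique hψlim
      ((h.continuousOn.continuousAt ((isOpen_halfPlane 0).mem_nhds h0)).tendsto.comp hlim)
    exact Or.inr ⟨t₀, ⟨⟨⟨h0, ht₀.1.2⟩, ht₀.2⟩, fun hR => hz.2 ⟨t₀, hR, hzt.symm⟩⟩, hzt.symm⟩

theorem image_subset_closedBall_of_image_outerEdges_subset (h : IsLogBottcher c ψ)
    (hx : 0 < x₁) (hx1 : x₁ ≤ 1) (hy : y₁ < y₂) {a b w : ℂ} {ε : ℝ} (hε : 0 < ε) {C : Set ℂ}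
    (ha : Tendsto (fun x : ℝ => ψ (x + y₁ * I)) (𝓝[>] 0) (𝓝 a))
    (hb : Tendsto (fun x : ℝ => ψ (x + y₂ * I)) (𝓝[>] 0) (𝓝 b)) (hCJ : C ⊆ juliaQuad c)
    (hC : IsClosed C) (hCp : IsPreconnected C) (haC : a ∈ C) (hbC : b ∈ C)
    (hCw : C ⊆ closedBall w ε) (hE : ψ '' outerEdges x₁ y₁ y₂ ⊆ closedBall w ε) :
    ψ '' (Ioo 0 x₁ ×ℂ Ioo y₁ y₂) ⊆ closedBall w ε := by
  rintro _ ⟨s, hs, rfl⟩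
  by_contra hsw
  obtain ⟨B, hB⟩ := h.exists_norm_le
  have hJK := juliaQuad_subset_filledJuliaQuad c
  obtain ⟨z, hz, hjoin⟩ := exists_joinedIn_compl_filledJuliaQuad (h.notMem_filledJuliaQuad hs.1.1)
    (max B (‖w‖ + ε))
  obtain ⟨hzB, hzw⟩ := max_lt_iff.1 hz
  have hAw : C ∪ ψ '' outerEdges x₁ y₁ y₂ ⊆ closedBall w ε := union_subset hCw hE
  have hJA : juliaQuad c ∩ (C ∪ ψ '' outerEdges x₁ y₁ y₂) = C := by
    refine subset_antisymm ?_ fun z hz => ⟨hCJ hz, Or.inl hz⟩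
    rintro _ ⟨hzJ, hzC | ⟨t, ht, rfl⟩⟩
    · exact hzC
    · exact absurd (hJK hzJ) (h.notMem_filledJuliaQuad (outerEdges_subset_halfPlane ht))
  have hzw' : z ∉ closedBall w ε := fun hm => by
    linarith [norm_le_norm_add_norm_sub' z w, mem_closedBall_iff_norm.1 hm]
  have hA := h.isClosed_union_image_outerEdges hx hy ha hb hC haC hbC
  obtain ⟨u, hu, hue⟩ := exists_continuousOn_union_exp_mul_sub_eq isClosed_frontier hA
    (hJA.symm ▸ hCp) (hjoin.mono (compl_subset_compl.2 hJK)).symm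
    (((isPathConnected_compl_closedBall hε).joinedIn _ hzw' _ hsw).mono
      (compl_subset_compl.2 hAw))
  have hbdd : ψ '' (Ioo 0 x₁ ×ℂ Ioo y₁ y₂) ⊆ closedBall 0 B := by
    rintro _ ⟨t, ht, rfl⟩
    exact mem_closedBall_zero_iff.2 (hB t ht.1.1 (ht.1.2.le.trans hx1))
  have hfr : frontier (ψ '' (Ioo 0 x₁ ×ℂ Ioo y₁ y₂)) ⊆
      juliaQuad c ∪ (C ∪ ψ '' outerEdges x₁ y₁ y₂) :=
    h.frontier_image_subset.trans (union_subset_union_right _ subset_union_right)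
  exact hzB.not_ge (mem_closedBall_zero_iff.1 (hbdd (mem_of_frontier_subset_of_exp_mul_sub_eq
    (isClosed_frontier.union hA) hu hue hfr (isBounded_closedBall.subset hbdd)
    (mem_image_of_mem ψ hs))))

theorem norm_sub_le_of_re_eq (h : IsLogBottcher c ψ) {x M : ℝ} (hx : 0 < x)
    (hM : ∀ s : ℂ, s.re = x → ‖deriv ψ s‖ ≤ M) {s s' : ℂ} (hs : s.re = x) (hs' : s'.re = x) :
    ‖ψ s' - ψ s‖ ≤ M * ‖s' - s‖ :=
  Convex.norm_image_sub_le_of_norm_hasDerivWithin_le (s := {s : ℂ | s.re = x})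
    (fun _ ht => (h.differentiableOn.differentiableAt ((isOpen_halfPlane 0).mem_nhds
      (hx.trans_eq ht.symm))).hasDerivAt.hasDerivWithinAt) hM
    ((convex_singleton x).linear_preimage Complex.reLm) hs hs'

theorem exists_image_subset_closedBall (h : IsLogBottcher c ψ)
    [LocallyConnectedSpace (juliaQuad c)] {ε : ℝ} (hε : 0 < ε) :
    ∃ x > 0, ∀ t : ℝ, ∃ w, ψ '' (Ioo 0 x ×ℂ Icc t (t + x)) ⊆ closedBall w ε := by
  obtain ⟨η, hη, hJ⟩ := exists_isPreconnected_subset_closedBall (isCompact_juliaQuad c) hε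
  obtain ⟨e, he, heε, heη⟩ : ∃ e > 0, 8 * e ≤ ε ∧ 8 * e ≤ η :=
    ⟨min ε η / 8, by positivity, by linarith [min_le_left ε η], by linarith [min_le_right ε η]⟩
  obtain ⟨ρ₀, hρ₀, hray⟩ := h.exists_tendsto_ray he
  obtain ⟨δ, hδ, hderiv⟩ := h.exists_norm_deriv_mul_re_le he
  obtain ⟨x, hx, hxρ, hxδ, hx1⟩ : ∃ x > 0, 2 * x ≤ ρ₀ ∧ x < δ ∧ x ≤ 1 := by
    have hρ := min_le_left ρ₀ (min δ 1)
    have hδ1 := le_min_iff.1 (min_le_right ρ₀ (min δ 1))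
    exact ⟨min ρ₀ (min δ 1) / 2, by positivity, by linarith, by linarith, by linarith⟩
  refine ⟨x, hx, fun t => ?_⟩
  obtain ⟨y₁, hy₁, a, haJ, ha, hae⟩ := hray (2 * x) (by linarith) hxρ (t - 2 * x)
  obtain ⟨y₂, hy₂, b, hbJ, hb, hbe⟩ := hray (2 * x) (by linarith) hxρ (t + x)
  have hy : y₁ < y₂ := by linarith [hy₁.2, hy₂.1]
  have hside : ∀ y ∈ Icc y₁ y₂, ‖ψ (x + y * I) - ψ (x + y₁ * I)‖ ≤ 5 * e := fun y hyI => by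
    have hlen : ‖(x + y * I) - (x + y₁ * I : ℂ)‖ = y - y₁ := by
      rw [add_sub_add_left_eq_sub, ← sub_mul, ← Complex.ofReal_sub, norm_mul, Complex.norm_I,
        mul_one, Complex.norm_of_nonneg (sub_nonneg.2 hyI.1)]
    calc ‖ψ (x + y * I) - ψ (x + y₁ * I)‖ ≤ e / x * (y - y₁) :=
          hlen ▸ h.norm_sub_le_of_re_eq hx (fun s hs => (le_div_iff₀ hx).2
            (hs ▸ hderiv s (hs ▸ hx) (hs ▸ hxδ))) (by simp) (by simp)
      _ ≤ e / x * (5 * x) := by gcongr; linarith [hyI.2, hy₁.1, hy₂.2]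
      _ = 5 * e := by field_simp
  obtain ⟨hab, hedges⟩ := image_outerEdges_subset_closedBall hx hy
    (fun s hs => hae s ⟨hs.1, by linarith [hs.2]⟩) (fun s hs => hbe s ⟨hs.1, by linarith [hs.2]⟩)
    hside
  obtain ⟨C, hCJ, hC, hCp, haC, hbC, hCa⟩ := hJ a haJ b hbJ (by linarith)
  refine ⟨a, (image_mono ?_).trans (h.image_subset_closedBall_of_image_outerEdges_subset hx hx1 hy
    hε ha hb hCJ hC hCp haC hbC hCa (hedges.trans (closedBall_subset_closedBall (by linarith))))⟩
  exact fun s hs => ⟨hs.1, by linarith [hs.2.1, hy₁.2], by linarith [hs.2.2, hy₂.1]⟩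

theorem exists_dist_lt (h : IsLogBottcher c ψ) [LocallyConnectedSpace (juliaQuad c)] {ε : ℝ}
    (hε : 0 < ε) : ∃ ρ > 0, ∀ s s' : ℂ, s.re ∈ Ioo 0 ρ → s'.re ∈ Ioo 0 ρ →
      |s.im - s'.im| < ρ → dist (ψ s) (ψ s') < ε := by
  obtain ⟨x, hx, hball⟩ := h.exists_image_subset_closedBall (ε := ε / 3) (by positivity)
  refine ⟨x, hx, fun s s' hs hs' him => ?_⟩
  obtain ⟨w, hw⟩ := hball (min s.im s'.im)
  have hle : ∀ y ∈ ({s.im, s'.im} : Set ℝ), y ∈ Icc (min s.im s'.im) (min s.im s'.im + x) := by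
    grind
  have hsw := mem_closedBall.1 (hw (mem_image_of_mem ψ ⟨hs, hle _ (by simp)⟩))
  have hsw' := mem_closedBall.1 (hw (mem_image_of_mem ψ ⟨hs', hle _ (by simp)⟩))
  linarith [dist_triangle_right (ψ s) (ψ s') w]

end IsLogBottcher

/-! ### The snail lemma -/

theorem mapClusterPt_one_pow_of_norm_eq_one {l : ℂ} (hl : ‖l‖ = 1) :
    MapClusterPt 1 atTop fun j : ℕ => l ^ j := by
  let w : Circle := ⟨l, mem_sphere_zero_iff_norm.2 hl⟩
  exact (mapClusterPt_one_atTop_pow w).continuousAt_comp (f := ((↑) : Circle → ℂ)) (by fun_prop)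

theorem exists_eventually_exp_mul_eq_iterate {Φ : ℂ → ℂ} {l : ℂ} (hΦ0 : Φ 0 = 0)
    (hΦ : HasDerivAt Φ l 0) (hl : ‖l‖ = 1) {η : ℝ} (hη : 0 < η) :
    ∃ j > 0, ∀ᶠ z in 𝓝[≠] 0, ∃ τ : ℂ, ‖τ‖ < η ∧ exp τ * z = Φ^[j] z := by
  have hlog : ∀ᶠ w : ℂ in 𝓝 1, w ≠ 0 ∧ ‖Complex.log w‖ < η := by
    refine (isOpen_ne.eventually_mem one_ne_zero).and ?_
    have := (continuousAt_clog Complex.one_mem_slitPlane).norm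
    exact this.eventually_lt continuousAt_const (by simpa using hη)
  obtain ⟨j, hj, hjl⟩ := ((mapClusterPt_one_pow_of_norm_eq_one hl).frequently
    hlog.eventually_nhds).and_eventually (eventually_gt_atTop 0) |>.exists
  refine ⟨j, hjl, ?_⟩
  have hslope := (hΦ.iterate 0 hΦ0 j).tendsto_slope_zero
  simp only [zero_add, Function.iterate_fixed hΦ0, sub_zero, smul_eq_mul] at hslope
  filter_upwards [hslope.eventually hj, self_mem_nhdsWithin] with z hz hz0
  refine ⟨_, hz.2, ?_⟩
  rw [Complex.exp_log hz.1, mul_right_comm, inv_mul_cancel₀ hz0, one_mul]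

theorem exists_eventually_exp_mul_eq {φ Φ : ℂ → ℂ} {l : ℂ} {N : ℝ} (hN : 2 ≤ N)
    (h0 : ∀ s ∈ halfPlane 0, φ s ≠ 0) (hΦ0 : Φ 0 = 0) (hΦ : HasDerivAt Φ l 0) (hl : ‖l‖ = 1)
    (hfe : ∀ s ∈ halfPlane 0, φ (N * s) = Φ (φ s))
    (hlim : Tendsto φ (𝓝[halfPlane 0] 0) (𝓝 0)) {η : ℝ} (hη : 0 < η) :
    ∃ M : ℝ, 2 ≤ M ∧ ∀ᶠ s in 𝓝[halfPlane 0] 0, ∃ τ : ℂ, ‖τ‖ < η ∧ exp τ * φ s = φ (M * s) := by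
  obtain ⟨j, hj, hτ⟩ := exists_eventually_exp_mul_eq_iterate hΦ0 hΦ hl hη
  have hiter : ∀ i : ℕ, ∀ s ∈ halfPlane 0, φ ((N ^ i : ℝ) * s) = Φ^[i] (φ s) := by
    intro i s hs
    induction i with
    | zero => simp
    | succ i ih =>
      have hi : ((N ^ i : ℝ) * s : ℂ) ∈ halfPlane 0 := by
        rw [mem_halfPlane, Complex.re_ofReal_mul]
        exact mul_pos (pow_pos (by linarith) i) hs
      rw [Function.iterate_succ_apply', ← ih, ← hfe _ hi, ← mul_assoc, ← Complex.ofReal_mul,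
        ← pow_succ']
  refine ⟨N ^ j, hN.trans (le_self_pow₀ (by linarith) hj.ne'), ?_⟩
  have hφ : Tendsto φ (𝓝[halfPlane 0] 0) (𝓝[≠] 0) :=
    tendsto_nhdsWithin_iff.2 ⟨hlim, eventually_of_mem self_mem_nhdsWithin h0⟩
  filter_upwards [hφ.eventually hτ, self_mem_nhdsWithin] with s hs hs0
  rwa [hiter j s hs0]

/-- If `φ (M * s) = exp τ * φ s` with `τ` small, a large derivative of `u = log φ` would, by
Bloch's theorem, make `φ` take the value `φ (M * s)` near `s` as well. -/
theorem eventually_mul_norm_deriv_le {φ u : ℂ → ℂ} {M η : ℝ} (hM : 2 ≤ M)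
    (hu : DifferentiableOn ℂ u (halfPlane 0)) (hue : ∀ s ∈ halfPlane 0, exp (u s) = φ s)
    (hinj : ∀ s ∈ halfPlane 0, ∀ s' ∈ halfPlane 0, φ s = φ s' → s.re = s'.re)
    (hτ : ∀ᶠ s in 𝓝[halfPlane 0] 0, ∃ τ : ℂ, ‖τ‖ < η ∧ exp τ * φ s = φ (M * s)) :
    ∀ᶠ x : ℝ in 𝓝[>] 0, x * ‖deriv u x‖ ≤ 512 * η := by
  obtain ⟨ρ, hρ, hτρ⟩ := (nhdsWithin_basis_ball.eventually_iff).1 hτ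
  filter_upwards [Ioo_mem_nhdsGT (half_pos hρ)] with x hx
  obtain ⟨hx0, hxρ⟩ := hx
  by_contra! hlarge
  have hball : ∀ s ∈ ball (x : ℂ) (x / 4), s.re ∈ Ioo (3 / 4 * x) (5 / 4 * x) := fun s hs => by
    have := abs_lt.1 ((Complex.abs_re_le_norm (s - x)).trans_lt (mem_ball_iff_norm.1 hs))
    rw [Complex.sub_re, Complex.ofReal_re] at this
    constructor <;> linarith
  have hpos : ball (x : ℂ) (x / 4) ⊆ halfPlane 0 := fun s hs => by
    rw [mem_halfPlane]
    linarith [(hball s hs).1]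
  obtain ⟨s, hs, hbloch⟩ := exists_ball_subset_image_ball (by linarith) (hu.mono hpos)
  have hsρ : s ∈ ball 0 ρ := by
    have := mem_ball_iff_norm.1 hs
    rw [mem_ball_zero_iff]
    linarith [norm_le_norm_add_norm_sub' s x, Complex.norm_of_nonneg hx0.le]
  obtain ⟨τ, hτη, hτs⟩ := hτρ ⟨hsρ, hpos hs⟩
  obtain ⟨s', hs', hus'⟩ := hbloch (show u s + τ ∈ _ by
    rw [mem_ball_iff_norm, add_sub_cancel_left]
    linarith)
  have hMs : (M * s : ℂ).re = M * s.re := Complex.re_ofReal_mul M s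
  have hre := hinj s' (hpos hs') (M * s) (by
    rw [mem_halfPlane, hMs]
    exact mul_pos (by linarith) (hpos hs)) (by
    rw [← hue s' (hpos hs'), hus', Complex.exp_add, hue s (hpos hs), mul_comm, hτs])
  nlinarith [(hball s hs).1, (hball s' hs').2]

theorem tendsto_sub_zero_of_tendsto_mul_norm_deriv {E : Type*} [NormedAddCommGroup E]
    [NormedSpace ℝ E] {f f' : ℝ → E} {N : ℝ} (hN : 1 ≤ N)
    (hf : ∀ x > 0, HasDerivAt f (f' x) x)
    (hf' : ∀ η > 0, ∀ᶠ x in 𝓝[>] 0, x * ‖f' x‖ ≤ η) :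
    Tendsto (fun x => f (N * x) - f x) (𝓝[>] 0) (𝓝 0) := by
  refine NormedAddGroup.tendsto_nhds_zero.2 fun ε hε => ?_
  obtain ⟨ρ, hρ, hsmall⟩ := mem_nhdsGT_iff_exists_Ioo_subset.1 (hf' (ε / N) (by positivity))
  filter_upwards [Ioo_mem_nhdsGT (div_pos hρ (zero_lt_one.trans_le hN))] with x hx
  obtain ⟨hx0, hxρ⟩ := hx
  rw [lt_div_iff₀' (by linarith)] at hxρ
  have hbound : ∀ t ∈ Icc x (N * x), ‖f' t‖ ≤ ε / N / x := fun t ht => by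
    have ht0 : 0 < t := hx0.trans_le ht.1
    have hts : t * ‖f' t‖ ≤ ε / N := hsmall ⟨ht0, ht.2.trans_lt hxρ⟩
    rw [le_div_iff₀' hx0]
    exact (mul_le_mul_of_nonneg_right ht.1 (norm_nonneg _)).trans hts
  have hxN : x ≤ N * x := le_mul_of_one_le_left hx0.le hN
  calc ‖f (N * x) - f x‖ ≤ ε / N / x * ‖N * x - x‖ :=
        (convex_Icc x (N * x)).norm_image_sub_le_of_norm_hasDerivWithin_le
          (fun t ht => (hf t (hx0.trans_le ht.1)).hasDerivWithinAt) hbound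
          ⟨le_rfl, hxN⟩ ⟨hxN, le_rfl⟩
    _ = ε * (1 - 1 / N) := by
        rw [Real.norm_of_nonneg (sub_nonneg.2 hxN)]
        field_simp
    _ < ε := mul_lt_of_lt_one_right hε (sub_lt_self 1 (by positivity))

theorem eq_one_of_semiconj_of_norm_eq_one {φ Φ : ℂ → ℂ} {l : ℂ} {N : ℝ} (hN : 2 ≤ N)
    (hd : DifferentiableOn ℂ φ (halfPlane 0)) (h0 : ∀ s ∈ halfPlane 0, φ s ≠ 0) (hΦ0 : Φ 0 = 0)
    (hΦ : HasDerivAt Φ l 0) (hl : ‖l‖ = 1) (hfe : ∀ s ∈ halfPlane 0, φ (N * s) = Φ (φ s))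
    (hinj : ∀ s ∈ halfPlane 0, ∀ s' ∈ halfPlane 0, φ s = φ s' → s.re = s'.re)
    (hlim : Tendsto φ (𝓝[halfPlane 0] 0) (𝓝 0)) : l = 1 := by
  obtain ⟨u, hu, hue⟩ := exists_differentiableOn_exp_eq
    (isSimplyConnected_of_convex (convex_halfPlane 0) (halfPlane_nonempty 0)) (isOpen_halfPlane 0)
    hd h0
  have hmem : ∀ x : ℝ, 0 < x → (x : ℂ) ∈ halfPlane 0 := fun x hx => by simpa using hx
  have hsmall : ∀ η > 0, ∀ᶠ x : ℝ in 𝓝[>] 0, x * ‖deriv u x‖ ≤ η := fun η hη => by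
    obtain ⟨M, hM, hτ⟩ := exists_eventually_exp_mul_eq hN h0 hΦ0 hΦ hl hfe hlim
      (η := η / 512) (by positivity)
    simpa [mul_div_cancel₀] using eventually_mul_norm_deriv_le hM hu hue hinj hτ
  have hsub := tendsto_sub_zero_of_tendsto_mul_norm_deriv (f := fun x : ℝ => u x)
    (by linarith : 1 ≤ N) (fun x hx => (hu.differentiableAt ((isOpen_halfPlane 0).mem_nhds
      (hmem x hx))).hasDerivAt.comp_ofReal) hsmall
  have hreal : Tendsto (fun x : ℝ => φ x) (𝓝[>] 0) (𝓝[≠] 0) := by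
    refine tendsto_nhdsWithin_iff.2 ⟨hlim.comp (tendsto_nhdsWithin_iff.2 ⟨?_, ?_⟩), ?_⟩
    · exact (Complex.continuous_ofReal.tendsto' 0 0 Complex.ofReal_zero).mono_left
        nhdsWithin_le_nhds
    · exact eventually_of_mem self_mem_nhdsWithin hmem
    · exact eventually_of_mem self_mem_nhdsWithin fun x hx => h0 x (hmem x hx)
  have hslope := hΦ.tendsto_slope_zero.comp hreal
  refine tendsto_nhds_unique_of_eventuallyEq hslope (by
    simpa using (Complex.continuous_exp.tendsto 0).comp hsub) ?_
  filter_upwards [self_mem_nhdsWithin] with x hx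
  have hNx : (N * x : ℂ) ∈ halfPlane 0 := by
    rw [← Complex.ofReal_mul]
    exact hmem _ (mul_pos (by linarith) hx)
  simp [Complex.exp_sub, hue _ (hmem x hx), hue _ hNx, hfe _ (hmem x hx), hΦ0, div_eq_inv_mul]

/-! ### Expanding maps and periodic rays -/

theorem finite_of_dist_le_mul_dist_image {α : Type*} [MetricSpace α] {X : Set α}
    (hX : TotallyBounded X) {f : α → α} (hf : MapsTo f X X) {δ k : ℝ} (hδ : 0 < δ) (hk0 : 0 ≤ k)
    (hk : k < 1)
    (h : ∀ x ∈ X, ∀ y ∈ X, dist (f x) (f y) < δ → dist x y ≤ k * dist (f x) (f y)) :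
    X.Finite := by
  classical
  have hiter : ∀ i : ℕ, ∀ x ∈ X, ∀ y ∈ X, dist (f^[i] x) (f^[i] y) < δ →
      dist x y ≤ k ^ i * dist (f^[i] x) (f^[i] y) := by
    intro i
    induction i with
    | zero => simp
    | succ i ih =>
      intro x hx y hy hi
      rw [Function.iterate_succ_apply', Function.iterate_succ_apply'] at hi ⊢
      have h1 := h _ (hf.iterate i hx) _ (hf.iterate i hy) hi
      have h2 := ih x hx y hy (h1.trans_lt ((mul_le_of_le_one_left dist_nonneg hk.le).trans_lt hi))
      rw [pow_succ, mul_assoc]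
      exact h2.trans (mul_le_mul_of_nonneg_left h1 (pow_nonneg hk0 i))
  by_contra hinf
  obtain ⟨t, ht, hXt⟩ := totallyBounded_iff.1 hX (δ / 2) (half_pos hδ)
  lift t to Finset α using ht
  obtain ⟨s, hsX, hs⟩ := Set.Infinite.exists_subset_card_eq hinf (t.card + 1)
  have hsmall : ∀ᶠ i : ℕ in atTop, ∀ x ∈ s, ∀ y ∈ s, x ≠ y → k ^ i * δ < dist x y := by
    simp only [← Finset.mem_coe, eventually_all_finite s.finite_toSet]
    intro x _ y _
    refine eventually_imp_distrib_left.2 fun hxy => ?_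
    have hlim := (tendsto_pow_atTop_nhds_zero_of_lt_one hk0 hk).mul_const δ
    rw [zero_mul] at hlim
    exact hlim.eventually_lt_const (dist_pos.2 hxy)
  obtain ⟨i, hi⟩ := hsmall.exists
  have hcenter : ∀ x ∈ s, ∃ y ∈ t, dist (f^[i] x) y < δ / 2 := fun x hx => by
    simpa using hXt (hf.iterate i (hsX hx))
  choose! g hgt hg using hcenter
  obtain ⟨x, hx, y, hy, hxy, hgxy⟩ :=
    Finset.exists_ne_map_eq_of_card_lt_of_maps_to (by omega) hgt
  have hdist : dist (f^[i] x) (f^[i] y) < δ := by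
    linarith [dist_triangle_right (f^[i] x) (f^[i] y) (g x), hg x hx, hgxy ▸ hg y hy]
  have := hiter i x (hsX hx) y (hsX hy) hdist
  nlinarith [hi x hx y hy hxy, pow_nonneg hk0 i]

theorem mem_periodicPts_of_dist_le_mul_dist_image {α : Type*} [MetricSpace α] {X : Set α}
    (hX : TotallyBounded X) {f : α → α} (hf : MapsTo f X X) {δ k : ℝ} (hδ : 0 < δ) (hk0 : 0 ≤ k)
    (hk : k < 1)
    (h : ∀ x ∈ X, ∀ y ∈ X, dist (f x) (f y) < δ → dist x y ≤ k * dist (f x) (f y))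
    {x : α} (hx : x ∈ X) : x ∈ Function.periodicPts f := by
  have := (finite_of_dist_le_mul_dist_image hX hf hδ hk0 hk h).to_subtype
  have hinj : Function.Injective (hf.restrict f X X) := fun y z hyz => by
    have hfyz : f y = f z := congrArg Subtype.val hyz
    have := h y y.2 z z.2 (by rwa [hfyz, dist_self])
    rw [hfyz, dist_self, mul_zero] at this
    exact Subtype.ext (dist_le_zero.1 this)
  obtain ⟨q, hq, hper⟩ := hinj.mem_periodicPts ⟨x, hx⟩
  refine ⟨q, hq, ?_⟩
  have := congrArg Subtype.val hper.eq
  rwa [MapsTo.iterate_restrict] at this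

/-- The external ray of argument `θ` lands at `p`: as `ψ` is a Böttcher coordinate in logarithmic
form, `θ * I` represents that argument on the boundary of the half-plane. The approach to `θ * I`
is unrestricted rather than horizontal. -/
def LandsAt (ψ : ℂ → ℂ) (p : ℂ) (θ : ℝ) : Prop :=
  Tendsto ψ (𝓝[halfPlane 0] (θ * I)) (𝓝 p)

instance neBot_nhdsWithin_halfPlane (θ : ℝ) : (𝓝[halfPlane 0] (θ * I : ℂ)).NeBot := by
  rw [← mem_closure_iff_nhdsWithin_neBot, halfPlane, Complex.closure_setOfPred_lt_re]
  simp

theorem eventually_re_mem_Ioo_and_abs_sub_im_lt {ρ θ y : ℝ} (hρ : 0 < ρ) (hy : |y - θ| < ρ) :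
    ∀ᶠ s in 𝓝[halfPlane 0] (θ * I : ℂ), s.re ∈ Ioo 0 ρ ∧ |y - s.im| < ρ := by
  have hre : ∀ᶠ s in 𝓝 (θ * I : ℂ), s.re < ρ :=
    (Complex.continuous_re.tendsto _).eventually_lt_const (by simpa using hρ)
  have him : ∀ᶠ s in 𝓝 (θ * I : ℂ), |y - s.im| < ρ :=
    (continuous_const.sub Complex.continuous_im).abs.tendsto _ |>.eventually_lt_const
      (by simpa using hy)
  filter_upwards [self_mem_nhdsWithin, nhdsWithin_le_nhds hre, nhdsWithin_le_nhds him]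
    with s h0 hs hsy using ⟨⟨h0, hs⟩, hsy⟩

namespace IsLogBottcher

variable {c p : ℂ} {ψ : ℂ → ℂ} {θ θ' : ℝ} {n : ℕ}

theorem cauchy_map (h : IsLogBottcher c ψ) [LocallyConnectedSpace (juliaQuad c)] (θ : ℝ) :
    Cauchy (map ψ (𝓝[halfPlane 0] (θ * I))) := by
  refine Metric.cauchy_iff.2 ⟨inferInstance, fun ε hε => ?_⟩
  obtain ⟨ρ, hρ, hψ⟩ := h.exists_dist_lt hε
  refine ⟨_, image_mem_map (eventually_re_mem_Ioo_and_abs_sub_im_lt (y := θ) (half_pos hρ)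
    (by simpa using half_pos hρ)), ?_⟩
  rintro _ ⟨s, ⟨hs, hsθ⟩, rfl⟩ _ ⟨s', ⟨hs', hsθ'⟩, rfl⟩
  refine hψ s s' ⟨hs.1, by linarith [hs.2]⟩ ⟨hs'.1, by linarith [hs'.2]⟩ ?_
  rw [abs_sub_comm] at hsθ
  linarith [abs_sub_le s.im θ s'.im]

theorem exists_eq_mem_Ico (h : IsLogBottcher c ψ) {z : ℂ} (hz : z ∉ filledJuliaQuad c) :
    ∃ s : ℂ, 0 < s.re ∧ s.im ∈ Ico 0 (2 * π) ∧ ψ s = z := by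
  obtain ⟨s, hs, rfl⟩ := h.exists_eq hz
  obtain ⟨m, hm, -⟩ := existsUnique_add_zsmul_mem_Ico Real.two_pi_pos s.im 0
  refine ⟨s + m * (2 * π * I), by simpa using hs, ?_, h.periodic m s⟩
  simpa using hm

theorem exists_mapClusterPt (h : IsLogBottcher c ψ) (hp : p ∈ juliaQuad c) :
    ∃ θ : ℝ, MapClusterPt p (𝓝[halfPlane 0] (θ * I)) ψ := by
  obtain ⟨v, hvK, hv⟩ := mem_closure_iff_seq_limit.1 (frontier_eq_closure_inter_closure.subset hp).2
  choose s hs0 hs hψs using fun k => h.exists_eq_mem_Ico (hvK k)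
  obtain ⟨A, hA⟩ := h.exists_le_norm (‖p‖ + 1)
  have hmem : ∀ᶠ k in atTop, s k ∈ Icc 0 A ×ℂ Icc 0 (2 * π) := by
    filter_upwards [hv.norm.eventually_lt_const (lt_add_one ‖p‖)] with k hk
    refine ⟨⟨(hs0 k).le, ?_⟩, Ico_subset_Icc_self (hs k)⟩
    by_contra! hkA
    exact hk.not_ge (hψs k ▸ hA (s k) hkA)
  obtain ⟨t, ht, φ, hφ, hlim⟩ :=
    (isCompact_Icc.reProdIm isCompact_Icc).tendsto_subseq' hmem.frequently
  have hψlim : Tendsto (ψ ∘ s ∘ φ) atTop (𝓝 p) :=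
    (hv.comp hφ.tendsto_atTop).congr fun k => (hψs (φ k)).symm
  have ht0 : t.re = 0 := by
    refine ht.1.1.antisymm' (not_lt.1 fun hpos => ?_)
    have hpt := tendsto_nhds_unique hψlim
      ((h.continuousOn.continuousAt ((isOpen_halfPlane 0).mem_nhds hpos)).tendsto.comp hlim)
    exact h.notMem_filledJuliaQuad hpos (hpt ▸ juliaQuad_subset_filledJuliaQuad c hp)
  have htI : t = t.im * I := by
    simpa [ht0] using (Complex.re_add_im t).symm
  exact ⟨t.im, MapClusterPt.of_comp (tendsto_nhdsWithin_iff.2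
    ⟨htI ▸ hlim, Eventually.of_forall fun k => hs0 (φ k)⟩) hψlim.mapClusterPt⟩

theorem exists_landsAt (h : IsLogBottcher c ψ) [LocallyConnectedSpace (juliaQuad c)]
    (hp : p ∈ juliaQuad c) : ∃ θ, LandsAt ψ p θ :=
  (h.exists_mapClusterPt hp).imp fun θ hθ => le_nhds_of_cauchy_adhp (h.cauchy_map θ) hθ

theorem exists_dist_le_of_landsAt (h : IsLogBottcher c ψ) [LocallyConnectedSpace (juliaQuad c)]
    {ε : ℝ} (hε : 0 < ε) : ∃ ρ > 0, ∀ p θ, LandsAt ψ p θ →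
      ∀ s : ℂ, s.re ∈ Ioo 0 ρ → |s.im - θ| < ρ → dist (ψ s) p ≤ ε := by
  obtain ⟨ρ, hρ, hψ⟩ := h.exists_dist_lt hε
  refine ⟨ρ, hρ, fun p θ hθ s hs hsθ => le_of_tendsto (tendsto_const_nhds.dist hθ) ?_⟩
  filter_upwards [eventually_re_mem_Ioo_and_abs_sub_im_lt hρ hsθ] with w hw
  exact (hψ s w hs hw.1 hw.2).le

theorem landsAt_two_pow_mul (h : IsLogBottcher c ψ) (hper : (quadMap c)^[n] p = p)
    (hθ : LandsAt ψ p θ) : LandsAt ψ p (2 ^ n * θ) := by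
  have hdiv : Tendsto (fun s : ℂ => s / 2 ^ n) (𝓝[halfPlane 0] ((2 ^ n * θ : ℝ) * I))
      (𝓝[halfPlane 0] (θ * I)) := by
    refine tendsto_nhdsWithin_iff.2 ⟨(Continuous.tendsto' (by fun_prop) _ _ ?_).mono_left
      nhdsWithin_le_nhds, ?_⟩
    · push_cast
      field_simp
    · filter_upwards [self_mem_nhdsWithin] with s hs
      have hre := two_pow_mul_re n (s / 2 ^ n)
      rw [mul_div_cancel₀ s (by simp)] at hre
      rw [mem_halfPlane, hre] at hs
      exact pos_of_mul_pos_right hs (by positivity)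
  have hF : Tendsto (quadMap c)^[n] (𝓝 p) (𝓝 p) :=
    ((continuous_quadMap c).iterate n).tendsto' p p hper
  refine (hF.comp (hθ.comp hdiv)).congr' ?_
  filter_upwards [hdiv.eventually self_mem_nhdsWithin] with s hs
  rw [Function.comp_apply, Function.comp_apply, h.iterate_quadMap_apply n hs,
    mul_div_cancel₀ s (by simp)]

/-- The idea is that `(quadMap c)^[n]` is injective near `p`. -/
theorem exists_int_of_two_pow_mul_sub_eq (h : IsLogBottcher c ψ)
    [LocallyConnectedSpace (juliaQuad c)] (hd : deriv (quadMap c)^[n] p ≠ 0) :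
    ∃ ρ > 0, ∀ θ θ' y : ℝ, LandsAt ψ p θ → LandsAt ψ p θ' → |y - θ'| < ρ →
      ∀ m : ℤ, 2 ^ n * (θ - y) = m * (2 * π) → ∃ k : ℤ, θ = y + k * (2 * π) := by
  have hstrict := (((differentiable_quadMap c).iterate n).analyticAt p).hasStrictDerivAt
  obtain ⟨r, hr, hinv⟩ := Metric.eventually_nhds_iff.1 (hstrict.eventually_left_inverse hd)
  obtain ⟨ρ, hρ, hψ⟩ := h.exists_dist_le_of_landsAt (half_pos hr)
  refine ⟨ρ, hρ, fun θ θ' y hθ hθ' hy m hm => ?_⟩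
  have hnear : ∀ x x' : ℝ, LandsAt ψ p x' → |x - x'| < ρ → dist (ψ ⟨ρ / 2, x⟩) p < r :=
    fun x x' hx' hxx' => (hψ p x' hx' ⟨ρ / 2, x⟩ ⟨half_pos hρ, half_lt_self hρ⟩ hxx').trans_lt
      (half_lt_self hr)
  have hpt : (2 ^ n * ⟨ρ / 2, θ⟩ : ℂ) = 2 ^ n * ⟨ρ / 2, y⟩ + m * (2 * π * I) := by
    have hmC : (2 ^ n * (θ - y) : ℂ) = m * (2 * π) := mod_cast congrArg ((↑) : ℝ → ℂ) hm
    simp only [Complex.mk_eq_add_mul_I]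
    linear_combination I * hmC
  have hF : (quadMap c)^[n] (ψ ⟨ρ / 2, θ⟩) = (quadMap c)^[n] (ψ ⟨ρ / 2, y⟩) := by
    rw [h.iterate_quadMap_apply n (half_pos hρ), h.iterate_quadMap_apply n (half_pos hρ), hpt,
      h.periodic m]
  have heq := hinv (hnear θ θ hθ (by simpa using hρ))
  rw [hF, hinv (hnear y θ' hθ' hy)] at heq
  obtain ⟨k, hk⟩ := h.exists_int_of_eq _ _ (half_pos hρ) (half_pos hρ) heq.symm
  exact ⟨k, by simpa using congrArg Complex.im hk⟩

theorem exists_two_pow_mul_norm_le (h : IsLogBottcher c ψ) [LocallyConnectedSpace (juliaQuad c)]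
    (hd : deriv (quadMap c)^[n] p ≠ 0) :
    ∃ δ > 0, ∀ θ θ' : ℝ, LandsAt ψ p θ → LandsAt ψ p θ' →
      ‖((2 ^ n * (θ - θ') : ℝ) : AddCircle (2 * π))‖ < δ →
      2 ^ n * ‖((θ - θ' : ℝ) : AddCircle (2 * π))‖ ≤
        ‖((2 ^ n * (θ - θ') : ℝ) : AddCircle (2 * π))‖ := by
  obtain ⟨ρ, hρ, hcongr⟩ := h.exists_int_of_two_pow_mul_sub_eq hd
  refine ⟨ρ, hρ, fun θ θ' hθ hθ' hδ => ?_⟩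
  rw [AddCircle.norm_eq (x := 2 ^ n * (θ - θ'))] at hδ ⊢
  set m := round ((2 * π)⁻¹ * (2 ^ n * (θ - θ')))
  obtain ⟨y, hy⟩ : ∃ y : ℝ, 2 ^ n * (θ - y) = m * (2 * π) :=
    ⟨θ - m * (2 * π) / 2 ^ n, by field_simp; ring⟩
  have hyθ : 2 ^ n * (θ - θ') - m * (2 * π) = 2 ^ n * (y - θ') := by linear_combination hy
  rw [hyθ, abs_mul, abs_of_pos (by positivity)] at hδ ⊢
  have hyρ : |y - θ'| < ρ :=
    (le_mul_of_one_le_left (abs_nonneg _) (one_le_pow₀ one_le_two)).trans_lt hδ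
  obtain ⟨k, rfl⟩ := hcongr θ θ' y hθ hθ' hyρ m hy
  have hcoe : ((y + k * (2 * π) - θ' : ℝ) : AddCircle (2 * π)) = ((y - θ' : ℝ)) := by
    rw [add_sub_right_comm, ← zsmul_eq_mul, AddCircle.coe_add, AddCircle.coe_zsmul,
      AddCircle.coe_period, smul_zero, add_zero]
  rw [hcoe]
  exact mul_le_mul_of_nonneg_left QuotientAddGroup.norm_mk_le_norm (by positivity)

theorem exists_two_pow_mul_eq_add_of_landsAt (h : IsLogBottcher c ψ)
    [LocallyConnectedSpace (juliaQuad c)] (hn : 0 < n) (hper : (quadMap c)^[n] p = p)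
    (hd : deriv (quadMap c)^[n] p ≠ 0) (hθ : LandsAt ψ p θ) :
    ∃ q > 0, ∃ m : ℤ, 2 ^ (n * q) * θ = θ + m * (2 * π) := by
  have : Fact (0 < 2 * π) := ⟨Real.two_pi_pos⟩
  obtain ⟨δ, hδ, hexp⟩ := h.exists_two_pow_mul_norm_le hd
  have hcoe : ∀ x : ℝ, (2 ^ n : ℕ) • (x : AddCircle (2 * π)) = ((2 ^ n * x : ℝ)) := fun x => by
    rw [← AddCircle.coe_nsmul, nsmul_eq_mul, Nat.cast_pow, Nat.cast_two]
  obtain ⟨q, hq, hqθ⟩ := mem_periodicPts_of_dist_le_mul_dist_image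
    (X := ((↑) : ℝ → AddCircle (2 * π)) '' {θ | LandsAt ψ p θ}) (f := fun x => (2 ^ n : ℕ) • x)
    (isCompact_univ.totallyBounded.subset (subset_univ _)) (k := (2 ^ n)⁻¹)
    (by
      rintro _ ⟨x, hx, rfl⟩
      exact ⟨_, h.landsAt_two_pow_mul hper hx, (hcoe x).symm⟩)
    hδ (by positivity) (inv_lt_one_of_one_lt₀ (one_lt_pow₀ one_lt_two hn.ne'))
    (by
      rintro _ ⟨x, hx, rfl⟩ _ ⟨y, hy, rfl⟩ hxy
      simp only [hcoe, dist_eq_norm, ← AddCircle.coe_sub, ← mul_sub] at hxy ⊢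
      exact (le_inv_mul_iff₀ (by positivity)).2 (hexp x y hx hy hxy))
    ⟨θ, hθ, rfl⟩
  rw [Function.IsPeriodicPt, smul_iterate, Function.IsFixedPt, ← pow_mul, ← AddCircle.coe_nsmul,
    ← sub_eq_zero, ← AddCircle.coe_sub, AddCircle.coe_eq_zero_iff] at hqθ
  obtain ⟨m, hm⟩ := hqθ
  refine ⟨q, hq, m, ?_⟩
  simp only [zsmul_eq_mul, nsmul_eq_mul, Nat.cast_pow, Nat.cast_two] at hm
  linear_combination -hm

theorem deriv_eq_one_of_landsAt (h : IsLogBottcher c ψ) (hn : 0 < n)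
    (hper : (quadMap c)^[n] p = p) (hind : ‖deriv (quadMap c)^[n] p‖ = 1) (hθ : LandsAt ψ p θ)
    {m : ℤ} (hm : 2 ^ n * θ = θ + m * (2 * π)) : deriv (quadMap c)^[n] p = 1 := by
  have hshift : ∀ s ∈ halfPlane 0, s + θ * I ∈ halfPlane 0 := fun s hs => by
    simpa [mem_halfPlane] using hs
  have hF : HasDerivAt (quadMap c)^[n] (deriv (quadMap c)^[n] p) (p + 0) := by
    rw [add_zero]
    exact ((differentiable_quadMap c).iterate n p).hasDerivAt
  have hp : p ∈ filledJuliaQuad c := mem_filledJuliaQuad_of_isPeriodicPt hn hper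
  refine eq_one_of_semiconj_of_norm_eq_one (φ := fun s => ψ (s + θ * I) - p)
    (Φ := fun z => (quadMap c)^[n] (p + z) - p) (N := 2 ^ n) (le_self_pow₀ one_le_two hn.ne')
    ((h.differentiableOn.comp (by fun_prop) hshift).sub_const p) (fun s hs h0 => ?_)
    (by simp [hper]) ((hF.comp_const_add p 0).sub_const p) hind (fun s hs => ?_)
    (fun s hs s' hs' heq => ?_) ?_
  · exact h.notMem_filledJuliaQuad (hshift s hs) (sub_eq_zero.1 h0 ▸ hp)
  · have hmC : (2 ^ n * θ : ℂ) = θ + m * (2 * π) := mod_cast congrArg ((↑) : ℝ → ℂ) hm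
    have hpt : 2 ^ n * (s + θ * I) = 2 ^ n * s + θ * I + m * (2 * π * I) := by
      linear_combination I * hmC
    simp only [add_sub_cancel, sub_left_inj]
    rw [h.iterate_quadMap_apply n (hshift s hs), hpt, h.periodic m]
    push_cast
    rfl
  · simpa using h.re_eq_of_eq (hshift s hs) (hshift s' hs') (sub_left_inj.1 heq)
  · have hadd : Tendsto (fun s : ℂ => s + θ * I) (𝓝[halfPlane 0] 0) (𝓝[halfPlane 0] (θ * I)) :=
      ((continuous_add_const (θ * I : ℂ)).tendsto' _ _ (zero_add _)).inf
        (tendsto_principal_principal.2 hshift)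
    simpa using (hθ.comp hadd).sub_const p

/-- The rays landing at `p` are permuted by the iterate fixing `p`; the snail lemma applies to the
power of that iterate fixing one of them. -/
theorem exists_deriv_pow_eq_one (h : IsLogBottcher c ψ) [LocallyConnectedSpace (juliaQuad c)]
    (hn : 0 < n) (hper : (quadMap c)^[n] p = p) (hp : p ∈ juliaQuad c)
    (hind : ‖deriv (quadMap c)^[n] p‖ = 1) : ∃ q > 0, deriv (quadMap c)^[n] p ^ q = 1 := by
  obtain ⟨θ, hθ⟩ := h.exists_landsAt hp
  obtain ⟨q, hq, m, hm⟩ := h.exists_two_pow_mul_eq_add_of_landsAt hn hper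
    (norm_ne_zero_iff.1 (hind ▸ one_ne_zero)) hθ
  have hperq : (quadMap c)^[n * q] p = p := by
    rw [Function.iterate_mul]
    exact Function.iterate_fixed hper q
  have hderiv : deriv (quadMap c)^[n * q] p = deriv (quadMap c)^[n] p ^ q := by
    rw [Function.iterate_mul]
    exact (HasDerivAt.iterate p ((differentiable_quadMap c).iterate n p).hasDerivAt hper q).deriv
  refine ⟨q, hq, hderiv ▸ h.deriv_eq_one_of_landsAt (Nat.mul_pos hn hq) hperq ?_ hθ hm⟩
  rw [hderiv, norm_pow, hind, one_pow]

end IsLogBottcher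

/-- If `z ↦ z² + c` has a Cremer periodic point (irrationally indifferent and not
holomorphically linearizable), then its Julia set is not locally connected. -/
theorem julia_not_locallyConnected_of_cremer (c p : ℂ) (n : ℕ) (hn : 0 < n)
    (hper : (quadMap c)^[n] p = p)
    (hind : ‖deriv ((quadMap c)^[n]) p‖ = 1)
    (hirr : ∀ m : ℕ, 0 < m → deriv ((quadMap c)^[n]) p ^ m ≠ 1)
    (hnonlin : ¬ ∃ (r : ℝ) (h : ℂ → ℂ), 0 < r ∧
        h 0 = p ∧ DifferentiableOn ℂ h (Metric.ball (0 : ℂ) r) ∧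
        Set.InjOn h (Metric.ball (0 : ℂ) r) ∧
        ∀ w ∈ Metric.ball (0 : ℂ) r,
          ‖deriv ((quadMap c)^[n]) p * w‖ < r →
            (quadMap c)^[n] (h w) = h (deriv ((quadMap c)^[n]) p * w)) :
    ¬ LocallyConnectedSpace (juliaQuad c) := by
  intro hlc
  have hp := mem_juliaQuad_of_not_isLinearizableAt hn hper hind hnonlin
  by_cases hc : c ∈ filledJuliaQuad c
  · obtain ⟨ψ, h⟩ := exists_isLogBottcher hc
    obtain ⟨q, hq, hq1⟩ := h.exists_deriv_pow_eq_one hn hper hp hind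
    exact hirr q hq hq1
  · exact not_locallyConnectedSpace_of_notMem_filledJuliaQuad hc ⟨p, hp⟩ hlc
end

section
/- For a polynomial f of degree d ≥ 2, every attracting cycle attracts at least one critical point of f; hence f has at most d − 1 attracting cycles in ℂ. -/
open Filter

/-- The forward orbit of a periodic point, i.e. the cycle it generates. -/
def cycleOf (f : ℂ → ℂ) (p : ℂ) : Set ℂ := {w : ℂ | ∃ k : ℕ, w = f^[k] p}

/-- The collection of attracting cycles of `f`. -/
def attractingCycles (f : ℂ → ℂ) : Set (Set ℂ) :=
  {C : Set ℂ | ∃ (p : ℂ) (n : ℕ), 0 < n ∧ f^[n] p = p ∧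
    ‖deriv (f^[n]) p‖ < 1 ∧ C = cycleOf f p}

/-!
Replacing `f` by an iterate reduces the claim to an attracting fixed point `p` of a polynomial `q`
of degree at least two. Suppose that no critical point of `q` tends to `p`. Then a disc `B` around
`p` inside the basin contains no critical value of any iterate `q^[k]`, so `q^[k]` has a holomorphic
inverse branch on `B` fixing `p`. Since `q` repels near infinity, all these branches map `B` into
one bounded set, and the Schwarz lemma bounds their derivatives `(q'(p) ^ k)⁻¹` at `p` uniformly
in `k`. This is impossible as `q'(p) ^ k → 0`.

Distinct cycles are disjoint finite sets, so no orbit is attracted to two of them, and the number of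
attracting cycles is at most the number of critical points.
-/

open scoped Polynomial Topology

section IteratesInMetricSpaces

lemma tendsto_comp_iterate_iterate_iff {α β : Type*} {F : α → α} {g : α → β} {l : Filter β}
    (k : ℕ) (z : α) :
    Tendsto (fun m => g (F^[m] (F^[k] z))) atTop l ↔ Tendsto (fun m => g (F^[m] z)) atTop l := by
  simp only [← Function.iterate_add_apply]
  exact tendsto_add_atTop_iff_nat (f := fun m => g (F^[m] z)) k

lemma tendsto_iterate_of_dist_le_mul {X : Type*} [PseudoMetricSpace X] {F : X → X} {p z : X}
    {c r : ℝ} (hc₀ : 0 ≤ c) (hc₁ : c < 1)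
    (hF : ∀ x ∈ Metric.ball p r, dist (F x) p ≤ c * dist x p) (hz : z ∈ Metric.ball p r) :
    Tendsto (fun m => F^[m] z) atTop (𝓝 p) := by
  have hgeom : ∀ m, dist (F^[m] z) p ≤ c ^ m * dist z p := by
    intro m
    induction m with
    | zero => simp
    | succ m ih =>
      have hmem : F^[m] z ∈ Metric.ball p r :=
        (ih.trans (mul_le_of_le_one_left dist_nonneg (pow_le_one₀ hc₀ hc₁.le))).trans_lt hz
      calc dist (F^[m + 1] z) p
          = dist (F (F^[m] z)) p := by rw [Function.iterate_succ_apply']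
        _ ≤ c * dist (F^[m] z) p := hF _ hmem
        _ ≤ c * (c ^ m * dist z p) := by gcongr
        _ = c ^ (m + 1) * dist z p := by ring
  rw [tendsto_iff_dist_tendsto_zero]
  refine squeeze_zero (fun _ => dist_nonneg) hgeom ?_
  simpa using (tendsto_pow_atTop_nhds_zero_of_lt_one hc₀ hc₁).mul_const (dist z p)

lemma eventually_tendsto_iterate_of_hasFDerivAt {𝕜 E : Type*} [NontriviallyNormedField 𝕜]
    [NormedAddCommGroup E] [NormedSpace 𝕜 E] {F : E → E} {F' : E →L[𝕜] E} {p : E}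
    (hF : HasFDerivAt F F' p) (hp : F p = p) (hF' : ‖F'‖ < 1) :
    ∀ᶠ z in 𝓝 p, Tendsto (fun m => F^[m] z) atTop (𝓝 p) := by
  obtain ⟨c, hF'c, hc₁⟩ := exists_between hF'
  have hcontr : ∀ᶠ z in 𝓝 p, dist (F z) p ≤ c * dist z p := by
    filter_upwards [hF.isLittleO.bound (sub_pos.2 hF'c)] with z hz
    rw [hp] at hz
    calc dist (F z) p = ‖(F z - p - F' (z - p)) + F' (z - p)‖ := by
          rw [sub_add_cancel, dist_eq_norm]
      _ ≤ (c - ‖F'‖) * ‖z - p‖ + ‖F'‖ * ‖z - p‖ := norm_add_le_of_le hz (F'.le_opNorm _)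
      _ = c * dist z p := by rw [dist_eq_norm]; ring
  obtain ⟨r, hr, hball⟩ := Metric.eventually_nhds_iff_ball.1 hcontr
  filter_upwards [Metric.ball_mem_nhds p hr] with z hz
  exact tendsto_iterate_of_dist_le_mul ((norm_nonneg _).trans hF'c.le) hc₁ hball hz

lemma isBounded_iUnion_preimage_iterate {E : Type*} [SeminormedAddCommGroup E] {F : E → E}
    (hF : ∀ᶠ z in Bornology.cobounded E, ‖z‖ ≤ ‖F z‖) {S : Set E} (hS : Bornology.IsBounded S) :
    Bornology.IsBounded (⋃ k, F^[k] ⁻¹' S) := by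
  obtain ⟨R, -, hR⟩ := (Filter.hasBasis_cobounded_norm (E := E)).eventually_iff.1 hF
  obtain ⟨M, hM⟩ := hS.exists_norm_le
  have hgrow : ∀ (k : ℕ) (z : E), R ≤ ‖z‖ → ‖z‖ ≤ ‖F^[k] z‖ := by
    intro k z hz
    induction k with
    | zero => rfl
    | succ k ih =>
      rw [Function.iterate_succ_apply']
      exact ih.trans (hR (hz.trans ih))
  refine isBounded_iff_forall_norm_le.2 ⟨max R M, fun z hz => ?_⟩
  obtain ⟨k, hk⟩ := Set.mem_iUnion.1 hz
  rcases le_total R ‖z‖ with hRz | hzR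
  · exact ((hgrow k z hRz).trans (hM _ hk)).trans (le_max_right _ _)
  · exact hzR.trans (le_max_left _ _)

end IteratesInMetricSpaces

section Attraction

variable {X : Type*} [PseudoMetricSpace X] {F : X → X} {C D : Set X} {p z : X} {n : ℕ}

/-- The set `C` attracts `z` under iteration of `F`: the distance from `F^[m] z` to `C` tends to
zero. As `Metric.infDist` to the empty set is `0`, this is meaningful only for nonempty `C`. -/
def Attracts (F : X → X) (C : Set X) (z : X) : Prop :=
  Tendsto (fun m : ℕ => Metric.infDist (F^[m] z) C) atTop (𝓝 0)

lemma attracts_iterate_iff (k : ℕ) : Attracts F C (F^[k] z) ↔ Attracts F C z :=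
  tendsto_comp_iterate_iterate_iff (g := fun x => Metric.infDist x C) k z

lemma attracts_of_tendsto_iterate_iterate (hF : Continuous F) (hn : 0 < n)
    (hC : ∀ k, F^[k] p ∈ C) (h : Tendsto (fun m => (F^[n])^[m] z) atTop (𝓝 p)) :
    Attracts F C z := by
  have hresidue : ∀ j, Tendsto (fun m => Metric.infDist (F^[j] ((F^[n])^[m] z)) C) atTop (𝓝 0) := by
    intro j
    have hcont : Continuous fun x => Metric.infDist (F^[j] x) C :=
      (Metric.continuous_infDist_pt C).comp (hF.iterate j)
    simpa only [Function.comp_def, Metric.infDist_zero_of_mem (hC j)] using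
      (hcont.tendsto p).comp h
  rw [Attracts, Metric.tendsto_nhds]
  intro ε hε
  have hall : ∀ᶠ m in atTop, ∀ j ∈ Finset.range n,
      dist (Metric.infDist (F^[j] ((F^[n])^[m] z)) C) 0 < ε :=
    (eventually_all_finset _).2 fun j _ => Metric.tendsto_nhds.1 (hresidue j) ε hε
  filter_upwards [(Nat.tendsto_div_const_atTop hn.ne').eventually hall] with m hm
  have hlt := hm (m % n) (Finset.mem_range.2 (Nat.mod_lt m hn))
  rwa [← Function.iterate_mul, ← Function.iterate_add_apply, Nat.mod_add_div] at hlt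

lemma Attracts.inter_nonempty (hzC : Attracts F C z) (hzD : Attracts F D z) (hC : IsCompact C)
    (hD : IsClosed D) (hCne : C.Nonempty) (hDne : D.Nonempty) : (C ∩ D).Nonempty := by
  by_contra hempty
  obtain ⟨δ, hδ, hsep⟩ := Metric.exists_pos_forall_lt_edist hC hD
    (Set.disjoint_iff_inter_eq_empty.2 (Set.not_nonempty_iff_eq_empty.1 hempty))
  have hδ₂ : (0 : ℝ) < δ / 2 := by positivity
  obtain ⟨m, hmC, hmD⟩ := ((hzC.eventually (gt_mem_nhds hδ₂)).and
    (hzD.eventually (gt_mem_nhds hδ₂))).exists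
  obtain ⟨a, ha, hma⟩ := (Metric.infDist_lt_iff hCne).1 hmC
  obtain ⟨b, hb, hmb⟩ := (Metric.infDist_lt_iff hDne).1 hmD
  have hab : (δ : ℝ) < dist a b := by
    have := hsep a ha b hb
    rwa [edist_nndist, ENNReal.coe_lt_coe, ← NNReal.coe_lt_coe, coe_nndist] at this
  linarith [dist_triangle_left a b (F^[m] z)]

end Attraction

section Cycles

variable {F : ℂ → ℂ} {p w z : ℂ} {C D : Set ℂ}

lemma iterate_mem_cycleOf (F : ℂ → ℂ) (p : ℂ) (k : ℕ) : F^[k] p ∈ cycleOf F p := ⟨k, rfl⟩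

lemma cycleOf_nonempty (F : ℂ → ℂ) (p : ℂ) : (cycleOf F p).Nonempty :=
  ⟨p, iterate_mem_cycleOf F p 0⟩

lemma finite_cycleOf (hp : p ∈ Function.periodicPts F) : (cycleOf F p).Finite := by
  obtain ⟨n, hn, hper⟩ := hp
  refine ((Set.finite_Iio n).image (fun k => F^[k] p)).subset ?_
  rintro _ ⟨k, rfl⟩
  exact ⟨k % n, Nat.mod_lt k hn, hper.iterate_mod_apply k⟩

lemma cycleOf_eq_of_mem (hp : p ∈ Function.periodicPts F) (hw : w ∈ cycleOf F p) :
    cycleOf F w = cycleOf F p := by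
  obtain ⟨n, hn, hper⟩ := hp
  obtain ⟨k, rfl⟩ := hw
  have hreturn : F^[n * k - k] (F^[k] p) = p := by
    rw [← Function.iterate_add_apply, Nat.sub_add_cancel (Nat.le_mul_of_pos_left k hn)]
    exact hper.mul_const k
  ext u
  constructor
  · rintro ⟨j, rfl⟩
    exact ⟨j + k, (Function.iterate_add_apply F j k p).symm⟩
  · rintro ⟨j, rfl⟩
    exact ⟨j + (n * k - k), by rw [Function.iterate_add_apply, hreturn]⟩

lemma Attracts.attractingCycles_eq (hzC : Attracts F C z) (hzD : Attracts F D z)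
    (hC : C ∈ attractingCycles F) (hD : D ∈ attractingCycles F) : C = D := by
  obtain ⟨p, n, hn, hp, -, rfl⟩ := hC
  obtain ⟨q, k, hk, hq, -, rfl⟩ := hD
  have hpper : p ∈ Function.periodicPts F := ⟨n, hn, hp⟩
  have hqper : q ∈ Function.periodicPts F := ⟨k, hk, hq⟩
  obtain ⟨w, hwp, hwq⟩ := hzC.inter_nonempty hzD (finite_cycleOf hpper).isCompact
    (finite_cycleOf hqper).isClosed (cycleOf_nonempty F p) (cycleOf_nonempty F q)
  exact (cycleOf_eq_of_mem hpper hwp).symm.trans (cycleOf_eq_of_mem hqper hwq)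

end Cycles

section PolynomialIterates

lemma eval_iterate_comp_X {R : Type*} [CommSemiring R] (q : R[X]) (k : ℕ) :
    (fun z => (q.comp^[k] .X).eval z) = (fun z => q.eval z)^[k] := by
  funext z
  rw [Polynomial.iterate_comp_eval, Polynomial.eval_X]

lemma eval_derivative_iterate_comp_X {R : Type*} [CommSemiring R] (q : R[X]) (k : ℕ) (z : R) :
    (q.comp^[k] .X).derivative.eval z =
      ∏ j ∈ Finset.range k, q.derivative.eval ((fun w => q.eval w)^[j] z) := by
  induction k with
  | zero => simp
  | succ k ih =>
    rw [Function.iterate_succ_apply', Polynomial.derivative_comp, Polynomial.eval_mul,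
      Polynomial.eval_comp, ih, Finset.prod_range_succ, congrFun (eval_iterate_comp_X q k) z]

lemma eventually_norm_le_norm_eval {R : Type*} [NormedRing R] [NormMulClass R] {q : R[X]}
    (hq : 2 ≤ q.natDegree) : ∀ᶠ z in Bornology.cobounded R, ‖z‖ ≤ ‖q.eval z‖ := by
  have hdivX : 0 < q.divX.degree := by
    rw [← Polynomial.natDegree_pos_iff_degree_pos, Polynomial.natDegree_divX_eq_natDegree_tsub_one]
    omega
  filter_upwards [(q.divX.tendsto_norm_atTop hdivX tendsto_norm_cobounded_atTop).eventually_ge_atTop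
    2, eventually_cobounded_le_norm ‖q.coeff 0‖] with z hslope hz
  have heval : q.divX.eval z * z = q.eval z - q.coeff 0 := by
    conv_rhs => rw [← q.divX_mul_X_add]
    simp
  have hle : ‖q.divX.eval z‖ * ‖z‖ ≤ ‖q.eval z‖ + ‖q.coeff 0‖ := by
    rw [← norm_mul, heval]
    exact norm_sub_le _ _
  have hge : 2 * ‖z‖ ≤ ‖q.divX.eval z‖ * ‖z‖ := by gcongr
  linarith

end PolynomialIterates

section InverseBranches

lemma exists_continuousOn_rightInverse_of_isCoveringMapOn {E X : Type*} [TopologicalSpace E]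
    [TopologicalSpace X] [LocallyPathConnectedSpace X] {π : E → X} {U : Set X}
    (hπ : IsCoveringMapOn π U) (hUc : IsSimplyConnected U) (hUo : IsOpen U) {e : E}
    (he : π e ∈ U) : ∃ g : X → E, ContinuousOn g U ∧ g (π e) = e ∧ ∀ x ∈ U, π (g x) = x := by
  classical
  have := hUc.simplyConnectedSpace
  have := hUo.locallyPathConnectedSpace
  obtain ⟨G, ⟨hGe, hG⟩, -⟩ := hπ.existsUnique_continuousMap_lifts
    ⟨Subtype.val, continuous_subtype_val⟩ (a₀ := (⟨π e, he⟩ : U)) (e₀ := e) rfl Subtype.property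
  obtain ⟨g, hg⟩ : ∃ g : X → E, ∀ x : U, g x = G x :=
    ⟨fun x => if hx : x ∈ U then G ⟨x, hx⟩ else e, by simp⟩
  refine ⟨g, ?_, (hg ⟨π e, he⟩).trans hGe, fun x hx => ?_⟩
  · rw [continuousOn_iff_continuous_domRestrict]
    exact G.continuous.congr fun x => (hg x).symm
  · rw [hg ⟨x, hx⟩]
    exact congrFun hG ⟨x, hx⟩

lemma exists_hasDerivAt_rightInverse_eval {P : ℂ[X]} {U : Set ℂ} (hUc : IsSimplyConnected U)
    (hUo : IsOpen U) {w : ℂ} (hw : P.eval w ∈ U)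
    (hcrit : ∀ z, P.derivative.eval z = 0 → P.eval z ∉ U) :
    ∃ g : ℂ → ℂ, g (P.eval w) = w ∧
      ∀ u ∈ U, P.eval (g u) = u ∧ HasDerivAt g (P.derivative.eval (g u))⁻¹ u := by
  have hcov : IsCoveringMapOn P.eval U := P.isCoveringMapOn_eval.mono <| by
    rintro _ hu ⟨z, hz, rfl⟩
    exact hcrit z hz hu
  obtain ⟨g, hgc, hgw, hPg⟩ := exists_continuousOn_rightInverse_of_isCoveringMapOn hcov hUc hUo hw
  refine ⟨g, hgw, fun u hu => ⟨hPg u hu, ?_⟩⟩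
  have hne : P.derivative.eval (g u) ≠ 0 := fun h0 => hcrit _ h0 ((hPg u hu).symm ▸ hu)
  have hUu : U ∈ 𝓝 u := hUo.mem_nhds hu
  exact (P.hasDerivAt (g u)).of_local_left_inverse (hgc.continuousAt hUu) hne
    (eventually_of_mem hUu hPg)

lemma le_norm_derivative_mul_of_preimage_ball_subset {P : ℂ[X]} {w : ℂ} {r M : ℝ} (hr : 0 < r)
    (hcrit : ∀ z, P.derivative.eval z = 0 → P.eval z ∉ Metric.ball (P.eval w) r)
    (hM : (fun z => P.eval z) ⁻¹' Metric.ball (P.eval w) r ⊆ Metric.closedBall w M) :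
    r ≤ ‖P.derivative.eval w‖ * M := by
  have hcenter : P.eval w ∈ Metric.ball (P.eval w) r := Metric.mem_ball_self hr
  have := Metric.contractibleSpace_ball (x := P.eval w) hr
  obtain ⟨g, hgw, hg⟩ := exists_hasDerivAt_rightInverse_eval
    (SimplyConnectedSpace.ofContractible (Metric.ball (P.eval w) r)) Metric.isOpen_ball hcenter
    hcrit
  have hderiv : deriv g (P.eval w) = (P.derivative.eval w)⁻¹ := by
    simpa only [hgw] using (hg _ hcenter).2.deriv
  have hmaps : Set.MapsTo g (Metric.ball (P.eval w) r) (Metric.closedBall (g (P.eval w)) M) := by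
    intro u hu
    rw [hgw]
    exact hM (by rwa [Set.mem_preimage, (hg u hu).1])
  have hschwarz := Complex.norm_deriv_le_div_of_mapsTo_ball
    (fun u hu => (hg u hu).2.differentiableAt.differentiableWithinAt) hmaps hr
  have hpos : 0 < ‖P.derivative.eval w‖ := norm_pos_iff.2 fun h0 => hcrit w h0 hcenter
  rwa [hderiv, norm_inv, inv_le_iff_one_le_mul₀' hpos, ← mul_div_assoc, one_le_div hr] at hschwarz

end InverseBranches

section CriticalPoints

theorem exists_critical_tendsto_iterate {q : ℂ[X]} (hq : 2 ≤ q.natDegree) {p : ℂ}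
    (hp : q.eval p = p) (hmult : ‖q.derivative.eval p‖ < 1) :
    ∃ z, q.derivative.eval z = 0 ∧ Tendsto (fun m => (fun w => q.eval w)^[m] z) atTop (𝓝 p) := by
  by_contra! hno
  set Q : ℂ → ℂ := fun w => q.eval w with hQ
  have hbasin : ∀ᶠ z in 𝓝 p, Tendsto (fun m => Q^[m] z) atTop (𝓝 p) :=
    eventually_tendsto_iterate_of_hasFDerivAt (q.hasDerivAt p).hasFDerivAt hp (by simpa using hmult)
  obtain ⟨r, hr, hball⟩ := Metric.eventually_nhds_iff_ball.1 hbasin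
  have hfix : ∀ k, Q^[k] p = p := Function.iterate_fixed hp
  have heval : ∀ k z, (q.comp^[k] .X).eval z = Q^[k] z :=
    fun k => congrFun (eval_iterate_comp_X q k)
  have hcrit : ∀ k z, (q.comp^[k] .X).derivative.eval z = 0 → Q^[k] z ∉ Metric.ball p r := by
    intro k z hz hmem
    rw [eval_derivative_iterate_comp_X, Finset.prod_eq_zero_iff] at hz
    obtain ⟨j, -, hj⟩ := hz
    exact hno _ hj <| (tendsto_comp_iterate_iterate_iff (g := id) j z).2 <|
      (tendsto_comp_iterate_iterate_iff (g := id) k z).1 (hball _ hmem)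
  obtain ⟨M, hM⟩ := (isBounded_iUnion_preimage_iterate (eventually_norm_le_norm_eval hq)
    (Metric.isBounded_ball (x := p) (r := r))).subset_closedBall p
  have hbound : ∀ k, r ≤ ‖q.derivative.eval p‖ ^ k * M := by
    intro k
    have hderiv : (q.comp^[k] .X).derivative.eval p = q.derivative.eval p ^ k := by
      simp only [eval_derivative_iterate_comp_X, ← hQ, hfix, Finset.prod_const, Finset.card_range]
    rw [← norm_pow, ← hderiv]
    refine le_norm_derivative_mul_of_preimage_ball_subset hr (fun z hz => ?_) ?_
    · simpa only [heval, hfix] using hcrit k z hz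
    · simpa only [heval, hfix] using (Set.subset_iUnion _ k).trans hM
  have hlim : Tendsto (fun k => ‖q.derivative.eval p‖ ^ k * M) atTop (𝓝 0) := by
    simpa using (tendsto_pow_atTop_nhds_zero_of_lt_one (norm_nonneg _) hmult).mul_const M
  exact hr.not_ge (ge_of_tendsto' hlim hbound)

theorem exists_critical_attracts {f : ℂ[X]} (hf : 2 ≤ f.natDegree) {C : Set ℂ}
    (hC : C ∈ attractingCycles (fun z => f.eval z)) :
    ∃ z, f.derivative.eval z = 0 ∧ Attracts (fun w => f.eval w) C z := by
  obtain ⟨p, n, hn, hp, hmult, rfl⟩ := hC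
  have heval := eval_iterate_comp_X f n
  have hdeg : 2 ≤ (f.comp^[n] .X).natDegree := by
    rw [Polynomial.natDegree_iterate_comp, Polynomial.natDegree_X, mul_one]
    exact hf.trans (Nat.le_self_pow hn.ne' _)
  obtain ⟨c, hc, hlim⟩ := exists_critical_tendsto_iterate hdeg ((congrFun heval p).trans hp)
    (by rwa [← heval, Polynomial.deriv] at hmult)
  rw [eval_derivative_iterate_comp_X, Finset.prod_eq_zero_iff] at hc
  obtain ⟨j, -, hj⟩ := hc
  rw [heval] at hlim
  exact ⟨_, hj, (attracts_iterate_iff j).2 <| attracts_of_tendsto_iterate_iterate f.continuous hn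
    (iterate_mem_cycleOf _ p) hlim⟩

end CriticalPoints

/-- Fatou–Julia: for a polynomial of degree `d ≥ 2`, every attracting cycle attracts
a critical point; hence there are at most `d − 1` attracting cycles. -/
theorem attracting_cycle_attracts_critical_point (f : Polynomial ℂ) (d : ℕ)
    (hd : 2 ≤ d) (hdeg : f.natDegree = d) :
    (∀ C ∈ attractingCycles (fun z => f.eval z),
      ∃ z : ℂ, f.derivative.eval z = 0 ∧
        Tendsto (fun m : ℕ => Metric.infDist ((fun w => f.eval w)^[m] z) C)
          atTop (nhds 0)) ∧
    (attractingCycles (fun z => f.eval z)).Finite ∧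
    (attractingCycles (fun z => f.eval z)).ncard ≤ d - 1 := by
  have hexists := fun C hC => exists_critical_attracts (hdeg ▸ hd) (C := C) hC
  refine ⟨hexists, ?_⟩
  choose! c hcrit hattr using hexists
  have hf' : f.derivative ≠ 0 := fun h => by
    have := Polynomial.derivative_eq_zero.1 h
    omega
  have hmaps : ∀ C ∈ attractingCycles (fun z => f.eval z), c C ∈ f.derivative.rootSet ℂ :=
    fun C hC => Polynomial.mem_rootSet.2 ⟨hf', by simpa using hcrit C hC⟩
  have hinj : Set.InjOn c (attractingCycles fun z => f.eval z) := fun C hC D hD hCD =>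
    (hattr C hC).attractingCycles_eq (hCD ▸ hattr D hD) hC hD
  have hfin : (f.derivative.rootSet ℂ).Finite := f.derivative.rootSet_finite ℂ
  refine ⟨.of_injOn hmaps hinj hfin, ?_⟩
  calc (attractingCycles fun z => f.eval z).ncard
      ≤ (f.derivative.rootSet ℂ).ncard := Set.ncard_le_ncard_of_injOn c hmaps hinj hfin
    _ ≤ f.derivative.natDegree := f.derivative.ncard_rootSet_le ℂ
    _ ≤ d - 1 := hdeg ▸ f.natDegree_derivative_le
end
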